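/- For every positive integer d and every real c > 0 there is a constant C depending only on c and d such that: for every n, every degree-d polynomial threshold function f : ℝⁿ → {−1,1}, and every 0 < δ < 1, the noise sensitivity satisfies ns_δ(f) ≤ C·δ^{1/6−c}. -/

import Mathlib

open MeasureTheory ProbabilityTheory
open scoped ENNReal

/-- The uniform (Bernoulli) measure on `{-1, 1}`. -/
noncomputable def bernoulliPM : Measure ℝ :=
  ((1 : ℝ≥0∞) / 2) • Measure.dirac (1 : ℝ) + ((1 : ℝ≥0∞) / 2) • Measure.dirac (-1 : ℝ)

/-- The uniform measure on `{-1, 1}ⁿ`. -/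
noncomputable def bernoulliCube (n : ℕ) : Measure (Fin n → ℝ) :=
  Measure.pi fun _ => bernoulliPM

/-- The measure on `ℝ` that puts mass `1 - δ` at `1` and mass `δ` at `-1`
(a random sign flip with flip probability `δ`). -/
noncomputable def flipPM (δ : ℝ) : Measure ℝ :=
  ENNReal.ofReal (1 - δ) • Measure.dirac (1 : ℝ) + ENNReal.ofReal δ • Measure.dirac (-1 : ℝ)

/-- The sign function, with value `1` at `0`. -/
noncomputable def psign (r : ℝ) : ℝ := if 0 ≤ r then 1 else -1

/-- The noise sensitivity `ns_δ(f) = Pr(f(A) ≠ f(B))` where `A` is uniform on `{-1,1}ⁿ` and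
`B` is obtained from `A` by independently flipping each coordinate with probability `δ`. -/
noncomputable def noiseSensitivity (n : ℕ) (δ : ℝ) (f : (Fin n → ℝ) → ℝ) : ℝ :=
  (((bernoulliCube n).prod (Measure.pi fun _ : Fin n => flipPM δ))
    {ae | f ae.1 ≠ f fun i => ae.1 i * ae.2 i}).toReal

/-!
Let `M m` be the largest average sensitivity of a degree `d` threshold function in `m` variables.
The heart of the matter is `M m ≤ A * m ^ (5/6)`: flipping each variable with probability `δ`
amounts to flipping one of `⌊1/δ⌋` random buckets of variables, so the noise sensitivity is at most
`M ⌊1/δ⌋ / ⌊1/δ⌋`.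

To bound `M`, fix few variables at random, so that with probability bounded below every remaining
influence is small or the polynomial is nearly constant; the other outcomes are bounded by `M m`
itself and absorbed. Then split the variables into `L ^ 90` blocks. The average sensitivity is the
sum over the blocks of the mean average sensitivity of the polynomial restricted to the block. A
nearly constant restriction contributes almost nothing, by hypercontractivity. Any other contributes
at most `M (m / L ^ 90 + 1)`, and forces the value of the polynomial to be small compared with its
fluctuation on the block. When the influences are small this is rare: by the Lindeberg method, the
joint law of the value of the polynomial and of its derivative in a random direction hardly changes
when the point and the direction are rotated into each other, and on the circle so described the
polynomial is small compared with its derivative only near one of its boundedly many roots. Thus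
only `O(L ^ 74)` blocks enter the recursion, and `74/90 < 5/6`.
-/

namespace BoolCube

open Finset
open scoped BigOperators

section Probability

variable {Ω Ω' : Type*} [Fintype Ω] [Fintype Ω']

/-- The real-valued indicator of a proposition. -/
noncomputable def ind (p : Prop) : ℝ := open Classical in if p then 1 else 0

lemma ind_of {p : Prop} (h : p) : ind p = 1 := by simp [ind, h]

lemma ind_of_not {p : Prop} (h : ¬p) : ind p = 0 := by simp [ind, h]

lemma ind_nonneg (p : Prop) : 0 ≤ ind p := by
  by_cases h : p <;> simp [ind, h]

lemma ind_le_one (p : Prop) : ind p ≤ 1 := by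
  by_cases h : p <;> simp [ind, h]

lemma ind_mono {p q : Prop} (h : p → q) : ind p ≤ ind q := by
  by_cases hp : p
  · rw [ind_of hp, ind_of (h hp)]
  · rw [ind_of_not hp]; exact ind_nonneg q

lemma ind_sq (p : Prop) : ind p ^ 2 = ind p := by
  by_cases h : p <;> simp [ind, h]

/-- The probability of the event `P` under the uniform distribution on a finite type. -/
noncomputable def prob (P : Ω → Prop) : ℝ := 𝔼 w, ind (P w)

lemma prob_nonneg (P : Ω → Prop) : 0 ≤ prob P := expect_nonneg fun _ _ ↦ ind_nonneg _

lemma prob_le_one [Nonempty Ω] (P : Ω → Prop) : prob P ≤ 1 :=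
  expect_le univ_nonempty fun _ _ ↦ ind_le_one _

lemma prob_mono {P Q : Ω → Prop} (h : ∀ w, P w → Q w) : prob P ≤ prob Q :=
  expect_le_expect fun w _ ↦ ind_mono (h w)

lemma prob_or_le (P Q : Ω → Prop) : prob (fun w ↦ P w ∨ Q w) ≤ prob P + prob Q := by
  rw [prob, prob, prob, ← expect_add_distrib]
  refine expect_le_expect fun w _ ↦ ?_
  by_cases hP : P w <;> by_cases hQ : Q w <;> simp [ind, hP, hQ]

lemma prob_le_prob_add_prob_and_not (P Q : Ω → Prop) :
    prob P ≤ prob Q + prob fun w ↦ P w ∧ ¬Q w :=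
  (prob_mono fun w hw ↦ (em (Q w)).imp_right (And.intro hw)).trans (prob_or_le Q _)

lemma expect_comp_equiv (e : Ω ≃ Ω') (f : Ω' → ℝ) : 𝔼 w, f (e w) = 𝔼 w, f w :=
  Fintype.expect_equiv e _ _ fun _ ↦ rfl

lemma expect_comp_involutive {e : Ω → Ω} (he : Function.Involutive e) (f : Ω → ℝ) :
    𝔼 w, f (e w) = 𝔼 w, f w :=
  expect_comp_equiv (he.toPerm e) f

lemma expect_prod (f : Ω → Ω' → ℝ) : 𝔼 w : Ω × Ω', f w.1 w.2 = 𝔼 w, 𝔼 v, f w v := by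
  rw [← univ_product_univ, expect_product]

lemma mul_le_expect_of_prob {P : Ω → Prop} {f : Ω → ℝ} {a b : ℝ}
    (hf : ∀ w, 0 ≤ f w) (hb : 0 ≤ b) (ha : a ≤ prob P) (h : ∀ w, P w → b ≤ f w) :
    a * b ≤ 𝔼 w, f w := by
  refine (mul_le_mul_of_nonneg_right ha hb).trans ?_
  rw [prob, expect_mul]
  refine expect_le_expect fun w _ ↦ ?_
  by_cases hw : P w
  · rw [ind_of hw, one_mul]
    exact h w hw
  · rw [ind_of_not hw, zero_mul]
    exact hf w

lemma prob_le_expect_div {f : Ω → ℝ} (hf : ∀ w, 0 ≤ f w) {t : ℝ} (ht : 0 < t) :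
    prob (fun w ↦ t ≤ f w) ≤ (𝔼 w, f w) / t :=
  (le_div_iff₀ ht).2 (mul_le_expect_of_prob hf ht.le le_rfl fun _ h ↦ h)

/-- The **Paley–Zygmund inequality**, with threshold at half of a lower bound for the mean. -/
lemma one_div_le_prob_half_le [Nonempty Ω] {f : Ω → ℝ} {K m : ℝ} (hK : 0 < K) (hm : 0 < m)
    (hmf : m ≤ 𝔼 w, f w) (h2 : 𝔼 w, f w ^ 2 ≤ K * (𝔼 w, f w) ^ 2) :
    1 / (4 * K) ≤ prob fun w ↦ m / 2 ≤ f w := by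
  set E := 𝔼 w, f w
  set P := prob fun w ↦ m / 2 ≤ f w
  have hE : 0 < E := hm.trans_le hmf
  have large_part : E / 2 ≤ 𝔼 w, f w * ind (m / 2 ≤ f w) := by
    have : 𝔼 w, (f w - m / 2) ≤ 𝔼 w, f w * ind (m / 2 ≤ f w) := by
      refine expect_le_expect fun w _ ↦ ?_
      by_cases h : m / 2 ≤ f w
      · rw [ind_of h]; linarith
      · rw [ind_of_not h]; linarith
    rw [expect_sub_distrib, Fintype.expect_const] at this
    linarith
  have second_moment : (E / 2) ^ 2 ≤ K * E ^ 2 * P := by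
    have cauchy_schwarz := expect_mul_sq_le_sq_mul_sq univ f fun w ↦ ind (m / 2 ≤ f w)
    simp only [ind_sq] at cauchy_schwarz
    calc (E / 2) ^ 2 ≤ (𝔼 w, f w * ind (m / 2 ≤ f w)) ^ 2 := by gcongr
      _ ≤ (𝔼 w, f w ^ 2) * P := cauchy_schwarz
      _ ≤ K * E ^ 2 * P := by gcongr; exact prob_nonneg _
  rw [div_le_iff₀ (by positivity)]
  have : E ^ 2 * 1 ≤ E ^ 2 * (P * (4 * K)) := by linarith
  exact le_of_mul_le_mul_left this (by positivity)

lemma expect_sum_sq_le {κ : Type*} (s : Finset κ) (f : κ → Ω → ℝ) (a : κ → ℝ)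
    (ha : ∀ k, 0 ≤ a k) {K : ℝ} (hK : 0 ≤ K) (h : ∀ k, 𝔼 w, f k w ^ 2 ≤ K * a k ^ 2) :
    𝔼 w, (∑ k ∈ s, f k w) ^ 2 ≤ K * (∑ k ∈ s, a k) ^ 2 := by
  have cross (k l : κ) : 𝔼 w, f k w * f l w ≤ K * (a k * a l) := by
    refine le_of_sq_le_sq ?_ (by have := ha k; have := ha l; positivity)
    calc (𝔼 w, f k w * f l w) ^ 2 ≤ (𝔼 w, f k w ^ 2) * 𝔼 w, f l w ^ 2 :=
          expect_mul_sq_le_sq_mul_sq univ _ _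
      _ ≤ (K * a k ^ 2) * (K * a l ^ 2) :=
          mul_le_mul (h k) (h l) (expect_nonneg fun _ _ ↦ sq_nonneg _) (by positivity)
      _ = (K * (a k * a l)) ^ 2 := by ring
  simp only [sq, sum_mul_sum]
  rw [expect_sum_comm, mul_sum]
  refine sum_le_sum fun k _ ↦ ?_
  rw [expect_sum_comm, mul_sum]
  exact sum_le_sum fun l _ ↦ cross k l

lemma one_div_le_prob_half_le_and_lt [Nonempty Ω] {f g : Ω → ℝ}
    {K m t : ℝ} (hK : 0 < K) (hm : 0 < m) (hmf : m ≤ 𝔼 w, f w)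
    (hf : 𝔼 w, f w ^ 2 ≤ K * (𝔼 w, f w) ^ 2) (hg : ∀ w, 0 ≤ g w) (ht : 0 < t)
    (hgt : 8 * K * 𝔼 w, g w ≤ t) : 1 / (8 * K) ≤ prob fun w ↦ m / 2 ≤ f w ∧ g w < t := by
  have large := one_div_le_prob_half_le hK hm hmf hf
  have small : prob (fun w ↦ t ≤ g w) ≤ 1 / (8 * K) := by
    refine (prob_le_expect_div hg ht).trans ?_
    rw [div_le_div_iff₀ ht (by positivity)]
    linarith
  have split := prob_le_prob_add_prob_and_not (fun w ↦ m / 2 ≤ f w) fun w ↦ t ≤ g w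
  simp only [not_le] at split
  have half : 1 / (4 * K) = 1 / (8 * K) + 1 / (8 * K) := by field_simp; norm_num
  linarith

end Probability

/-- The sign `±1` encoded by a boolean. -/
noncomputable def sgn (b : Bool) : ℝ := if b then 1 else -1

lemma sgn_mul_self (b : Bool) : sgn b * sgn b = 1 := by cases b <;> simp [sgn]

lemma sgn_sq (b : Bool) : sgn b ^ 2 = 1 := by rw [sq, sgn_mul_self]

lemma sgn_not (b : Bool) : sgn (!b) = -sgn b := by cases b <;> simp [sgn]

lemma abs_sgn (b : Bool) : |sgn b| = 1 := by cases b <;> simp [sgn]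

/-- The vertex of `{-1, 1}ⁿ`, as a real vector, encoded by a vector of booleans. -/
noncomputable def point {ι : Type*} (w : ι → Bool) : ι → ℝ := fun i ↦ sgn (w i)

/-- The Walsh character `w ↦ ∏ i ∈ S, wᵢ`. -/
noncomputable def walsh {ι : Type*} (S : Finset ι) (w : ι → Bool) : ℝ := ∏ i ∈ S, sgn (w i)

lemma walsh_mul_self {ι : Type*} (S : Finset ι) (w : ι → Bool) : walsh S w * walsh S w = 1 := by
  simp [walsh, ← prod_mul_distrib, sgn_mul_self]

lemma walsh_empty {ι : Type*} (w : ι → Bool) : walsh ∅ w = 1 := by simp [walsh]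

/-- The value at `x` of the multilinear polynomial whose coefficient at `∏ i ∈ S, Xᵢ` is `c S`.
Throughout, multilinear polynomials are represented by their coefficient families. -/
noncomputable def mlEval {ι : Type*} [Fintype ι] (c : Finset ι → ℝ) (x : ι → ℝ) : ℝ :=
  ∑ S, c S * ∏ i ∈ S, x i

lemma mlEval_point {ι : Type*} [Fintype ι] (c : Finset ι → ℝ) (w : ι → Bool) :
    mlEval c (point w) = ∑ S, c S * walsh S w := rfl

lemma mlEval_const_mul {ι : Type*} [Fintype ι] (a : ℝ) (c : Finset ι → ℝ) (x : ι → ℝ) :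
    mlEval (fun S ↦ a * c S) x = a * mlEval c x := by
  simp only [mlEval, mul_sum, mul_assoc]

/-- The squared `L²` norm on the cube, as the sum of squares of the Fourier coefficients. -/
noncomputable def normSq {ι : Type*} [Fintype ι] (c : Finset ι → ℝ) : ℝ := ∑ S, c S ^ 2

/-- The polynomial with coefficients `c` has degree at most `d`. -/
def DegreeLE {ι : Type*} (d : ℕ) (c : Finset ι → ℝ) : Prop :=
  ∀ S : Finset ι, d < #S → c S = 0

lemma DegreeLE.mono {ι : Type*} {d e : ℕ} {c : Finset ι → ℝ} (h : DegreeLE d c) (hde : d ≤ e) :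
    DegreeLE e c := fun S hS ↦ h S (hde.trans_lt hS)

lemma normSq_const_mul {ι : Type*} [Fintype ι] (a : ℝ) (c : Finset ι → ℝ) :
    normSq (fun S ↦ a * c S) = a ^ 2 * normSq c := by
  simp only [normSq, mul_pow, mul_sum]

lemma normSq_nonneg {ι : Type*} [Fintype ι] (c : Finset ι → ℝ) : 0 ≤ normSq c :=
  sum_nonneg fun _ _ ↦ sq_nonneg _

section Flip

variable {ι : Type*} [DecidableEq ι]

/-- The vector `w` with its `i`-th coordinate negated. -/
def flipAt (i : ι) (w : ι → Bool) : ι → Bool := Function.update w i (!w i)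

lemma flipAt_involutive (i : ι) : Function.Involutive (flipAt i) := fun w ↦ by
  simp [flipAt]

lemma flipAt_self (i : ι) (w : ι → Bool) : flipAt i w i = !w i := by simp [flipAt]

lemma flipAt_of_ne {i j : ι} (h : j ≠ i) (w : ι → Bool) : flipAt i w j = w j := by
  simp [flipAt, h]

lemma walsh_flipAt_of_mem {S : Finset ι} {i : ι} (h : i ∈ S) (w : ι → Bool) :
    walsh S (flipAt i w) = -walsh S w := by
  rw [walsh, walsh, ← mul_prod_erase S _ h, ← mul_prod_erase S (fun j ↦ sgn (w j)) h,
    flipAt_self, sgn_not, neg_mul]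
  congr 2
  exact prod_congr rfl fun j hj ↦ by rw [flipAt_of_ne (ne_of_mem_erase hj)]

lemma walsh_flipAt_of_notMem {S : Finset ι} {i : ι} (h : i ∉ S) (w : ι → Bool) :
    walsh S (flipAt i w) = walsh S w :=
  prod_congr rfl fun j hj ↦ by rw [flipAt_of_ne (by rintro rfl; exact h hj)]

lemma walsh_insert {S : Finset ι} {i : ι} (h : i ∉ S) (w : ι → Bool) :
    walsh (insert i S) w = sgn (w i) * walsh S w := by
  rw [walsh, prod_insert h, walsh]

lemma walsh_mul_walsh (S T : Finset ι) : walsh S * walsh T = walsh (symmDiff S T) := by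
  funext w
  have hS : walsh S w = walsh (S \ T) w * walsh (S ∩ T) w := by
    rw [walsh, walsh, walsh, mul_comm, prod_inter_mul_prod_sdiff]
  have hT : walsh T w = walsh (T \ S) w * walsh (S ∩ T) w := by
    rw [walsh, walsh, walsh, inter_comm, mul_comm, prod_inter_mul_prod_sdiff]
  have hST : walsh (symmDiff S T) w = walsh (S \ T) w * walsh (T \ S) w := by
    rw [symmDiff_def, sup_eq_union, walsh, prod_union disjoint_sdiff_sdiff, walsh, walsh]
  rw [Pi.mul_apply, hS, hT, hST]
  linear_combination walsh (S \ T) w * walsh (T \ S) w * walsh_mul_self (S ∩ T) w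

/-- The part of the Walsh expansion of `c` supported on subsets of `U`; the induction proving
hypercontractivity adds the coordinates of `U` one at a time. -/
noncomputable def partialEval (U : Finset ι) (c : Finset ι → ℝ) (w : ι → Bool) : ℝ :=
  ∑ S ∈ U.powerset, c S * walsh S w

lemma partialEval_flipAt {U : Finset ι} {i : ι} (h : i ∉ U) (c : Finset ι → ℝ) (w : ι → Bool) :
    partialEval U c (flipAt i w) = partialEval U c w :=
  sum_congr rfl fun S hS ↦ by
    rw [walsh_flipAt_of_notMem fun hi ↦ h (mem_powerset.1 hS hi)]

lemma partialEval_insert {U : Finset ι} {i : ι} (h : i ∉ U) (c : Finset ι → ℝ) (w : ι → Bool) :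
    partialEval (insert i U) c w
      = partialEval U c w + sgn (w i) * partialEval U (fun S ↦ c (insert i S)) w := by
  rw [partialEval, sum_powerset_insert h, partialEval, partialEval, mul_sum]
  congr 1
  refine sum_congr rfl fun S hS ↦ ?_
  rw [walsh_insert fun hi ↦ h (mem_powerset.1 hS hi)]
  ring

end Flip

section LowDegree

variable {ι : Type*} {d e : ℕ}

/-- The space of functions on the cube given by a polynomial of degree at most `d`. -/
noncomputable def lowDegree (ι : Type*) (d : ℕ) : Submodule ℝ ((ι → Bool) → ℝ) :=
  Submodule.span ℝ {f | ∃ S : Finset ι, #S ≤ d ∧ f = walsh S}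

lemma walsh_mem_lowDegree {S : Finset ι} (hS : #S ≤ d) : walsh S ∈ lowDegree ι d :=
  Submodule.subset_span ⟨S, hS, rfl⟩

lemma mul_mem_lowDegree {f g : (ι → Bool) → ℝ} (hf : f ∈ lowDegree ι d)
    (hg : g ∈ lowDegree ι e) : f * g ∈ lowDegree ι (d + e) := by
  classical
  have h := Submodule.mul_mem_mul hf hg
  rw [lowDegree, lowDegree, Submodule.span_mul_span] at h
  refine Submodule.span_mono ?_ h
  rintro _ ⟨_, ⟨S, hS, rfl⟩, _, ⟨T, hT, rfl⟩, rfl⟩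
  refine ⟨symmDiff S T, ?_, walsh_mul_walsh S T⟩
  calc #(symmDiff S T) ≤ #(S ∪ T) := card_le_card symmDiff_le_sup
    _ ≤ #S + #T := card_union_le _ _
    _ ≤ d + e := by omega

lemma lowDegree_mono (h : d ≤ e) : lowDegree ι d ≤ lowDegree ι e :=
  Submodule.span_mono fun _ ⟨S, hS, hf⟩ ↦ ⟨S, hS.trans h, hf⟩

lemma const_mem_lowDegree (a : ℝ) (d : ℕ) : (fun _ ↦ a) ∈ lowDegree ι d := by
  have : (fun _ : ι → Bool ↦ a) = a • walsh (∅ : Finset ι) := by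
    funext w; simp [walsh]
  rw [this]
  exact Submodule.smul_mem _ _ (walsh_mem_lowDegree (by simp))

lemma const_mul_mem_lowDegree (a : ℝ) {f : (ι → Bool) → ℝ} (hf : f ∈ lowDegree ι d) :
    (fun w ↦ a * f w) ∈ lowDegree ι d :=
  Submodule.smul_mem _ a hf

lemma sgn_mem_lowDegree (i : ι) : (fun w ↦ sgn (w i)) ∈ lowDegree ι 1 := by
  have : (fun w : ι → Bool ↦ sgn (w i)) = walsh {i} := by funext w; simp [walsh]
  rw [this]
  exact walsh_mem_lowDegree (by simp)

lemma prod_mem_lowDegree {κ : Type*} {s : Finset κ} {f : κ → (ι → Bool) → ℝ} {e : κ → ℕ}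
    (h : ∀ k ∈ s, f k ∈ lowDegree ι (e k)) :
    (fun w ↦ ∏ k ∈ s, f k w) ∈ lowDegree ι (∑ k ∈ s, e k) := by
  classical
  induction s using Finset.induction_on with
  | empty => simpa using const_mem_lowDegree 1 0
  | insert a s ha ih =>
    simp only [prod_insert ha, sum_insert ha]
    exact mul_mem_lowDegree (h a (by simp)) (ih fun k hk ↦ h k (by simp [hk]))

lemma sum_mem_lowDegree {κ : Type*} {s : Finset κ} {f : κ → (ι → Bool) → ℝ}
    (h : ∀ k ∈ s, f k ∈ lowDegree ι d) : (fun w ↦ ∑ k ∈ s, f k w) ∈ lowDegree ι d := by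
  have : (fun w ↦ ∑ k ∈ s, f k w) = ∑ k ∈ s, f k := by funext w; simp
  rw [this]
  exact Submodule.sum_mem _ h

lemma exists_degreeLE_of_mem_lowDegree [Fintype ι] {f : (ι → Bool) → ℝ} (hf : f ∈ lowDegree ι d) :
    ∃ c : Finset ι → ℝ, DegreeLE d c ∧ ∀ w, f w = mlEval c (point w) := by
  classical
  induction hf using Submodule.span_induction with
  | mem f hf =>
    obtain ⟨S, hS, rfl⟩ := hf
    refine ⟨fun T ↦ if T = S then 1 else 0, fun T hT ↦ if_neg ?_, fun w ↦ ?_⟩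
    · rintro rfl; omega
    · simp [mlEval_point]
  | zero => exact ⟨fun _ ↦ 0, fun _ _ ↦ rfl, fun w ↦ by simp [mlEval]⟩
  | add f g _ _ hf hg =>
    obtain ⟨c, hc, hfc⟩ := hf
    obtain ⟨c', hc', hgc⟩ := hg
    refine ⟨fun S ↦ c S + c' S, fun S hS ↦ by simp [hc S hS, hc' S hS], fun w ↦ ?_⟩
    simp only [Pi.add_apply, hfc, hgc, mlEval, add_mul, sum_add_distrib]
  | smul a f _ hf =>
    obtain ⟨c, hc, hfc⟩ := hf
    refine ⟨fun S ↦ a * c S, fun S hS ↦ by simp [hc S hS], fun w ↦ ?_⟩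
    rw [mlEval_const_mul, ← hfc, Pi.smul_apply, smul_eq_mul]

end LowDegree

section Cube

variable {ι : Type*} [Fintype ι] [DecidableEq ι]

lemma expect_eq_zero_of_odd (i : ι) {f : (ι → Bool) → ℝ} (h : ∀ w, f (flipAt i w) = -f w) :
    𝔼 w, f w = 0 := by
  have := expect_comp_involutive (flipAt_involutive i) f
  simp only [h, expect_neg_distrib] at this
  linarith

lemma expect_walsh_mul_walsh (S T : Finset ι) :
    𝔼 w, walsh S w * walsh T w = if S = T then 1 else 0 := by
  split_ifs with h
  · subst h
    simp only [walsh_mul_self, Fintype.expect_const]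
  · obtain ⟨i, hi⟩ := symmDiff_nonempty.2 h
    refine expect_eq_zero_of_odd i fun w ↦ ?_
    rcases mem_symmDiff.1 hi with ⟨hS, hT⟩ | ⟨hT, hS⟩
    · rw [walsh_flipAt_of_mem hS, walsh_flipAt_of_notMem hT, neg_mul]
    · rw [walsh_flipAt_of_notMem hS, walsh_flipAt_of_mem hT, mul_neg]

lemma expect_mlEval_sq (c : Finset ι → ℝ) : 𝔼 w, mlEval c (point w) ^ 2 = normSq c := by
  have expand (w : ι → Bool) : mlEval c (point w) ^ 2
      = ∑ S, ∑ T, c S * c T * (walsh S w * walsh T w) := by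
    rw [mlEval_point, sq, sum_mul_sum]
    exact sum_congr rfl fun S _ ↦ sum_congr rfl fun T _ ↦ by ring
  simp only [expand, expect_sum_comm, ← mul_expect, expect_walsh_mul_walsh]
  simp [normSq, sq]

lemma expect_mlEval (c : Finset ι → ℝ) : 𝔼 w, mlEval c (point w) = c ∅ := by
  have h (S : Finset ι) : 𝔼 w, walsh S w = if S = ∅ then 1 else 0 := by
    simpa [walsh_empty] using expect_walsh_mul_walsh S ∅
  simp only [mlEval_point, expect_sum_comm, ← mul_expect, h]
  simp

/-! ### Hypercontractivity -/

section Bonami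

variable {i : ι} {g h : (ι → Bool) → ℝ}

lemma expect_add_sgn_mul_sq (hg : ∀ w, g (flipAt i w) = g w) (hh : ∀ w, h (flipAt i w) = h w) :
    𝔼 w, (g w + sgn (w i) * h w) ^ 2 = 𝔼 w, g w ^ 2 + 𝔼 w, h w ^ 2 := by
  have odd : 𝔼 w, sgn (w i) * (g w * h w) = 0 :=
    expect_eq_zero_of_odd i fun w ↦ by rw [hg, hh, flipAt_self, sgn_not]; ring
  have expand (w : ι → Bool) : (g w + sgn (w i) * h w) ^ 2
      = g w ^ 2 + h w ^ 2 + 2 * (sgn (w i) * (g w * h w)) := by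
    linear_combination h w ^ 2 * sgn_sq (w i)
  simp only [expand, expect_add_distrib, ← mul_expect, odd]
  ring

lemma expect_add_sgn_mul_pow_four (hg : ∀ w, g (flipAt i w) = g w)
    (hh : ∀ w, h (flipAt i w) = h w) :
    𝔼 w, (g w + sgn (w i) * h w) ^ 4
      = 𝔼 w, g w ^ 4 + 6 * 𝔼 w, g w ^ 2 * h w ^ 2 + 𝔼 w, h w ^ 4 := by
  have odd : 𝔼 w, sgn (w i) * (g w ^ 3 * h w + g w * h w ^ 3) = 0 :=
    expect_eq_zero_of_odd i fun w ↦ by rw [hg, hh, flipAt_self, sgn_not]; ring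
  have expand (w : ι → Bool) : (g w + sgn (w i) * h w) ^ 4
      = g w ^ 4 + 6 * (g w ^ 2 * h w ^ 2) + h w ^ 4
        + 4 * (sgn (w i) * (g w ^ 3 * h w + g w * h w ^ 3)) := by
    linear_combination (6 * g w ^ 2 * h w ^ 2 + 4 * g w * h w ^ 3 * sgn (w i)
      + h w ^ 4 * (sgn (w i) ^ 2 + 1)) * sgn_sq (w i)
  simp only [expand, expect_add_distrib, ← mul_expect, odd]
  ring

lemma expect_add_sgn_mul_pow_four_le {d : ℕ} (hg : ∀ w, g (flipAt i w) = g w)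
    (hh : ∀ w, h (flipAt i w) = h w) (hg4 : 𝔼 w, g w ^ 4 ≤ 9 ^ (d + 1) * (𝔼 w, g w ^ 2) ^ 2)
    (hh4 : 𝔼 w, h w ^ 4 ≤ 9 ^ d * (𝔼 w, h w ^ 2) ^ 2) :
    𝔼 w, (g w + sgn (w i) * h w) ^ 4
      ≤ 9 ^ (d + 1) * (𝔼 w, (g w + sgn (w i) * h w) ^ 2) ^ 2 := by
  rw [expect_add_sgn_mul_sq hg hh, expect_add_sgn_mul_pow_four hg hh]
  have cauchy_schwarz := expect_mul_sq_le_sq_mul_sq univ (fun w ↦ g w ^ 2) fun w ↦ h w ^ 2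
  simp only [← pow_mul, Nat.reduceMul] at cauchy_schwarz
  set G := 𝔼 w, g w ^ 2
  set H := 𝔼 w, h w ^ 2
  have hG : 0 ≤ G := expect_nonneg fun _ _ ↦ sq_nonneg _
  have hH : 0 ≤ H := expect_nonneg fun _ _ ↦ sq_nonneg _
  have cross : 𝔼 w, g w ^ 2 * h w ^ 2 ≤ 9 ^ d * 3 * (G * H) := by
    refine (abs_le_of_sq_le_sq' ?_ (by positivity)).2
    calc _ ≤ _ := cauchy_schwarz
      _ ≤ (9 ^ (d + 1) * G ^ 2) * (9 ^ d * H ^ 2) := by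
        gcongr
      _ = _ := by ring
  have : 0 ≤ (9 : ℝ) ^ d * H ^ 2 := by positivity
  rw [pow_succ] at hg4 ⊢
  linarith

end Bonami

lemma expect_partialEval_pow_four_le (U : Finset ι) (d : ℕ) (c : Finset ι → ℝ)
    (hc : ∀ S ⊆ U, d < #S → c S = 0) :
    𝔼 w, partialEval U c w ^ 4 ≤ 9 ^ d * (𝔼 w, partialEval U c w ^ 2) ^ 2 := by
  induction U using Finset.induction_on generalizing d c with
  | empty =>
    simp only [partialEval, powerset_empty, sum_singleton, walsh_empty, mul_one,
      Fintype.expect_const]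
    have : (1 : ℝ) ≤ 9 ^ d := one_le_pow₀ (by norm_num)
    nlinarith [pow_nonneg (sq_nonneg (c ∅)) 2]
  | insert i U hi ih =>
    have hcard {S : Finset ι} (hS : S ⊆ U) : #(insert i S) = #S + 1 :=
      card_insert_of_notMem fun h ↦ hi (hS h)
    have hg := ih d c fun S hS ↦ hc S (hS.trans (subset_insert _ _))
    cases d with
    | zero =>
      have top_zero (w : ι → Bool) : partialEval U (fun S ↦ c (insert i S)) w = 0 :=
        sum_eq_zero fun S hS ↦ by
          have hS := mem_powerset.1 hS
          exact mul_eq_zero_of_left (hc _ (insert_subset_insert _ hS) (by rw [hcard hS]; omega)) _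
      simpa only [partialEval_insert hi, top_zero, mul_zero, add_zero] using hg
    | succ d =>
      have hh := ih d (fun S ↦ c (insert i S)) fun S hS hd ↦
        hc _ (insert_subset_insert _ hS) (by rw [hcard hS]; omega)
      simp only [partialEval_insert hi]
      exact expect_add_sgn_mul_pow_four_le (partialEval_flipAt hi c) (partialEval_flipAt hi _)
        hg hh

/-- **Bonami's inequality**: the `(2, 4)`-hypercontractive estimate on the cube. -/
lemma expect_mlEval_pow_four_le {d : ℕ} {c : Finset ι → ℝ} (hc : DegreeLE d c) :
    𝔼 w, mlEval c (point w) ^ 4 ≤ 9 ^ d * normSq c ^ 2 := by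
  have h (w : ι → Bool) : partialEval univ c w = mlEval c (point w) := by
    rw [mlEval_point, partialEval, powerset_univ]
  simpa only [h, expect_mlEval_sq] using
    expect_partialEval_pow_four_le univ d c fun S _ hS ↦ hc S hS

lemma expect_pow_four_le {d : ℕ} {f : (ι → Bool) → ℝ} (hf : f ∈ lowDegree ι d) :
    𝔼 w, f w ^ 4 ≤ 9 ^ d * (𝔼 w, f w ^ 2) ^ 2 := by
  obtain ⟨c, hc, hfc⟩ := exists_degreeLE_of_mem_lowDegree hf
  simp only [hfc, expect_mlEval_sq]
  exact expect_mlEval_pow_four_le hc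

lemma expect_pow_two_pow_le {d : ℕ} (k : ℕ) {f : (ι → Bool) → ℝ} (hf : f ∈ lowDegree ι d) :
    𝔼 w, f w ^ 2 ^ (k + 1) ≤ 3 ^ (d * k * 2 ^ k) * (𝔼 w, f w ^ 2) ^ 2 ^ k := by
  induction k generalizing d f with
  | zero => simp
  | succ k ih =>
    have h := ih (mul_mem_lowDegree hf hf)
    have hpow (w : ι → Bool) : (f * f) w ^ 2 ^ (k + 1) = f w ^ 2 ^ (k + 1 + 1) := by
      rw [Pi.mul_apply, ← sq, ← pow_mul, ← pow_succ']
    have hsq (w : ι → Bool) : (f * f) w ^ 2 = f w ^ 4 := by rw [Pi.mul_apply]; ring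
    simp only [hpow, hsq] at h
    calc 𝔼 w, f w ^ 2 ^ (k + 1 + 1)
        ≤ 3 ^ ((d + d) * k * 2 ^ k) * (𝔼 w, f w ^ 4) ^ 2 ^ k := h
      _ ≤ 3 ^ ((d + d) * k * 2 ^ k) * (9 ^ d * (𝔼 w, f w ^ 2) ^ 2) ^ 2 ^ k := by
        gcongr
        exact expect_pow_four_le hf
      _ = 3 ^ (d * (k + 1) * 2 ^ (k + 1)) * (𝔼 w, f w ^ 2) ^ 2 ^ (k + 1) := by
        rw [show (9 : ℝ) = 3 ^ 2 by norm_num, mul_pow, ← pow_mul, ← pow_mul, ← pow_mul,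
          ← mul_assoc, ← pow_add]
        ring_nf

lemma expect_expect_piecewise (U : Finset ι) (f : (ι → Bool) → ℝ) :
    𝔼 y, 𝔼 x, f (U.piecewise x y) = 𝔼 w, f w := by
  have swap : Function.Involutive fun z : (ι → Bool) × (ι → Bool) ↦
      (U.piecewise z.2 z.1, U.piecewise z.1 z.2) := by
    rintro ⟨x, y⟩
    ext i <;> by_cases hi : i ∈ U <;> simp [hi]
  calc 𝔼 y, 𝔼 x, f (U.piecewise x y)
      = 𝔼 z : (ι → Bool) × (ι → Bool), f (U.piecewise z.2 z.1) :=
        (expect_prod fun y x ↦ f (U.piecewise x y)).symm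
    _ = 𝔼 z : (ι → Bool) × (ι → Bool), f z.1 := expect_comp_involutive swap fun z ↦ f z.1
    _ = 𝔼 w, f w := by
      rw [expect_prod fun x _ ↦ f x]; simp only [Fintype.expect_const]

end Cube

/-! ### Derivatives of multilinear polynomials -/

section Derivative

variable {ι : Type*} [DecidableEq ι]

/-- The coefficients of the partial derivative `∂ᵢ` of the multilinear polynomial with
coefficients `c`. -/
def partialDeriv (i : ι) (c : Finset ι → ℝ) : Finset ι → ℝ :=
  fun S ↦ if i ∈ S then 0 else c (insert i S)

lemma partialDeriv_of_mem {i : ι} {S : Finset ι} (h : i ∈ S) (c : Finset ι → ℝ) :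
    partialDeriv i c S = 0 := if_pos h

lemma partialDeriv_of_notMem {i : ι} {S : Finset ι} (h : i ∉ S) (c : Finset ι → ℝ) :
    partialDeriv i c S = c (insert i S) := if_neg h

lemma partialDeriv_self (i : ι) (c : Finset ι → ℝ) : partialDeriv i (partialDeriv i c) = 0 := by
  funext S
  simp [partialDeriv]

lemma partialDeriv_const_mul (a : ℝ) (c : Finset ι → ℝ) (j : ι) :
    partialDeriv j (fun S ↦ a * c S) = fun S ↦ a * partialDeriv j c S := by
  funext S
  simp only [partialDeriv, mul_ite, mul_zero]

lemma partialDeriv_comm (i j : ι) (c : Finset ι → ℝ) :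
    partialDeriv i (partialDeriv j c) = partialDeriv j (partialDeriv i c) := by
  rcases eq_or_ne i j with rfl | hij
  · rfl
  funext S
  by_cases hi : i ∈ S <;> by_cases hj : j ∈ S <;>
    simp [partialDeriv, hi, hj, hij, hij.symm, Finset.insert_comm i j]

lemma DegreeLE.partialDeriv {d : ℕ} {c : Finset ι → ℝ} (h : DegreeLE d c) (i : ι) :
    DegreeLE (d - 1) (partialDeriv i c) := fun S hS ↦ by
  by_cases hi : i ∈ S
  · exact partialDeriv_of_mem hi c
  · rw [partialDeriv_of_notMem hi, h]
    rw [card_insert_of_notMem hi]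
    omega

lemma partialDeriv_eq_zero {c : Finset ι → ℝ} (h : DegreeLE 0 c) (i : ι) :
    partialDeriv i c = 0 := by
  funext S
  by_cases hi : i ∈ S
  · exact partialDeriv_of_mem hi c
  · rw [partialDeriv_of_notMem hi, h _ (card_pos.2 (insert_nonempty i S)), Pi.zero_apply]

variable [Fintype ι]

lemma mlEval_eq_sum_erase (i : ι) (c : Finset ι → ℝ) (x : ι → ℝ) :
    mlEval c x
      = ∑ S ∈ (univ.erase i).powerset, (c S + x i * c (insert i S)) * ∏ j ∈ S, x j := by
  have hi {S : Finset ι} (hS : S ∈ (univ.erase i).powerset) : i ∉ S :=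
    fun h ↦ notMem_erase i _ (mem_powerset.1 hS h)
  rw [mlEval, ← powerset_univ, ← insert_erase (mem_univ i),
    sum_powerset_insert (notMem_erase i _), erase_insert_eq_erase, erase_idem,
    ← sum_add_distrib]
  refine sum_congr rfl fun S hS ↦ ?_
  rw [prod_insert (hi hS)]
  ring

lemma mlEval_update (i : ι) (c : Finset ι → ℝ) (x : ι → ℝ) (s : ℝ) :
    mlEval c (Function.update x i s)
      = mlEval c x + (s - x i) * mlEval (partialDeriv i c) x := by
  simp only [mlEval_eq_sum_erase i, Function.update_self, mul_sum, ← sum_add_distrib]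
  refine sum_congr rfl fun S hS ↦ ?_
  have hi : i ∉ S := fun h ↦ notMem_erase i _ (mem_powerset.1 hS h)
  have hprod : ∏ j ∈ S, Function.update x i s j = ∏ j ∈ S, x j :=
    prod_congr rfl fun j hj ↦ Function.update_of_ne (by rintro rfl; exact hi hj) _ _
  rw [hprod, partialDeriv_of_notMem hi, partialDeriv_of_mem (mem_insert_self i S)]
  ring

/-- The derivative at `x` in the direction `y` of the multilinear polynomial `c`. -/
noncomputable def dirDeriv (c : Finset ι → ℝ) (x y : ι → ℝ) : ℝ :=
  ∑ j, y j * mlEval (partialDeriv j c) x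

lemma dirDeriv_update (i : ι) (c : Finset ι → ℝ) (x y : ι → ℝ) (s t : ℝ) :
    dirDeriv c (Function.update x i s) (Function.update y i t)
      = dirDeriv c x y + (s - x i) * dirDeriv (partialDeriv i c) x y
        + (t - y i) * mlEval (partialDeriv i c) x := by
  have hy (j : ι) : Function.update y i t j = y j + if j = i then t - y i else 0 := by
    rcases eq_or_ne j i with rfl | h <;> simp [*]
  have hself : mlEval (0 : Finset ι → ℝ) x = 0 := by simp [mlEval]
  simp only [dirDeriv, mlEval_update, hy, add_mul, mul_add, sum_add_distrib, ite_mul, zero_mul,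
    sum_ite_eq', mem_univ, if_true, partialDeriv_self, hself, mul_zero, add_zero,
    partialDeriv_comm _ i, mul_sum]
  rw [add_right_comm]
  congr 2
  exact sum_congr rfl fun j _ ↦ by ring

/-- The variance of a multilinear polynomial on the cube, as a sum of squares of the nonconstant
Fourier coefficients. -/
noncomputable def cubeVar (c : Finset ι → ℝ) : ℝ := ∑ S ∈ univ.erase ∅, c S ^ 2

lemma normSq_eq_sq_add_cubeVar (c : Finset ι → ℝ) : normSq c = c ∅ ^ 2 + cubeVar c :=
  (add_sum_erase _ _ (mem_univ ∅)).symm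

lemma cubeVar_nonneg (c : Finset ι → ℝ) : 0 ≤ cubeVar c := sum_nonneg fun _ _ ↦ sq_nonneg _

lemma cubeVar_const_mul (a : ℝ) (c : Finset ι → ℝ) :
    cubeVar (fun S ↦ a * c S) = a ^ 2 * cubeVar c := by
  simp only [cubeVar, mul_pow, mul_sum]

lemma cubeVar_le_normSq (c : Finset ι → ℝ) : cubeVar c ≤ normSq c := by
  rw [normSq_eq_sq_add_cubeVar]
  linarith [sq_nonneg (c ∅)]

lemma normSq_partialDeriv (i : ι) (c : Finset ι → ℝ) :
    normSq (partialDeriv i c) = ∑ S with i ∈ S, c S ^ 2 := by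
  have h (S : Finset ι) : partialDeriv i c S ^ 2 = if i ∉ S then c (insert i S) ^ 2 else 0 := by
    by_cases hi : i ∈ S <;> simp [partialDeriv, hi]
  simp only [normSq, h]
  rw [← sum_filter]
  refine sum_nbij' (insert i) (fun S ↦ S.erase i) (by simp) (by simp) ?_ ?_ fun _ _ ↦ rfl
  · exact fun S hS ↦ erase_insert (mem_filter.1 hS).2
  · exact fun S hS ↦ insert_erase (mem_filter.1 hS).2

lemma sum_normSq_partialDeriv (c : Finset ι → ℝ) :
    ∑ i, normSq (partialDeriv i c) = ∑ S ∈ univ.erase ∅, (#S : ℝ) * c S ^ 2 := by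
  simp only [normSq_partialDeriv, sum_filter]
  rw [sum_comm, ← add_sum_erase _ _ (mem_univ (∅ : Finset ι))]
  simp

lemma sum_normSq_partialDeriv_le {d : ℕ} {c : Finset ι → ℝ} (h : DegreeLE d c) :
    ∑ i, normSq (partialDeriv i c) ≤ d * cubeVar c := by
  rw [sum_normSq_partialDeriv, cubeVar, mul_sum]
  refine sum_le_sum fun S _ ↦ ?_
  rcases lt_or_ge d #S with hS | hS
  · simp [h S hS]
  · gcongr

lemma cubeVar_le_sum_normSq_partialDeriv (c : Finset ι → ℝ) :
    cubeVar c ≤ ∑ i, normSq (partialDeriv i c) := by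
  rw [sum_normSq_partialDeriv, cubeVar]
  refine sum_le_sum fun S hS ↦ le_mul_of_one_le_left (sq_nonneg _) ?_
  exact_mod_cast card_pos.2 (nonempty_iff_ne_empty.2 (ne_of_mem_erase hS))

end Derivative

section LowDegree

variable {ι κ : Type*} [Fintype ι] {d : ℕ} {c : Finset ι → ℝ} {x y : (κ → Bool) → ι → ℝ}

lemma mlEval_mem_lowDegree (h : DegreeLE d c) (hx : ∀ i, (fun w ↦ x w i) ∈ lowDegree κ 1) :
    (fun w ↦ mlEval c (x w)) ∈ lowDegree κ d := by
  refine sum_mem_lowDegree fun S _ ↦ ?_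
  rcases lt_or_ge d #S with hS | hS
  · simp only [h S hS, zero_mul]
    exact const_mem_lowDegree 0 d
  · have := prod_mem_lowDegree (s := S) fun i _ ↦ hx i
    rw [sum_const, smul_eq_mul, mul_one] at this
    exact const_mul_mem_lowDegree _ (lowDegree_mono hS this)

lemma dirDeriv_mem_lowDegree [DecidableEq ι] (h : DegreeLE d c)
    (hx : ∀ i, (fun w ↦ x w i) ∈ lowDegree κ 1) (hy : ∀ i, (fun w ↦ y w i) ∈ lowDegree κ 1) :
    (fun w ↦ dirDeriv c (x w) (y w)) ∈ lowDegree κ d := by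
  refine sum_mem_lowDegree fun j _ ↦ ?_
  cases d with
  | zero =>
    simp only [partialDeriv_eq_zero h, mlEval, Pi.zero_apply, zero_mul, sum_const_zero, mul_zero]
    exact const_mem_lowDegree 0 0
  | succ e =>
    rw [add_comm e]
    exact mul_mem_lowDegree (hy j) (mlEval_mem_lowDegree (h.partialDeriv j) hx)

end LowDegree

/-! ### Lindeberg replacement along a rotation -/

/-- Changing the `i`-th coordinates of both entries of `z` changes `a z` affinely, with slopes
`a₁ z` and `a₂ z`. -/
def HasSlopes {ι : Type*} [DecidableEq ι] (i : ι) (a a₁ a₂ : (ι → ℝ) × (ι → ℝ) → ℝ) : Prop :=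
  ∀ z s t, a (Function.update z.1 i s, Function.update z.2 i t)
    = a z + (s - z.1 i) * a₁ z + (t - z.2 i) * a₂ z

section Slopes

variable {ι : Type*} [Fintype ι] [DecidableEq ι] (i : ι) (c : Finset ι → ℝ)

lemma hasSlopes_mlEval_fst : HasSlopes i (fun z ↦ mlEval c z.1)
    (fun z ↦ mlEval (partialDeriv i c) z.1) fun _ ↦ 0 := fun z s t ↦ by
  simp only [mlEval_update, mul_zero, add_zero]

lemma hasSlopes_mlEval_snd : HasSlopes i (fun z ↦ mlEval c z.2) (fun _ ↦ 0)
    fun z ↦ mlEval (partialDeriv i c) z.2 := fun z s t ↦ by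
  simp only [mlEval_update, mul_zero, add_zero]

lemma hasSlopes_dirDeriv : HasSlopes i (fun z ↦ dirDeriv c z.1 z.2)
    (fun z ↦ dirDeriv (partialDeriv i c) z.1 z.2) fun z ↦ mlEval (partialDeriv i c) z.1 :=
  fun z s t ↦ dirDeriv_update i c z.1 z.2 s t

end Slopes

/-- The hybrid between the point `(x, y)` encoded by `w` (in the coordinates `(j, false)` and
`(j, true)`) and its rotation `(C x + S y, -S x + C y)`: the coordinates in `T` are rotated. -/
noncomputable def rotHybrid {ι : Type*} [DecidableEq ι] (C S : ℝ) (T : Finset ι)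
    (w : ι × Bool → Bool) : (ι → ℝ) × (ι → ℝ) :=
  (fun j ↦ if j ∈ T then C * sgn (w (j, false)) + S * sgn (w (j, true)) else sgn (w (j, false)),
    fun j ↦ if j ∈ T then -S * sgn (w (j, false)) + C * sgn (w (j, true)) else sgn (w (j, true)))

/-- `Φ` has a second order Taylor expansion at every point, with cubic remainder of constant
`K`. -/
def TaylorBound (Φ : ℝ → ℝ → ℝ) (K : ℝ) : Prop :=
  ∀ a b, ∃ c₁ c₂ c₁₁ c₁₂ c₂₂ : ℝ, ∀ α β,
    |Φ (a + α) (b + β)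
        - (Φ a b + c₁ * α + c₂ * β + c₁₁ * α ^ 2 + c₁₂ * (α * β) + c₂₂ * β ^ 2)|
      ≤ K * (|α| + |β|) ^ 3

lemma TaylorBound.nonneg {Φ : ℝ → ℝ → ℝ} {K : ℝ} (h : TaylorBound Φ K) : 0 ≤ K := by
  obtain ⟨_, _, _, _, _, h⟩ := h 0 0
  simpa using (abs_nonneg _).trans (h 1 0)

section TwoSigns

variable {κ : Type*} [Fintype κ] [DecidableEq κ] {k l : κ}

lemma expect_quadratic (hkl : k ≠ l) (c₀ c₁ c₂ c₁₁ c₁₂ c₂₂ a₁ a₂ b₁ b₂ : ℝ) :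
    𝔼 w : κ → Bool, (c₀ + c₁ * (sgn (w k) * a₁ + sgn (w l) * a₂)
        + c₂ * (sgn (w k) * b₁ + sgn (w l) * b₂)
        + c₁₁ * (sgn (w k) * a₁ + sgn (w l) * a₂) ^ 2
        + c₁₂ * ((sgn (w k) * a₁ + sgn (w l) * a₂) * (sgn (w k) * b₁ + sgn (w l) * b₂))
        + c₂₂ * (sgn (w k) * b₁ + sgn (w l) * b₂) ^ 2)
      = c₀ + c₁₁ * (a₁ ^ 2 + a₂ ^ 2) + c₁₂ * (a₁ * b₁ + a₂ * b₂) + c₂₂ * (b₁ ^ 2 + b₂ ^ 2) := by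
  have mean (i : κ) : 𝔼 w : κ → Bool, sgn (w i) = 0 :=
    expect_eq_zero_of_odd i fun w ↦ by rw [flipAt_self, sgn_not]
  have correlation : 𝔼 w : κ → Bool, sgn (w k) * sgn (w l) = 0 :=
    expect_eq_zero_of_odd k fun w ↦ by rw [flipAt_self, sgn_not, flipAt_of_ne hkl.symm, neg_mul]
  set q := c₀ + c₁₁ * (a₁ ^ 2 + a₂ ^ 2) + c₁₂ * (a₁ * b₁ + a₂ * b₂) + c₂₂ * (b₁ ^ 2 + b₂ ^ 2)
  calc _ = 𝔼 w : κ → Bool, (q + (c₁ * a₁ + c₂ * b₁) * sgn (w k)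
          + (c₁ * a₂ + c₂ * b₂) * sgn (w l)
          + (2 * c₁₁ * a₁ * a₂ + c₁₂ * (a₁ * b₂ + a₂ * b₁) + 2 * c₂₂ * b₁ * b₂)
            * (sgn (w k) * sgn (w l))) := by
        refine expect_congr rfl fun w _ ↦ ?_
        linear_combination (c₁₁ * a₁ ^ 2 + c₁₂ * a₁ * b₁ + c₂₂ * b₁ ^ 2) * sgn_sq (w k)
          + (c₁₁ * a₂ ^ 2 + c₁₂ * a₂ * b₂ + c₂₂ * b₂ ^ 2) * sgn_sq (w l)
    _ = q := by
        simp only [expect_add_distrib, ← mul_expect, Fintype.expect_const, mean, correlation]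
        ring

lemma abs_expect_sub_quadratic_le (hkl : k ≠ l) {Φ : ℝ → ℝ → ℝ} {K a b c₁ c₂ c₁₁ c₁₂ c₂₂ : ℝ}
    (hK : 0 ≤ K)
    (h : ∀ α β, |Φ (a + α) (b + β)
        - (Φ a b + c₁ * α + c₂ * β + c₁₁ * α ^ 2 + c₁₂ * (α * β) + c₂₂ * β ^ 2)|
      ≤ K * (|α| + |β|) ^ 3) (a₁ a₂ b₁ b₂ : ℝ) :
    |𝔼 w : κ → Bool, Φ (a + (sgn (w k) * a₁ + sgn (w l) * a₂))
        (b + (sgn (w k) * b₁ + sgn (w l) * b₂))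
      - (Φ a b + c₁₁ * (a₁ ^ 2 + a₂ ^ 2) + c₁₂ * (a₁ * b₁ + a₂ * b₂) + c₂₂ * (b₁ ^ 2 + b₂ ^ 2))|
      ≤ K * (|a₁| + |a₂| + |b₁| + |b₂|) ^ 3 := by
  have habs (w : κ → Bool) (p q : ℝ) : |sgn (w k) * p + sgn (w l) * q| ≤ |p| + |q| := by
    refine (abs_add_le _ _).trans ?_
    rw [abs_mul, abs_mul, abs_sgn, abs_sgn, one_mul, one_mul]
  rw [← expect_quadratic hkl (Φ a b) c₁ c₂ c₁₁ c₁₂ c₂₂, ← expect_sub_distrib]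
  refine (abs_expect_le _ _).trans (expect_le univ_nonempty fun w _ ↦ (h _ _).trans ?_)
  refine mul_le_mul_of_nonneg_left (pow_le_pow_left₀ (by positivity) ?_ 3) hK
  linarith [habs w a₁ a₂, habs w b₁ b₂]

lemma abs_rotation_add_abs_rotation_le {C S : ℝ} (h : C ^ 2 + S ^ 2 = 1) (p q : ℝ) :
    |C * p - S * q| + |S * p + C * q| ≤ 2 * (|p| + |q|) := by
  have hC : |C| ≤ 1 := abs_le_one_iff_mul_self_le_one.2 (by nlinarith)
  have hS : |S| ≤ 1 := abs_le_one_iff_mul_self_le_one.2 (by nlinarith)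
  have h₁ : |C * p - S * q| ≤ |C| * |p| + |S| * |q| := by
    simpa only [abs_mul] using abs_sub (C * p) (S * q)
  have h₂ : |S * p + C * q| ≤ |S| * |p| + |C| * |q| := by
    simpa only [abs_mul] using abs_add_le (S * p) (C * q)
  nlinarith [abs_nonneg p, abs_nonneg q]

/-- A rotation preserves the mean and the covariance of a pair of independent signs, hence the
expectations of all quadratic polynomials. -/
lemma abs_expect_rotation_sub_le {C S : ℝ} (hCS : C ^ 2 + S ^ 2 = 1) (hkl : k ≠ l)
    {Φ : ℝ → ℝ → ℝ} {K : ℝ} (hΦ : TaylorBound Φ K) (a a₁ a₂ b b₁ b₂ : ℝ) :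
    |𝔼 w : κ → Bool, Φ
          (a + (C * sgn (w k) + S * sgn (w l)) * a₁ + (-S * sgn (w k) + C * sgn (w l)) * a₂)
          (b + (C * sgn (w k) + S * sgn (w l)) * b₁ + (-S * sgn (w k) + C * sgn (w l)) * b₂)
        - 𝔼 w : κ → Bool, Φ (a + sgn (w k) * a₁ + sgn (w l) * a₂)
          (b + sgn (w k) * b₁ + sgn (w l) * b₂)|
      ≤ 16 * K * (|a₁| + |a₂| + |b₁| + |b₂|) ^ 3 := by
  have hK := hΦ.nonneg
  obtain ⟨c₁, c₂, c₁₁, c₁₂, c₂₂, hc⟩ := hΦ a b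
  have rotated := abs_expect_sub_quadratic_le hkl hK hc (C * a₁ - S * a₂) (S * a₁ + C * a₂)
    (C * b₁ - S * b₂) (S * b₁ + C * b₂)
  have original := abs_expect_sub_quadratic_le hkl hK hc a₁ a₂ b₁ b₂
  have inner_eq (p q r s : ℝ) : (C * p - S * q) * (C * r - S * s)
      + (S * p + C * q) * (S * r + C * s) = p * r + q * s := by
    linear_combination (p * r + q * s) * hCS
  have norm_eq (p q : ℝ) : (C * p - S * q) ^ 2 + (S * p + C * q) ^ 2 = p ^ 2 + q ^ 2 := by
    linear_combination (p ^ 2 + q ^ 2) * hCS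
  rw [norm_eq, norm_eq, inner_eq] at rotated
  have expand (w : κ → Bool) (e p q : ℝ) :
      e + (C * sgn (w k) + S * sgn (w l)) * p + (-S * sgn (w k) + C * sgn (w l)) * q
        = e + (sgn (w k) * (C * p - S * q) + sgn (w l) * (S * p + C * q)) := by ring
  simp only [expand]
  simp only [add_assoc _ (sgn _ * _) (sgn _ * _)]
  rw [abs_sub_comm] at original
  set s := |a₁| + |a₂| + |b₁| + |b₂|
  calc _ ≤ _ := abs_sub_le _ _ _
    _ ≤ K * (2 * s) ^ 3 + K * s ^ 3 := by
        refine add_le_add (rotated.trans ?_) original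
        gcongr
        linarith [abs_rotation_add_abs_rotation_le hCS a₁ a₂,
          abs_rotation_add_abs_rotation_le hCS b₁ b₂]
    _ ≤ 16 * K * s ^ 3 := by
        have : 0 ≤ K * s ^ 3 := by positivity
        linarith

end TwoSigns

section Lindeberg

variable {ι : Type*} [DecidableEq ι]

lemma rotHybrid_piecewise (C S : ℝ) {T : Finset ι} {i : ι} (hi : i ∉ T) (x y : ι × Bool → Bool) :
    rotHybrid C S T (({(i, false), (i, true)} : Finset (ι × Bool)).piecewise x y)
      = (Function.update (rotHybrid C S T y).1 i (sgn (x (i, false))),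
        Function.update (rotHybrid C S T y).2 i (sgn (x (i, true)))) := by
  ext j <;> rcases eq_or_ne j i with rfl | hj <;> simp [rotHybrid, *]

lemma rotHybrid_insert_piecewise (C S : ℝ) (T : Finset ι) (i : ι) (x y : ι × Bool → Bool) :
    rotHybrid C S (insert i T) (({(i, false), (i, true)} : Finset (ι × Bool)).piecewise x y)
      = (Function.update (rotHybrid C S T y).1 i (C * sgn (x (i, false)) + S * sgn (x (i, true))),
        Function.update (rotHybrid C S T y).2 i
          (-S * sgn (x (i, false)) + C * sgn (x (i, true)))) := by
  ext j <;> rcases eq_or_ne j i with rfl | hj <;> simp [rotHybrid, *]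

variable [Fintype ι] {C S : ℝ} {Φ : ℝ → ℝ → ℝ} {K : ℝ}

lemma abs_expect_rotHybrid_insert_sub_le (hCS : C ^ 2 + S ^ 2 = 1) (hΦ : TaylorBound Φ K) {i : ι}
    {a a₁ a₂ b b₁ b₂ : (ι → ℝ) × (ι → ℝ) → ℝ} (ha : HasSlopes i a a₁ a₂)
    (hb : HasSlopes i b b₁ b₂) {T : Finset ι} (hi : i ∉ T) :
    |𝔼 w, Φ (a (rotHybrid C S (insert i T) w)) (b (rotHybrid C S (insert i T) w))
        - 𝔼 w, Φ (a (rotHybrid C S T w)) (b (rotHybrid C S T w))|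
      ≤ 16 * K * 𝔼 w, (|a₁ (rotHybrid C S T w)| + |a₂ (rotHybrid C S T w)|
        + |b₁ (rotHybrid C S T w)| + |b₂ (rotHybrid C S T w)|) ^ 3 := by
  set U : Finset (ι × Bool) := {(i, false), (i, true)}
  rw [← expect_expect_piecewise U,
    ← expect_expect_piecewise U fun w ↦ Φ (a (rotHybrid C S T w)) (b (rotHybrid C S T w)),
    ← expect_sub_distrib, mul_expect]
  refine (abs_expect_le _ _).trans (expect_le_expect fun y _ ↦ ?_)
  simp only [U, rotHybrid_piecewise C S hi, rotHybrid_insert_piecewise, ha _, hb _]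
  set z := rotHybrid C S T y
  have affine (e f g s t : ℝ) : e + (s - z.1 i) * f + (t - z.2 i) * g
      = e - z.1 i * f - z.2 i * g + s * f + t * g := by ring
  simp only [affine]
  exact abs_expect_rotation_sub_le hCS (by simp) hΦ _ _ _ _ _ _

variable {a b : (ι → ℝ) × (ι → ℝ) → ℝ} {a₁ a₂ b₁ b₂ : ι → (ι → ℝ) × (ι → ℝ) → ℝ}

/-- The **Lindeberg replacement method**. -/
lemma abs_expect_rotHybrid_sub_le (hCS : C ^ 2 + S ^ 2 = 1) (hΦ : TaylorBound Φ K)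
    (ha : ∀ i, HasSlopes i a (a₁ i) (a₂ i)) (hb : ∀ i, HasSlopes i b (b₁ i) (b₂ i)) {e : ι → ℝ}
    (he : ∀ i T, 𝔼 w, (|a₁ i (rotHybrid C S T w)| + |a₂ i (rotHybrid C S T w)|
      + |b₁ i (rotHybrid C S T w)| + |b₂ i (rotHybrid C S T w)|) ^ 3 ≤ e i) (T : Finset ι) :
    |𝔼 w, Φ (a (rotHybrid C S T w)) (b (rotHybrid C S T w))
        - 𝔼 w, Φ (a (rotHybrid C S ∅ w)) (b (rotHybrid C S ∅ w))| ≤ 16 * K * ∑ i ∈ T, e i := by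
  have hK := hΦ.nonneg
  induction T using Finset.induction_on with
  | empty => simp
  | insert i T hi ih =>
    rw [sum_insert hi, mul_add]
    refine (abs_sub_le _ _ _).trans (add_le_add ?_ ih)
    refine (abs_expect_rotHybrid_insert_sub_le hCS hΦ (ha i) (hb i) hi).trans ?_
    gcongr
    exact he i T

lemma taylorBound_sq : TaylorBound (fun a _ ↦ a ^ 2) 0 := fun a _ ↦
  ⟨2 * a, 0, 1, 0, 0, fun α β ↦ by
    rw [zero_mul ((|α| + |β|) ^ 3), abs_nonpos_iff]
    ring⟩

lemma expect_sq_rotHybrid (hCS : C ^ 2 + S ^ 2 = 1) (ha : ∀ i, HasSlopes i a (a₁ i) (a₂ i))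
    (T : Finset ι) : 𝔼 w, a (rotHybrid C S T w) ^ 2 = 𝔼 w, a (rotHybrid C S ∅ w) ^ 2 := by
  induction T using Finset.induction_on with
  | empty => rfl
  | insert i T hi ih =>
    have h := abs_expect_rotHybrid_insert_sub_le hCS taylorBound_sq (ha i) (ha i) hi
    rw [mul_zero, zero_mul, abs_nonpos_iff, sub_eq_zero] at h
    exact h.trans ih

end Lindeberg

/-! ### A rational test function -/

section RatioTest

/-- The test function `b² / (1 + a² + b²)`, comparing the sizes of `a` and `b`. -/
noncomputable def ratioTest (a b : ℝ) : ℝ := b ^ 2 / (1 + a ^ 2 + b ^ 2)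

lemma ratioTest_nonneg (a b : ℝ) : 0 ≤ ratioTest a b := by
  rw [ratioTest]
  positivity

lemma ratioTest_le_one (a b : ℝ) : ratioTest a b ≤ 1 := by
  rw [ratioTest, div_le_one (by positivity)]
  linarith [sq_nonneg a]

lemma ratioTest_le {a b M : ℝ} (hM : 0 ≤ M) (h : b ^ 2 ≤ M * a ^ 2) : ratioTest a b ≤ M := by
  rw [ratioTest, div_le_iff₀ (by positivity)]
  nlinarith [mul_nonneg hM (sq_nonneg b)]

variable {N D Q Q₁ Q₂ m n l r : ℝ}

/-- Second order expansion of `(N + m + n) / (D + l + r)`, where `m` and `l` are of first order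
and `n` and `r` of second order. -/
lemma div_sub_expansion_eq (hD : D ≠ 0) (hD' : D + l + r ≠ 0) (hQ : Q = N / D)
    (hQ₁ : Q₁ = (m - Q * l) / D) (hQ₂ : Q₂ = (n - Q * r - Q₁ * l) / D) :
    (N + m + n) / (D + l + r) - (Q + Q₁ + Q₂) = -(Q₁ * r + Q₂ * (l + r)) / (D + l + r) := by
  rw [eq_div_iff hD'] at *
  rw [eq_div_iff hD] at hQ hQ₁ hQ₂
  rw [sub_mul, div_mul_cancel₀ _ hD']
  linear_combination -hQ - hQ₁ - hQ₂

variable {w v s : ℝ}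

lemma abs_first_order_le (hw : 0 < w) (hQ₀ : 0 ≤ Q) (hQ : Q ≤ 1)
    (hm : |m| ≤ 2 * w * s) (hl : |l| ≤ 2 * w * s) : |(m - Q * l) / w ^ 2| ≤ 4 * s / w := by
  have numerator : |m - Q * l| ≤ 4 * w * s := by
    refine (abs_sub _ _).trans ?_
    rw [abs_mul, abs_of_nonneg hQ₀]
    linarith [mul_le_mul hQ hl (abs_nonneg _) zero_le_one]
  rw [abs_div, abs_of_pos (pow_pos hw 2), div_le_div_iff₀ (by positivity) hw]
  calc |m - Q * l| * w ≤ 4 * w * s * w := by gcongr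
    _ = _ := by ring

lemma abs_second_order_le (hw : 0 < w) (hs : 0 ≤ s) (hQ₀ : 0 ≤ Q) (hQ : Q ≤ 1)
    (hn₀ : 0 ≤ n) (hn : n ≤ s ^ 2) (hr₀ : 0 ≤ r) (hr : r ≤ s ^ 2) (hl : |l| ≤ 2 * w * s)
    (hQ₁ : |Q₁| ≤ 4 * s / w) : |(n - Q * r - Q₁ * l) / w ^ 2| ≤ 10 * s ^ 2 / w ^ 2 := by
  rw [abs_div, abs_of_pos (pow_pos hw 2)]
  gcongr
  have cross : |Q₁ * l| ≤ 8 * s ^ 2 := by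
    rw [abs_mul]
    calc |Q₁| * |l| ≤ 4 * s / w * (2 * w * s) := by gcongr
      _ = 8 * s ^ 2 := by field_simp; ring
  have hQr : Q * r ≤ 1 * s ^ 2 := by gcongr
  have hQr₀ : 0 ≤ Q * r := by positivity
  rw [abs_le] at cross ⊢
  constructor <;> linarith

lemma abs_remainder_le (hw : 1 ≤ w) (hv : 1 ≤ v) (hs : 0 ≤ s) (hsv : s ≤ 2 * w + 2 * v)
    (hr₀ : 0 ≤ r) (hr : r ≤ s ^ 2) (hl : |l| ≤ 2 * w * s) (hQ₁ : |Q₁| ≤ 4 * s / w)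
    (hQ₂ : |Q₂| ≤ 10 * s ^ 2 / w ^ 2) : |Q₁ * r + Q₂ * (l + r)| ≤ 64 * s ^ 3 * v ^ 2 := by
  have hw₀ : 0 < w := by linarith
  have hv₀ : 0 < v := by linarith
  have first : |Q₁ * r| ≤ 4 * s ^ 3 := by
    rw [abs_mul, abs_of_nonneg hr₀]
    calc |Q₁| * r ≤ 4 * s / w * s ^ 2 := by gcongr
      _ ≤ 4 * s / 1 * s ^ 2 := by gcongr
      _ = _ := by ring
  have second : |Q₂ * l| ≤ 20 * s ^ 3 := by
    rw [abs_mul]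
    calc |Q₂| * |l| ≤ 10 * s ^ 2 / w ^ 2 * (2 * w * s) := by gcongr
      _ = 20 * s ^ 3 / w := by field_simp; ring
      _ ≤ 20 * s ^ 3 / 1 := by gcongr
      _ = _ := by ring
  have third : |Q₂ * r| ≤ 40 * s ^ 3 * v ^ 2 := by
    have hsum : 2 * w + 2 * v ≤ 4 * w ^ 2 * v ^ 2 := by
      nlinarith [mul_le_mul hw hv zero_le_one hw₀.le, mul_pos hw₀ hv₀]
    rw [abs_mul, abs_of_nonneg hr₀]
    calc |Q₂| * r ≤ 10 * s ^ 2 / w ^ 2 * s ^ 2 := by gcongr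
      _ = 10 * s ^ 3 / w ^ 2 * s := by ring
      _ ≤ 10 * s ^ 3 / w ^ 2 * (4 * w ^ 2 * v ^ 2) := by gcongr; exact hsv.trans hsum
      _ = _ := by field_simp; ring
  have hv2 : s ^ 3 ≤ s ^ 3 * v ^ 2 :=
    le_mul_of_one_le_right (by positivity) (one_le_pow₀ hv)
  rw [mul_add]
  linarith [abs_add_le (Q₁ * r) (Q₂ * l + Q₂ * r), abs_add_le (Q₂ * l) (Q₂ * r)]

lemma abs_div_sub_expansion_le (hw : 1 ≤ w) (hv : 1 ≤ v) (hs : 0 ≤ s) (hsv : s ≤ 2 * w + 2 * v)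
    (hD : w ^ 2 + l + r = v ^ 2) (hQ₀ : 0 ≤ Q) (hQ' : Q ≤ 1)
    (hm : |m| ≤ 2 * w * s) (hl : |l| ≤ 2 * w * s) (hn₀ : 0 ≤ n) (hn : n ≤ s ^ 2)
    (hr₀ : 0 ≤ r) (hr : r ≤ s ^ 2) (hQ : Q = N / w ^ 2) (hQ₁ : Q₁ = (m - Q * l) / w ^ 2)
    (hQ₂ : Q₂ = (n - Q * r - Q₁ * l) / w ^ 2) :
    |(N + m + n) / v ^ 2 - (Q + Q₁ + Q₂)| ≤ 64 * s ^ 3 := by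
  have hw₀ : 0 < w := by linarith
  have hv₀ : 0 < v ^ 2 := by positivity
  have first : |Q₁| ≤ 4 * s / w := hQ₁ ▸ abs_first_order_le hw₀ hQ₀ hQ' hm hl
  have second : |Q₂| ≤ 10 * s ^ 2 / w ^ 2 :=
    hQ₂ ▸ abs_second_order_le hw₀ hs hQ₀ hQ' hn₀ hn hr₀ hr hl first
  rw [← hD, div_sub_expansion_eq (by positivity) (hD ▸ hv₀.ne') hQ hQ₁ hQ₂, hD, abs_div, abs_neg,
    abs_of_pos hv₀, div_le_iff₀ hv₀]
  exact abs_remainder_le hw hv hs hsv hr₀ hr hl first second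

lemma abs_two_mul_mul_le {x y : ℝ} (hx : |x| ≤ w) : |2 * x * y| ≤ 2 * w * |y| := by
  rw [abs_mul, abs_mul, abs_two]
  gcongr

lemma abs_ratioTest_sub_expansion_le {a b α β : ℝ} (hQ : Q = ratioTest a b)
    (hQ₁ : Q₁ = (2 * b * β - Q * (2 * a * α + 2 * b * β)) / (1 + a ^ 2 + b ^ 2))
    (hQ₂ : Q₂ = (β ^ 2 - Q * (α ^ 2 + β ^ 2) - Q₁ * (2 * a * α + 2 * b * β))
      / (1 + a ^ 2 + b ^ 2)) :
    |ratioTest (a + α) (b + β) - (Q + Q₁ + Q₂)| ≤ 64 * (|α| + |β|) ^ 3 := by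
  set w := √(1 + a ^ 2 + b ^ 2)
  set v := √(1 + (a + α) ^ 2 + (b + β) ^ 2)
  set s := |α| + |β| with hs
  have hw2 : 1 + a ^ 2 + b ^ 2 = w ^ 2 := (Real.sq_sqrt (by positivity)).symm
  have hv2 : 1 + (a + α) ^ 2 + (b + β) ^ 2 = v ^ 2 := (Real.sq_sqrt (by positivity)).symm
  have hw : 1 ≤ w := Real.one_le_sqrt.2 (by nlinarith)
  have hv : 1 ≤ v := Real.one_le_sqrt.2 (by nlinarith)
  have ha : |a| ≤ w := Real.abs_le_sqrt (by nlinarith)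
  have hb : |b| ≤ w := Real.abs_le_sqrt (by nlinarith)
  have haα : |a + α| ≤ v := Real.abs_le_sqrt (by nlinarith)
  have hbβ : |b + β| ≤ v := Real.abs_le_sqrt (by nlinarith)
  have hsv : s ≤ 2 * w + 2 * v := by
    linarith [add_sub_cancel_left a α ▸ abs_sub (a + α) a,
      add_sub_cancel_left b β ▸ abs_sub (b + β) b]
  have hr : α ^ 2 + β ^ 2 ≤ s ^ 2 := by
    rw [hs, ← sq_abs α, ← sq_abs β]
    nlinarith [mul_nonneg (abs_nonneg α) (abs_nonneg β)]
  have hmb := abs_two_mul_mul_le (y := β) hb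
  have hl : |2 * a * α + 2 * b * β| ≤ 2 * w * s := by
    rw [hs]
    linarith [abs_add_le (2 * a * α) (2 * b * β), abs_two_mul_mul_le (y := α) ha]
  have hm : |2 * b * β| ≤ 2 * w * s := hmb.trans (by gcongr; linarith [abs_nonneg α])
  have numerator : (b + β) ^ 2 = b ^ 2 + 2 * b * β + β ^ 2 := by ring
  rw [hw2] at hQ₁ hQ₂
  rw [ratioTest, hv2, numerator]
  refine abs_div_sub_expansion_le hw hv (by positivity) hsv ?_ (hQ ▸ ratioTest_nonneg a b)
    (hQ ▸ ratioTest_le_one a b) hm hl (sq_nonneg β) (by linarith [sq_nonneg α]) (by positivity)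
    hr (by rw [hQ, ratioTest, hw2]) hQ₁ hQ₂
  rw [← hw2, ← hv2]
  ring

lemma taylorBound_ratioTest : TaylorBound ratioTest 64 := fun a b ↦ by
  set Q := ratioTest a b with hQ
  set D := 1 + a ^ 2 + b ^ 2
  refine ⟨-(Q * (2 * a)) / D, (2 * b - Q * (2 * b)) / D,
    (-Q - 2 * a * (-(Q * (2 * a)) / D)) / D,
    -(2 * b * (-(Q * (2 * a)) / D) + 2 * a * ((2 * b - Q * (2 * b)) / D)) / D,
    (1 - Q - 2 * b * ((2 * b - Q * (2 * b)) / D)) / D, fun α β ↦ ?_⟩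
  convert abs_ratioTest_sub_expansion_le (α := α) (β := β) hQ rfl rfl using 3
  ring

lemma TaylorBound.comp_mul {Φ : ℝ → ℝ → ℝ} {K ρ σ R : ℝ} (h : TaylorBound Φ K) (hρ : |ρ| ≤ R)
    (hσ : |σ| ≤ R) : TaylorBound (fun a b ↦ Φ (ρ * a) (σ * b)) (K * R ^ 3) := fun a b ↦ by
  have hK := h.nonneg
  obtain ⟨c₁, c₂, c₁₁, c₁₂, c₂₂, hc⟩ := h (ρ * a) (σ * b)
  refine ⟨c₁ * ρ, c₂ * σ, c₁₁ * ρ ^ 2, c₁₂ * (ρ * σ), c₂₂ * σ ^ 2, fun α β ↦ ?_⟩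
  have scaled : |ρ * α| + |σ * β| ≤ R * (|α| + |β|) := by
    rw [abs_mul, abs_mul, mul_add]
    gcongr
  calc _ = |Φ (ρ * a + ρ * α) (σ * b + σ * β) - (Φ (ρ * a) (σ * b) + c₁ * (ρ * α)
          + c₂ * (σ * β) + c₁₁ * (ρ * α) ^ 2 + c₁₂ * (ρ * α * (σ * β)) + c₂₂ * (σ * β) ^ 2)| := by
        ring_nf
    _ ≤ K * (|ρ * α| + |σ * β|) ^ 3 := hc _ _
    _ ≤ K * (R * (|α| + |β|)) ^ 3 := by gcongr
    _ = K * R ^ 3 * (|α| + |β|) ^ 3 := by ring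

end RatioTest

/-! ### Invariance of low-influence polynomials under rotations -/

section ThirdMoment

variable {κ : Type*} [Fintype κ] [DecidableEq κ] {d : ℕ}

lemma expect_abs_pow_three_le {f : (κ → Bool) → ℝ} (hf : f ∈ lowDegree κ d) {τ : ℝ} (hτ : 0 ≤ τ)
    (h : 𝔼 w, f w ^ 2 ≤ τ ^ 2) : 𝔼 w, |f w| ^ 3 ≤ 3 ^ d * τ * 𝔼 w, f w ^ 2 := by
  set V := 𝔼 w, f w ^ 2
  refine le_of_sq_le_sq ?_ (by positivity)
  calc (𝔼 w, |f w| ^ 3) ^ 2 = (𝔼 w, |f w| * f w ^ 2) ^ 2 := by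
        simp only [← sq_abs (f _), ← pow_succ']
    _ ≤ (𝔼 w, |f w| ^ 2) * 𝔼 w, (f w ^ 2) ^ 2 := expect_mul_sq_le_sq_mul_sq univ _ _
    _ = V * 𝔼 w, f w ^ 4 := by simp only [sq_abs, ← pow_mul, V]
    _ ≤ V * (9 ^ d * V ^ 2) := by gcongr; exact expect_pow_four_le hf
    _ = 9 ^ d * V ^ 2 * V := by ring
    _ ≤ 9 ^ d * V ^ 2 * τ ^ 2 := by gcongr
    _ = (3 ^ d * τ * V) ^ 2 := by
      rw [show (9 : ℝ) = 3 ^ 2 by norm_num, ← pow_mul, mul_comm 2 d, pow_mul]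
      ring

end ThirdMoment

lemma expect_sum_four_pow_three_le {Ω : Type*} [Fintype Ω] {f₁ f₂ f₃ f₄ : Ω → ℝ} {M : ℝ}
    (h₁ : 𝔼 w, |f₁ w| ^ 3 ≤ M) (h₂ : 𝔼 w, |f₂ w| ^ 3 ≤ M) (h₃ : 𝔼 w, |f₃ w| ^ 3 ≤ M)
    (h₄ : 𝔼 w, |f₄ w| ^ 3 ≤ M) : 𝔼 w, (|f₁ w| + |f₂ w| + |f₃ w| + |f₄ w|) ^ 3 ≤ 64 * M := by
  have pointwise (w : Ω) : (|f₁ w| + |f₂ w| + |f₃ w| + |f₄ w|) ^ 3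
      ≤ 16 * (|f₁ w| ^ 3 + |f₂ w| ^ 3 + |f₃ w| ^ 3 + |f₄ w| ^ 3) := by
    have h := add_pow_le (add_nonneg (abs_nonneg (f₁ w)) (abs_nonneg (f₂ w)))
      (add_nonneg (abs_nonneg (f₃ w)) (abs_nonneg (f₄ w))) 3
    have h₁₂ := add_pow_le (abs_nonneg (f₁ w)) (abs_nonneg (f₂ w)) 3
    have h₃₄ := add_pow_le (abs_nonneg (f₃ w)) (abs_nonneg (f₄ w)) 3
    norm_num at h h₁₂ h₃₄
    rw [add_assoc (|f₁ w| + |f₂ w|)]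
    linarith
  refine (expect_le_expect fun w _ ↦ pointwise w).trans ?_
  rw [← mul_expect, expect_add_distrib, expect_add_distrib, expect_add_distrib]
  linarith

section Invariance

variable {ι : Type*} {C S : ℝ}

lemma rotHybrid_fst_mem_lowDegree [DecidableEq ι] (C S : ℝ) (T : Finset ι) (i : ι) :
    (fun w ↦ (rotHybrid C S T w).1 i) ∈ lowDegree (ι × Bool) 1 := by
  by_cases hi : i ∈ T
  · simp only [rotHybrid, hi, if_true]
    exact add_mem (const_mul_mem_lowDegree _ (sgn_mem_lowDegree _))
      (const_mul_mem_lowDegree _ (sgn_mem_lowDegree _))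
  · simpa only [rotHybrid, hi, if_false] using sgn_mem_lowDegree _

lemma rotHybrid_snd_mem_lowDegree [DecidableEq ι] (C S : ℝ) (T : Finset ι) (i : ι) :
    (fun w ↦ (rotHybrid C S T w).2 i) ∈ lowDegree (ι × Bool) 1 := by
  by_cases hi : i ∈ T
  · simp only [rotHybrid, hi, if_true]
    exact add_mem (const_mul_mem_lowDegree _ (sgn_mem_lowDegree _))
      (const_mul_mem_lowDegree _ (sgn_mem_lowDegree _))
  · simpa only [rotHybrid, hi, if_false] using sgn_mem_lowDegree _

variable [Fintype ι] [DecidableEq ι]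

lemma expect_rotHybrid_empty (C S : ℝ) (f : (ι → ℝ) × (ι → ℝ) → ℝ) :
    𝔼 w, f (rotHybrid C S ∅ w)
      = 𝔼 u : ι → Bool, 𝔼 v : ι → Bool, f (point u, point v) := by
  let e : (ι × Bool → Bool) ≃ (ι → Bool) × (ι → Bool) :=
    ((Equiv.prodComm ι Bool).arrowCongr (.refl Bool)).trans
      ((Equiv.curry Bool ι Bool).trans (Equiv.boolArrowEquivProd (ι → Bool)))
  rw [← expect_prod, ← expect_comp_equiv e]
  refine expect_congr rfl fun w _ ↦ ?_
  simp only [rotHybrid, notMem_empty, if_false]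
  congr

lemma expect_sum_sgn_mul_sq (t : ι → ℝ) :
    𝔼 v : ι → Bool, (∑ j, sgn (v j) * t j) ^ 2 = ∑ j, t j ^ 2 := by
  simp only [sq, sum_mul_sum]
  rw [expect_sum_comm]
  refine sum_congr rfl fun j _ ↦ ?_
  rw [expect_sum_comm, sum_eq_single j _ (by simp)]
  · have h (v : ι → Bool) : sgn (v j) * t j * (sgn (v j) * t j) = t j * t j := by
      rw [mul_mul_mul_comm, sgn_mul_self, one_mul]
    simp only [h, Fintype.expect_const]
  · intro k _ hkj
    refine expect_eq_zero_of_odd k fun w ↦ ?_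
    rw [flipAt_self, flipAt_of_ne hkj.symm, sgn_not]
    ring

lemma expect_dirDeriv_sq (c : Finset ι → ℝ) (x : ι → ℝ) :
    𝔼 v, dirDeriv c x (point v) ^ 2 = ∑ j, mlEval (partialDeriv j c) x ^ 2 :=
  expect_sum_sgn_mul_sq _

/-- Along all the hybrids, `g` is a polynomial of degree at most `d` in the random bits, of second
moment at most `V`. -/
def HybridBounded (C S : ℝ) (d : ℕ) (V : ℝ) (g : (ι → ℝ) × (ι → ℝ) → ℝ) : Prop :=
  ∀ T : Finset ι, (fun w ↦ g (rotHybrid C S T w)) ∈ lowDegree (ι × Bool) d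
    ∧ 𝔼 w, g (rotHybrid C S T w) ^ 2 ≤ V

variable {d : ℕ} {V : ℝ} {c : Finset ι → ℝ}

lemma hybridBounded_zero (hV : 0 ≤ V) :
    HybridBounded C S d V (fun _ : (ι → ℝ) × (ι → ℝ) ↦ 0) :=
  fun _ ↦ ⟨const_mem_lowDegree 0 d, by simpa using hV⟩

lemma hybridBounded_mlEval_fst (hCS : C ^ 2 + S ^ 2 = 1) (hc : DegreeLE d c)
    (hV : normSq c ≤ V) : HybridBounded C S d V fun z ↦ mlEval c z.1 := fun T ↦ by
  refine ⟨mlEval_mem_lowDegree hc (rotHybrid_fst_mem_lowDegree C S T), ?_⟩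
  rw [expect_sq_rotHybrid hCS (fun i ↦ hasSlopes_mlEval_fst i c) T,
    expect_rotHybrid_empty C S fun z ↦ mlEval c z.1 ^ 2]
  simpa only [Fintype.expect_const, expect_mlEval_sq] using hV

lemma hybridBounded_mlEval_snd (hCS : C ^ 2 + S ^ 2 = 1) (hc : DegreeLE d c)
    (hV : normSq c ≤ V) : HybridBounded C S d V fun z ↦ mlEval c z.2 := fun T ↦ by
  refine ⟨mlEval_mem_lowDegree hc (rotHybrid_snd_mem_lowDegree C S T), ?_⟩
  rw [expect_sq_rotHybrid hCS (fun i ↦ hasSlopes_mlEval_snd i c) T,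
    expect_rotHybrid_empty C S fun z ↦ mlEval c z.2 ^ 2]
  simpa only [Fintype.expect_const, expect_mlEval_sq] using hV

lemma hybridBounded_dirDeriv (hCS : C ^ 2 + S ^ 2 = 1) (hc : DegreeLE d c)
    (hV : d * normSq c ≤ V) : HybridBounded C S d V fun z ↦ dirDeriv c z.1 z.2 := fun T ↦ by
  refine ⟨dirDeriv_mem_lowDegree hc (rotHybrid_fst_mem_lowDegree C S T)
    (rotHybrid_snd_mem_lowDegree C S T), ?_⟩
  rw [expect_sq_rotHybrid hCS (fun i ↦ hasSlopes_dirDeriv i c) T,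
    expect_rotHybrid_empty C S fun z ↦ dirDeriv c z.1 z.2 ^ 2]
  simp only [expect_dirDeriv_sq, expect_sum_comm, expect_mlEval_sq]
  refine (sum_normSq_partialDeriv_le hc).trans (le_trans ?_ hV)
  gcongr
  exact cubeVar_le_normSq c

lemma HybridBounded.expect_abs_pow_three_le {g : (ι → ℝ) × (ι → ℝ) → ℝ}
    (h : HybridBounded C S d V g) {τ : ℝ} (hτ : 0 ≤ τ) (hV : V ≤ τ ^ 2) (T : Finset ι) :
    𝔼 w, |g (rotHybrid C S T w)| ^ 3 ≤ 3 ^ d * τ * V :=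
  (BoolCube.expect_abs_pow_three_le (h T).1 hτ ((h T).2.trans hV)).trans <| by
    gcongr
    exact (h T).2

/-- The constant in the invariance principle for polynomials of degree `d`. -/
noncomputable def invarianceConst (d : ℕ) : ℝ := 1024 * 3 ^ d * (d + 1) ^ 2 * d

lemma invarianceConst_nonneg (d : ℕ) : 0 ≤ invarianceConst d := by
  rw [invarianceConst]
  positivity

variable {Φ : ℝ → ℝ → ℝ} {K θ : ℝ}

lemma abs_expect_rotHybrid_univ_sub_le {a b : (ι → ℝ) × (ι → ℝ) → ℝ}
    {a₁ a₂ b₁ b₂ : ι → (ι → ℝ) × (ι → ℝ) → ℝ} (hCS : C ^ 2 + S ^ 2 = 1) (hΦ : TaylorBound Φ K)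
    (hc : DegreeLE d c) (hθ : 0 ≤ θ) (hcθ : ∀ i, normSq (partialDeriv i c) ≤ θ ^ 2)
    (hvar : cubeVar c ≤ 1)
    (ha : ∀ i, HasSlopes i a (a₁ i) (a₂ i)) (hb : ∀ i, HasSlopes i b (b₁ i) (b₂ i))
    (ha₁ : ∀ i, HybridBounded C S d ((d + 1) * normSq (partialDeriv i c)) (a₁ i))
    (ha₂ : ∀ i, HybridBounded C S d ((d + 1) * normSq (partialDeriv i c)) (a₂ i))
    (hb₁ : ∀ i, HybridBounded C S d ((d + 1) * normSq (partialDeriv i c)) (b₁ i))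
    (hb₂ : ∀ i, HybridBounded C S d ((d + 1) * normSq (partialDeriv i c)) (b₂ i)) :
    |𝔼 w, Φ (a (rotHybrid C S univ w)) (b (rotHybrid C S univ w))
        - 𝔼 u, 𝔼 v, Φ (a (point u, point v)) (b (point u, point v))|
      ≤ K * invarianceConst d * θ := by
  have hK := hΦ.nonneg
  have hτ : (0 : ℝ) ≤ (d + 1) * θ := by positivity
  have hV (i : ι) : (d + 1) * normSq (partialDeriv i c) ≤ ((d + 1) * θ) ^ 2 := by
    rw [mul_pow, sq ((d : ℝ) + 1), mul_assoc]
    gcongr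
    exact (hcθ i).trans (le_mul_of_one_le_left (sq_nonneg θ) (by norm_num))
  rw [← expect_rotHybrid_empty C S fun z ↦ Φ (a z) (b z)]
  refine (abs_expect_rotHybrid_sub_le hCS hΦ ha hb (fun i T ↦ expect_sum_four_pow_three_le
    ((ha₁ i).expect_abs_pow_three_le hτ (hV i) T) ((ha₂ i).expect_abs_pow_three_le hτ (hV i) T)
    ((hb₁ i).expect_abs_pow_three_le hτ (hV i) T)
    ((hb₂ i).expect_abs_pow_three_le hτ (hV i) T)) univ).trans ?_
  have total : ∑ i, normSq (partialDeriv i c) ≤ d * 1 :=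
    (sum_normSq_partialDeriv_le hc).trans (by gcongr)
  rw [← mul_sum, ← mul_sum, ← mul_sum]
  calc _ ≤ 16 * K * (64 * (3 ^ d * ((d + 1) * θ) * ((d + 1) * (d * 1)))) := by gcongr
    _ = K * invarianceConst d * θ := by rw [invarianceConst]; ring

lemma abs_expect_rotation_pair_sub_le (hCS : C ^ 2 + S ^ 2 = 1) (hΦ : TaylorBound Φ K)
    (hc : DegreeLE d c) (hθ : 0 ≤ θ) (hcθ : ∀ i, normSq (partialDeriv i c) ≤ θ ^ 2)
    (hvar : cubeVar c ≤ 1) :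
    |𝔼 w, Φ (mlEval c (rotHybrid C S univ w).1) (mlEval c (rotHybrid C S univ w).2)
        - 𝔼 u, 𝔼 v, Φ (mlEval c (point u)) (mlEval c (point v))| ≤ K * invarianceConst d * θ := by
  have hn (i : ι) := normSq_nonneg (partialDeriv i c)
  have hd (i : ι) : normSq (partialDeriv i c) ≤ (d + 1) * normSq (partialDeriv i c) :=
    le_mul_of_one_le_left (hn i) (by norm_num)
  have hz (i : ι) : HybridBounded C S d ((d + 1) * normSq (partialDeriv i c))
    (fun _ : (ι → ℝ) × (ι → ℝ) ↦ 0) := hybridBounded_zero (mul_nonneg (by positivity) (hn i))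
  have hdeg (i : ι) := (hc.partialDeriv i).mono (Nat.sub_le d 1)
  exact abs_expect_rotHybrid_univ_sub_le (a := fun z ↦ mlEval c z.1) (b := fun z ↦ mlEval c z.2)
    hCS hΦ hc hθ hcθ hvar (fun i ↦ hasSlopes_mlEval_fst i c) (fun i ↦ hasSlopes_mlEval_snd i c)
    (fun i ↦ hybridBounded_mlEval_fst hCS (hdeg i) (hd i)) hz
    hz (fun i ↦ hybridBounded_mlEval_snd hCS (hdeg i) (hd i))

lemma abs_expect_rotation_dirDeriv_sub_le (hCS : C ^ 2 + S ^ 2 = 1) (hΦ : TaylorBound Φ K)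
    (hc : DegreeLE d c) (hθ : 0 ≤ θ) (hcθ : ∀ i, normSq (partialDeriv i c) ≤ θ ^ 2)
    (hvar : cubeVar c ≤ 1) :
    |𝔼 w, Φ (mlEval c (rotHybrid C S univ w).1)
          (dirDeriv c (rotHybrid C S univ w).1 (rotHybrid C S univ w).2)
        - 𝔼 u, 𝔼 v, Φ (mlEval c (point u)) (dirDeriv c (point u) (point v))|
      ≤ K * invarianceConst d * θ := by
  have hn (i : ι) := normSq_nonneg (partialDeriv i c)
  have hd (i : ι) : normSq (partialDeriv i c) ≤ (d + 1) * normSq (partialDeriv i c) :=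
    le_mul_of_one_le_left (hn i) (by norm_num)
  have hd' (i : ι) : d * normSq (partialDeriv i c) ≤ (d + 1) * normSq (partialDeriv i c) := by
    linarith [hn i]
  have hdeg (i : ι) := (hc.partialDeriv i).mono (Nat.sub_le d 1)
  have hfst (i : ι) := hybridBounded_mlEval_fst hCS (hdeg i) (hd i)
  exact abs_expect_rotHybrid_univ_sub_le (a := fun z ↦ mlEval c z.1)
    (b := fun z ↦ dirDeriv c z.1 z.2) hCS hΦ hc hθ hcθ hvar
    (fun i ↦ hasSlopes_mlEval_fst i c) (fun i ↦ hasSlopes_dirDeriv i c) hfst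
    (fun i ↦ hybridBounded_zero (mul_nonneg (by positivity) (hn i)))
    (fun i ↦ hybridBounded_dirDeriv hCS (hdeg i) (hd' i)) hfst

end Invariance

/-! ### Polynomials far from their roots -/

section Roots

variable {K : Type*} [NormedField K] {R : Polynomial K} {z : K} {r : ℝ}

lemma norm_eval_le_of_le_norm_sub_roots (hR : R.Splits) (hr : 0 < r)
    (h : ∀ a ∈ R.roots, r ≤ ‖z - a‖) (w : K) :
    ‖R.eval w‖ ≤ (1 + ‖w - z‖ / r) ^ R.natDegree * ‖R.eval z‖ := by
  have norm_eval (x : K) :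
      ‖R.eval x‖ = ‖R.leadingCoeff‖ * (R.roots.map fun a ↦ ‖x - a‖).prod := by
    rw [hR.eval_eq_prod_roots, norm_mul, ← coe_nnnorm (Multiset.prod _)]
    congr 1
    rw [coe_nnnorm, ← normHom_apply, map_multiset_prod, Multiset.map_map]
    rfl
  have factor (a : K) (ha : a ∈ R.roots) : ‖w - a‖ ≤ (1 + ‖w - z‖ / r) * ‖z - a‖ := by
    have : ‖w - z‖ ≤ ‖w - z‖ / r * ‖z - a‖ := by
      rw [div_mul_eq_mul_div, le_div_iff₀ hr]
      gcongr
      exact h a ha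
    linarith [norm_sub_le_norm_sub_add_norm_sub w z a]
  rw [norm_eval, norm_eval, mul_left_comm]
  gcongr
  refine (Multiset.prod_map_le_prod_map₀ _ _ (fun _ _ ↦ norm_nonneg _) factor).trans_eq ?_
  rw [Multiset.prod_map_mul, Multiset.map_const', Multiset.prod_replicate,
    ← hR.natDegree_eq_card_roots]

lemma norm_eval_derivative_le_of_le_norm_sub_roots (hR : R.Splits) (hr : 0 < r)
    (h : ∀ a ∈ R.roots, r ≤ ‖z - a‖) :
    ‖R.derivative.eval z‖ ≤ R.natDegree / r * ‖R.eval z‖ := by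
  rcases eq_or_ne R 0 with rfl | hR₀
  · simp
  have hz : R.eval z ≠ 0 := fun hz ↦ by
    have := h z (Polynomial.mem_roots hR₀ |>.2 hz)
    rw [sub_self, norm_zero] at this
    exact hr.not_ge this
  rw [hR.eval_derivative_eq_eval_mul_sum hz, norm_mul, mul_comm]
  gcongr
  refine (norm_multiset_sum_le _).trans ((Multiset.sum_le_card_nsmul _ r⁻¹ ?_).trans_eq ?_)
  · simp only [Multiset.mem_map, exists_exists_and_eq_and]
    rintro _ ⟨a, ha, rfl⟩
    rw [norm_div, norm_one, one_div]
    exact inv_anti₀ hr (h a ha)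
  · rw [Multiset.card_map, Multiset.card_map, ← hR.natDegree_eq_card_roots, nsmul_eq_mul,
      div_eq_mul_inv]

end Roots

/-! ### Counting bad angles -/

lemma card_filter_abs_sub_lt_le (N : ℕ) (A : ℝ) {B : ℝ} (hB : 0 ≤ B) :
    (#{k : Fin N | |(k : ℝ) - A| < B} : ℝ) ≤ 2 * B + 1 := by
  have image_subset : ({k : Fin N | |(k : ℝ) - A| < B} : Finset (Fin N)).image
      (fun k : Fin N ↦ (k : ℤ)) ⊆ Ioo ⌊A - B⌋ ⌈A + B⌉ := fun x hx ↦ by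
    obtain ⟨k, hk, rfl⟩ := mem_image.1 hx
    rw [mem_filter_univ, abs_lt] at hk
    rw [mem_Ioo, Int.floor_lt, Int.lt_ceil, Int.cast_natCast]
    constructor <;> linarith
  have hcard := card_le_card image_subset
  rw [card_image_of_injective _ fun k l hkl ↦ Fin.ext (by exact_mod_cast hkl),
    Int.card_Ioo] at hcard
  have hle : ((⌈A + B⌉ - ⌊A - B⌋ - 1 : ℤ) : ℝ) ≤ 2 * B + 1 := by
    push_cast
    linarith [Int.ceil_lt_add_one (A + B), Int.sub_one_lt_floor (A - B)]
  have hmax : ((⌈A + B⌉ - ⌊A - B⌋ - 1).toNat : ℝ) ≤ 2 * B + 1 := by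
    rcases le_total 0 (⌈A + B⌉ - ⌊A - B⌋ - 1) with h | h
    · rwa [← Int.cast_natCast, Int.toNat_of_nonneg h]
    · rw [Int.toNat_of_nonpos h, Nat.cast_zero]
      positivity
  exact (Nat.cast_le.2 hcard).trans hmax

lemma prob_abs_div_sub_lt_le {N : ℕ} {r : ℝ} (hr : 0 < r) (hN : 1 ≤ N * r) (A : ℝ) :
    prob (fun k : Fin N ↦ |(k : ℝ) / N - A| < r) ≤ 3 * r := by
  have hN₀ : (0 : ℝ) < N := pos_of_mul_pos_left (zero_lt_one.trans_le hN) hr.le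
  have scale (k : Fin N) : |(k : ℝ) / N - A| < r ↔ |(k : ℝ) - N * A| < N * r := by
    rw [show (k : ℝ) - N * A = N * (k / N - A) by field_simp, abs_mul, abs_of_pos hN₀,
      mul_lt_mul_iff_right₀ hN₀]
  classical
  simp only [prob, ind, scale]
  rw [Fintype.expect_eq_sum_div_card, sum_boole, Fintype.card_fin, div_le_iff₀ hN₀]
  have := card_filter_abs_sub_lt_le N (N * A) (by positivity : 0 ≤ N * r)
  convert this.trans _
  linarith

lemma prob_exists_mem_multiset_le {Ω κ : Type*} [Fintype Ω] (s : Multiset κ) {P : κ → Ω → Prop}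
    {b : ℝ} (h : ∀ a ∈ s, prob (P a) ≤ b) : prob (fun w ↦ ∃ a ∈ s, P a w) ≤ s.card * b := by
  induction s using Multiset.induction_on with
  | empty => simp [prob, ind]
  | cons a s ih =>
    simp only [Multiset.mem_cons, exists_eq_or_imp, Multiset.card_cons, Nat.cast_succ,
      forall_eq_or_imp] at h ⊢
    linarith [prob_or_le (P a) fun w ↦ ∃ a ∈ s, P a w, ih h.2, h.1]

section Circle

open Complex (exp I)

variable {ι : Type*}

/-- The rotation by the angle `θ` of the pair `(u, v)` of vectors. -/
noncomputable def rotate (θ : ℝ) (u v : ι → ℝ) : (ι → ℝ) × (ι → ℝ) :=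
  (Real.cos θ • u + Real.sin θ • v, -Real.sin θ • u + Real.cos θ • v)

lemma rotate_snd_eq_rotate_add_pi_div_two (θ : ℝ) (u v : ι → ℝ) :
    (rotate θ u v).2 = (rotate (θ + Real.pi / 2) u v).1 := by
  rw [rotate, rotate, Real.cos_add_pi_div_two, Real.sin_add_pi_div_two]

lemma hasDerivAt_rotate_fst (u v : ι → ℝ) (θ : ℝ) (i : ι) :
    HasDerivAt (fun s ↦ (rotate s u v).1 i) ((rotate θ u v).2 i) θ :=
  ((Real.hasDerivAt_cos θ).mul_const (u i)).add ((Real.hasDerivAt_sin θ).mul_const (v i))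

lemma exp_mul_rotate_fst (θ : ℝ) (u v : ι → ℝ) (i : ι) :
    exp (θ * I) * ((rotate θ u v).1 i : ℂ)
      = (exp (θ * I) ^ 2 + 1) / 2 * u i + (1 - exp (θ * I) ^ 2) * I / 2 * v i := by
  have hcs : (Real.cos θ : ℂ) ^ 2 + (Real.sin θ : ℂ) ^ 2 = 1 := by
    exact_mod_cast Real.cos_sq_add_sin_sq θ
  simp only [rotate, Pi.add_apply, Pi.smul_apply, smul_eq_mul, Complex.ofReal_add,
    Complex.ofReal_mul]
  rw [Complex.exp_mul_I, ← Complex.ofReal_cos, ← Complex.ofReal_sin]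
  linear_combination ((u i : ℂ) / 2 + I / 2 * v i) * hcs
    - (Real.sin θ ^ 2 * u i / 2 : ℂ) * Complex.I_sq
    + (v i * Real.sin θ ^ 2 * I / 2 + v i * Real.sin θ * Real.cos θ : ℂ) * Complex.I_sq

variable [Fintype ι]

lemma exists_polynomial_eval_exp_eq {d : ℕ} {c : Finset ι → ℝ} (hc : DegreeLE d c)
    (u v : ι → ℝ) : ∃ R : Polynomial ℂ, R.natDegree ≤ 2 * d ∧
      ∀ θ : ℝ, R.eval (exp (θ * I)) = exp (θ * I) ^ d * mlEval c (rotate θ u v).1 := by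
  open Polynomial in
  let L (i : ι) : ℂ[X] := C (u i / 2 : ℂ) * (X ^ 2 + 1) + C (v i * I / 2) * (1 - X ^ 2)
  have hL (i : ι) : (L i).natDegree ≤ 2 := by
    simp only [L]
    compute_degree
  have eval_L (θ : ℝ) (i : ι) :
      (L i).eval (exp (θ * I)) = exp (θ * I) * ((rotate θ u v).1 i : ℂ) := by
    rw [exp_mul_rotate_fst]
    simp only [L, Polynomial.eval_add, Polynomial.eval_mul, Polynomial.eval_C,
      Polynomial.eval_sub, Polynomial.eval_pow, Polynomial.eval_X, Polynomial.eval_one]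
    ring
  refine ⟨∑ S with #S ≤ d, Polynomial.C (c S : ℂ) * ((∏ i ∈ S, L i) * Polynomial.X ^ (d - #S)),
    Polynomial.natDegree_sum_le_of_forall_le _ _ fun S hS ↦ ?_, fun θ ↦ ?_⟩
  · have hprod : (∏ i ∈ S, L i).natDegree ≤ #S * 2 :=
      (Polynomial.natDegree_prod_le _ _).trans (sum_le_card_nsmul _ _ 2 fun i _ ↦ hL i)
    have hS : #S ≤ d := (mem_filter.1 hS).2
    have := (Polynomial.natDegree_C_mul_le (c S : ℂ) _).trans
      (Polynomial.natDegree_mul_le (p := ∏ i ∈ S, L i) (q := Polynomial.X ^ (d - #S)))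
    rw [Polynomial.natDegree_X_pow] at this
    omega
  · rw [Polynomial.eval_finsetSum, mlEval, Complex.ofReal_sum, mul_sum, sum_filter]
    refine sum_congr rfl fun S _ ↦ ?_
    split_ifs with hS
    · rw [Polynomial.eval_C_mul, Polynomial.eval_mul, Polynomial.eval_prod,
        Polynomial.eval_X_pow, Complex.ofReal_mul, Complex.ofReal_prod]
      simp only [eval_L]
      rw [prod_mul_distrib, prod_const, ← pow_mul_pow_sub _ hS]
      ring
    · rw [hc S (not_le.1 hS), Complex.ofReal_mul, Complex.ofReal_zero, zero_mul, mul_zero]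

variable [DecidableEq ι]

lemma mlEval_partialDeriv (j : ι) (c : Finset ι → ℝ) (x : ι → ℝ) :
    mlEval (partialDeriv j c) x = ∑ S with j ∈ S, c S * ∏ i ∈ S.erase j, x i := by
  have h (S : Finset ι) : partialDeriv j c S * ∏ i ∈ S, x i
      = if j ∉ S then c (insert j S) * ∏ i ∈ S, x i else 0 := by
    by_cases h : j ∈ S <;> simp [partialDeriv, h]
  simp only [mlEval, h]
  rw [← sum_filter]
  refine sum_nbij' (insert j) (fun S ↦ S.erase j) (by simp) (by simp) ?_ ?_ ?_
  · exact fun S hS ↦ erase_insert (mem_filter.1 hS).2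
  · exact fun S hS ↦ insert_erase (mem_filter.1 hS).2
  · exact fun S hS ↦ by rw [erase_insert (mem_filter.1 hS).2]

lemma hasDerivAt_mlEval (c : Finset ι → ℝ) {x : ℝ → ι → ℝ} {x' : ι → ℝ} {t : ℝ}
    (hx : ∀ i, HasDerivAt (fun s ↦ x s i) (x' i) t) :
    HasDerivAt (fun s ↦ mlEval c (x s)) (dirDeriv c (x t) x') t := by
  refine (HasDerivAt.fun_sum fun S _ ↦
    (HasDerivAt.fun_finsetProd fun i _ ↦ hx i).const_mul (c S)).congr_deriv ?_
  simp only [dirDeriv, mlEval_partialDeriv, mul_sum, sum_filter]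
  rw [sum_comm]
  refine sum_congr rfl fun S _ ↦ ?_
  simp only [mul_ite, mul_zero, smul_eq_mul]
  rw [← sum_filter, filter_univ_mem]
  exact sum_congr rfl fun j _ ↦ by ring

lemma hasDerivAt_mlEval_rotate (c : Finset ι → ℝ) (u v : ι → ℝ) (θ : ℝ) :
    HasDerivAt (fun s ↦ mlEval c (rotate s u v).1)
      (dirDeriv c (rotate θ u v).1 (rotate θ u v).2) θ :=
  hasDerivAt_mlEval c fun i ↦ hasDerivAt_rotate_fst u v θ i

lemma abs_dirDeriv_rotate_le {d : ℕ} {c : Finset ι → ℝ} {u v : ι → ℝ} {R : Polynomial ℂ}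
    (hR : ∀ θ : ℝ, R.eval (exp (θ * I)) = exp (θ * I) ^ d * mlEval c (rotate θ u v).1) (θ : ℝ) :
    |dirDeriv c (rotate θ u v).1 (rotate θ u v).2|
      ≤ ‖R.derivative.eval (exp (θ * I))‖ + d * |mlEval c (rotate θ u v).1| := by
  have hexp : HasDerivAt (fun s : ℝ ↦ exp (s * I)) (exp (θ * I) * I) θ := by
    simpa using ((hasDerivAt_id (θ : ℂ)).mul_const I).cexp.comp_ofReal
  have deriv_left := (R.hasDerivAt (exp (θ * I))).comp θ hexp
  have deriv_right := (hexp.fun_pow d).fun_mul (hasDerivAt_mlEval_rotate c u v θ).ofReal_comp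
  have heq := deriv_left.unique (deriv_right.congr_of_eventuallyEq (.of_forall hR))
  have norm_exp : ‖exp (θ * I)‖ = 1 := Complex.norm_exp_ofReal_mul_I θ
  calc |dirDeriv c (rotate θ u v).1 (rotate θ u v).2|
      = ‖exp (θ * I) ^ d * dirDeriv c (rotate θ u v).1 (rotate θ u v).2‖ := by
        rw [norm_mul, norm_pow, norm_exp, one_pow, one_mul, Complex.norm_real, Real.norm_eq_abs]
    _ = ‖R.derivative.eval (exp (θ * I)) * (exp (θ * I) * I)
          - d * exp (θ * I) ^ (d - 1) * (exp (θ * I) * I) * mlEval c (rotate θ u v).1‖ := by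
        rw [heq, add_sub_cancel_left]
    _ ≤ _ := (norm_sub_le _ _).trans_eq (by simp [norm_exp])

/-- At the angle `θ`, the values of the polynomial and of its derivative along the circle are
controlled, at scale `r`, by its value: this holds for all `θ` away from the roots of the
polynomial on the circle through `u` and `v`. -/
def IsTameAngle (d : ℕ) (c : Finset ι → ℝ) (u v : ι → ℝ) (r θ : ℝ) : Prop :=
  |mlEval c (rotate θ u v).2| ≤ (9 / r ^ 2) ^ d * |mlEval c (rotate θ u v).1| ∧
    |dirDeriv c (rotate θ u v).1 (rotate θ u v).2| ≤ 3 * d / r * |mlEval c (rotate θ u v).1|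

lemma isTameAngle_of_le_norm_sub_roots {d : ℕ} {c : Finset ι → ℝ} {u v : ι → ℝ} {r θ : ℝ}
    (hr : 0 < r) (hr₁ : r ≤ 1) {R : Polynomial ℂ} (hdeg : R.natDegree ≤ 2 * d)
    (hR : ∀ θ : ℝ, R.eval (exp (θ * I)) = exp (θ * I) ^ d * mlEval c (rotate θ u v).1)
    (h : ∀ a ∈ R.roots, r ≤ ‖exp (θ * I) - a‖) : IsTameAngle d c u v r θ := by
  have hsplits : R.Splits := IsAlgClosed.splits R
  have norm_eval (s : ℝ) : ‖R.eval (exp (s * I))‖ = |mlEval c (rotate s u v).1| := by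
    rw [hR, norm_mul, norm_pow, Complex.norm_exp_ofReal_mul_I, one_pow, one_mul,
      Complex.norm_real, Real.norm_eq_abs]
  constructor
  · have growth := norm_eval_le_of_le_norm_sub_roots hsplits hr h
      (exp ((θ + Real.pi / 2 : ℝ) * I))
    rw [norm_eval, norm_eval, ← rotate_snd_eq_rotate_add_pi_div_two] at growth
    have dist_le : ‖exp ((θ + Real.pi / 2 : ℝ) * I) - exp (θ * I)‖ ≤ 2 :=
      (norm_sub_le _ _).trans_eq (by
        rw [Complex.norm_exp_ofReal_mul_I, Complex.norm_exp_ofReal_mul_I, one_add_one_eq_two])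
    refine growth.trans (mul_le_mul_of_nonneg_right ?_ (abs_nonneg _))
    calc _ ≤ (1 / r + 2 / r) ^ R.natDegree := by
          gcongr
          exact one_le_one_div hr hr₁
      _ ≤ (1 / r + 2 / r) ^ (2 * d) :=
        pow_le_pow_right₀ (by rw [← add_div, le_div_iff₀ hr]; linarith) hdeg
      _ = (9 / r ^ 2) ^ d := by rw [pow_mul]; congr 1; field_simp; norm_num
  · have slope := norm_eval_derivative_le_of_le_norm_sub_roots hsplits hr h
    rw [norm_eval] at slope
    refine (abs_dirDeriv_rotate_le hR θ).trans ?_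
    have hdeg' : (R.natDegree : ℝ) ≤ 2 * d := by exact_mod_cast hdeg
    calc _ ≤ 2 * d / r * |mlEval c (rotate θ u v).1| + d / r * |mlEval c (rotate θ u v).1| := by
          gcongr
          · exact slope.trans (by gcongr)
          · exact le_div_self (by positivity) hr hr₁
      _ = _ := by ring

lemma prob_not_isTameAngle_le {d : ℕ} {c : Finset ι → ℝ} (hc : DegreeLE d c) (u v : ι → ℝ)
    {r : ℝ} (hr : 0 < r) (hr₁ : r ≤ 1) {N : ℕ} (hN : 1 ≤ N * r) :
    prob (fun k : Fin N ↦ ¬IsTameAngle d c u v r (Real.arcsin (k / N))) ≤ 6 * d * r := by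
  obtain ⟨R, hdeg, hR⟩ := exists_polynomial_eval_exp_eq hc u v
  have near_root (k : Fin N) (hk : ¬IsTameAngle d c u v r (Real.arcsin (k / N))) :
      ∃ a ∈ R.roots, |(k : ℝ) / N - a.im| < r := by
    by_contra! hfar
    refine hk (isTameAngle_of_le_norm_sub_roots hr hr₁ hdeg hR fun a ha ↦ (hfar a ha).trans ?_)
    have hk₁ : (k : ℝ) / N ≤ 1 := div_le_one_of_le₀ (by exact_mod_cast k.2.le) (by positivity)
    have him : (exp (Real.arcsin (k / N) * I) - a).im = k / N - a.im := by
      rw [Complex.sub_im, Complex.exp_ofReal_mul_I_im,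
        Real.sin_arcsin (by linarith [show (0 : ℝ) ≤ k / N by positivity]) hk₁]
    rw [← him]
    exact Complex.abs_im_le_norm _
  refine (prob_mono near_root).trans ((prob_exists_mem_multiset_le _ fun a _ ↦
    prob_abs_div_sub_lt_le hr hN a.im).trans ?_)
  have : (R.roots.card : ℝ) ≤ 2 * d := by exact_mod_cast (Polynomial.card_roots' R).trans hdeg
  nlinarith

end Circle

/-! ### Anticoncentration -/

section Anticoncentration

variable {ι : Type*} [Fintype ι] [DecidableEq ι] {d : ℕ} {c : Finset ι → ℝ} {r : ℝ}

lemma rotHybrid_cos_sin_univ (θ : ℝ) (w : ι × Bool → Bool) :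
    rotHybrid (Real.cos θ) (Real.sin θ) univ w
      = rotate θ (point fun j ↦ w (j, false)) (point fun j ↦ w (j, true)) := by
  simp only [rotHybrid, rotate, mem_univ, if_true]
  rfl

/-- Averaging over an angle `θ` shows that a quantity which is small at all tame angles is small in
expectation at some angle. -/
lemma exists_expect_rotHybrid_le (hc : DegreeLE d c) (hr : 0 < r) (hr₁ : r ≤ 1)
    {g : (ι → ℝ) × (ι → ℝ) → ℝ} (hg : ∀ z, g z ≤ 1) {b : ℝ} (hb : 0 ≤ b)
    (hgb : ∀ u v θ, IsTameAngle d c u v r θ → g (rotate θ u v) ≤ b) :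
    ∃ θ, 𝔼 w, g (rotHybrid (Real.cos θ) (Real.sin θ) univ w) ≤ 6 * d * r + b := by
  obtain ⟨N, hN⟩ := exists_nat_ge (1 / r)
  rw [div_le_iff₀ hr] at hN
  have : NeZero N := ⟨by rintro rfl; norm_num at hN⟩
  have pointwise (u v : ι → ℝ) :
      𝔼 k : Fin N, g (rotate (Real.arcsin (k / N)) u v) ≤ 6 * d * r + b := by
    have split (k : Fin N) : g (rotate (Real.arcsin (k / N)) u v)
        ≤ ind (¬IsTameAngle d c u v r (Real.arcsin (k / N))) + b := by
      by_cases hk : IsTameAngle d c u v r (Real.arcsin (k / N))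
      · rw [ind_of_not (not_not.2 hk), zero_add]
        exact hgb u v _ hk
      · rw [ind_of hk]
        linarith [hg (rotate (Real.arcsin (k / N)) u v)]
    refine (expect_le_expect fun k _ ↦ split k).trans ?_
    rw [expect_add_distrib, Fintype.expect_const]
    gcongr
    exact prob_not_isTameAngle_le hc u v hr hr₁ hN
  have average : 𝔼 k : Fin N, 𝔼 w : ι × Bool → Bool, g (rotHybrid (Real.cos (Real.arcsin (k / N)))
      (Real.sin (Real.arcsin (k / N))) univ w) ≤ 6 * d * r + b := by
    rw [expect_comm]
    simp only [rotHybrid_cos_sin_univ]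
    exact expect_le univ_nonempty fun w _ ↦ pointwise _ _
  obtain ⟨k, -, hk⟩ := exists_le_of_expect_le univ_nonempty average
  exact ⟨_, hk⟩

variable (hc : DegreeLE d c) (hr : 0 < r) (hr₁ : r ≤ 1)
  (hinf : ∀ i, normSq (partialDeriv i c) ≤ (r ^ (6 * d + 7)) ^ 2)

include hc hr hr₁ hinf

lemma expect_ratioTest_mlEval_le (hvar : cubeVar c ≤ 1) :
    𝔼 u, 𝔼 v, ratioTest ((r ^ (2 * d + 1))⁻¹ * mlEval c (point u)) (1 * mlEval c (point v))
      ≤ (6 * d + 81 ^ d + 64 * invarianceConst d) * r := by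
  set ρ := r ^ (2 * d + 1) with hρ
  have hρ₀ : 0 < ρ := by positivity
  obtain ⟨θ, hθ⟩ := exists_expect_rotHybrid_le hc hr hr₁
    (g := fun z ↦ ratioTest (ρ⁻¹ * mlEval c z.1) (1 * mlEval c z.2))
    (fun z ↦ ratioTest_le_one _ _) (b := 81 ^ d * r ^ 2) (by positivity) fun u v θ h ↦ by
      refine ratioTest_le (by positivity) ?_
      rw [one_mul]
      calc _ ≤ ((9 / r ^ 2) ^ d * |mlEval c (rotate θ u v).1|) ^ 2 := by
            rw [← sq_abs (mlEval c _)]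
            gcongr
            exact h.1
        _ = 81 ^ d * r ^ 2 * (ρ⁻¹ * mlEval c (rotate θ u v).1) ^ 2 := by
            rw [mul_pow, sq_abs, mul_pow, ← pow_mul, mul_comm d 2, pow_mul, div_pow, hρ,
              show (81 : ℝ) = 9 ^ 2 by norm_num, div_pow]
            field_simp
            ring
  have invariance := abs_expect_rotation_pair_sub_le (Real.cos_sq_add_sin_sq θ)
    (taylorBound_ratioTest.comp_mul (ρ := ρ⁻¹) (σ := 1) (R := ρ⁻¹)
      (abs_of_pos (inv_pos.2 hρ₀)).le
      (abs_one.trans_le ((one_le_inv₀ hρ₀).2 (pow_le_one₀ hr.le hr₁)))) hc (by positivity) hinf hvar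
  have herr : 64 * ρ⁻¹ ^ 3 * invarianceConst d * r ^ (6 * d + 7) ≤ 64 * invarianceConst d * r := by
    have : ρ⁻¹ ^ 3 * r ^ (6 * d + 7) ≤ r := by
      rw [inv_pow, inv_mul_le_iff₀ (by positivity), hρ, ← pow_mul, ← pow_succ]
      exact pow_le_pow_of_le_one hr.le hr₁ (by lia)
    nlinarith [mul_le_mul_of_nonneg_left this (invarianceConst_nonneg d)]
  have hr₂ : (81 : ℝ) ^ d * r ^ 2 ≤ 81 ^ d * r := by
    gcongr
    exact pow_le_of_le_one hr.le hr₁ two_ne_zero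
  linarith [(abs_le.1 invariance).1]

lemma expect_ratioTest_dirDeriv_le (hvar : cubeVar c ≤ 1) :
    𝔼 u, 𝔼 v, ratioTest ((r ^ (2 * d + 2))⁻¹ * mlEval c (point u))
        (r ^ 2 * (r ^ (2 * d + 2))⁻¹ * dirDeriv c (point u) (point v))
      ≤ (6 * d + 9 * d ^ 2 + 64 * invarianceConst d) * r := by
  set ρ := r ^ (2 * d + 2) with hρ
  have hρ₀ : 0 < ρ := by positivity
  have hr₂ : r ^ 2 ≤ r := pow_le_of_le_one hr.le hr₁ two_ne_zero
  obtain ⟨θ, hθ⟩ := exists_expect_rotHybrid_le hc hr hr₁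
    (g := fun z ↦ ratioTest (ρ⁻¹ * mlEval c z.1) (r ^ 2 * ρ⁻¹ * dirDeriv c z.1 z.2))
    (fun z ↦ ratioTest_le_one _ _) (b := 9 * d ^ 2 * r ^ 2) (by positivity) fun u v θ h ↦ by
      refine ratioTest_le (by positivity) ?_
      calc _ ≤ (r ^ 2 * ρ⁻¹ * (3 * d / r * |mlEval c (rotate θ u v).1|)) ^ 2 := by
            rw [← sq_abs, abs_mul, abs_of_pos (by positivity : 0 < r ^ 2 * ρ⁻¹)]
            gcongr
            exact h.2
        _ = 9 * d ^ 2 * r ^ 2 * (ρ⁻¹ * mlEval c (rotate θ u v).1) ^ 2 := by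
            rw [mul_pow, mul_pow _ |_|, sq_abs]
            field_simp
            ring
  have invariance := abs_expect_rotation_dirDeriv_sub_le (Real.cos_sq_add_sin_sq θ)
    (taylorBound_ratioTest.comp_mul (ρ := ρ⁻¹) (σ := r ^ 2 * ρ⁻¹) (R := ρ⁻¹)
      (abs_of_pos (inv_pos.2 hρ₀)).le
      ((abs_of_pos (by positivity)).trans_le
        (mul_le_of_le_one_left (by positivity) (hr₂.trans hr₁)))) hc (by positivity) hinf hvar
  have herr : 64 * ρ⁻¹ ^ 3 * invarianceConst d * r ^ (6 * d + 7) = 64 * invarianceConst d * r := by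
    rw [hρ]
    field_simp
    ring
  have : 9 * (d : ℝ) ^ 2 * r ^ 2 ≤ 9 * d ^ 2 * r := by gcongr
  linarith [(abs_le.1 invariance).1]

omit hr hr₁ hinf

lemma one_div_le_prob_half_le_mlEval_sq (hvar : 1 ≤ cubeVar c) :
    1 / (4 * 9 ^ d) ≤ prob fun v : ι → Bool ↦ 1 / 2 ≤ mlEval c (point v) ^ 2 := by
  refine one_div_le_prob_half_le (by positivity) one_pos ?_ ?_
  · rw [expect_mlEval_sq]
    exact hvar.trans (cubeVar_le_normSq c)
  · simpa only [← pow_mul, expect_mlEval_sq] using expect_mlEval_pow_four_le hc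

omit hc

lemma one_div_le_prob_half_le_dirDeriv_sq (c : Finset ι → ℝ) (x : ι → ℝ) :
    1 / 36 ≤ prob fun v : ι → Bool ↦
      (∑ j, mlEval (partialDeriv j c) x ^ 2) / 2 ≤ dirDeriv c x (point v) ^ 2 := by
  rcases (sum_nonneg fun j _ ↦ sq_nonneg (mlEval (partialDeriv j c) x)).eq_or_lt with h | h
  · have (v : ι → Bool) : ind ((0 : ℝ) / 2 ≤ dirDeriv c x (point v) ^ 2) = 1 :=
      ind_of (by rw [zero_div]; positivity)
    rw [← h]
    simp only [prob, this, Fintype.expect_const]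
    norm_num
  · have linear : (fun v : ι → Bool ↦ dirDeriv c x (point v)) ∈ lowDegree ι 1 :=
      sum_mem_lowDegree fun j _ ↦ by
        simp_rw [mul_comm (point _ j)]
        exact const_mul_mem_lowDegree _ (sgn_mem_lowDegree j)
    have := expect_pow_four_le linear
    convert one_div_le_prob_half_le (K := 9) (by norm_num) h (expect_dirDeriv_sq c x).ge ?_ using 1
    · norm_num
    · simpa only [← pow_mul, pow_one] using this

/-- The constant of the small ball estimate `prob_mlEval_sq_le_le`. -/
noncomputable def smallBallConst (d : ℕ) : ℝ :=
  20 * 9 ^ d * (6 * d + 81 ^ d + 64 * invarianceConst d)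

/-- The constant of the anticoncentration estimate `prob_mlEval_sq_le_sum_le`. -/
noncomputable def anticoncConst (d : ℕ) : ℝ :=
  smallBallConst d + 108 * (6 * d + 9 * d ^ 2 + 64 * invarianceConst d)

lemma anticoncConst_pos (d : ℕ) : 0 < anticoncConst d := by
  have := invarianceConst_nonneg d
  rw [anticoncConst, smallBallConst]
  positivity

include hc hr hr₁ hinf

lemma prob_mlEval_sq_le_le (hvar : cubeVar c = 1) :
    prob (fun u ↦ mlEval c (point u) ^ 2 ≤ (r ^ (2 * d + 1)) ^ 2) ≤ smallBallConst d * r := by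
  have lower (u : ι → Bool) (hu : mlEval c (point u) ^ 2 ≤ (r ^ (2 * d + 1)) ^ 2) :
      1 / (4 * 9 ^ d) * (1 / 5) ≤ 𝔼 v,
        ratioTest ((r ^ (2 * d + 1))⁻¹ * mlEval c (point u)) (1 * mlEval c (point v)) := by
    have hu₁ : ((r ^ (2 * d + 1))⁻¹ * mlEval c (point u)) ^ 2 ≤ 1 := by
      rw [mul_pow, inv_pow]
      exact inv_mul_le_one_of_le₀ hu (by positivity)
    refine mul_le_expect_of_prob (fun v ↦ ratioTest_nonneg _ _) (by norm_num)
      (one_div_le_prob_half_le_mlEval_sq hc hvar.ge) fun v hv ↦ ?_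
    rw [one_mul, ratioTest, le_div_iff₀ (by positivity)]
    linarith
  have := mul_le_expect_of_prob (fun u ↦ expect_nonneg fun _ _ ↦ ratioTest_nonneg _ _)
    (by positivity) le_rfl lower
  rw [one_div_mul_one_div, mul_one_div, div_le_iff₀ (by positivity)] at this
  calc _ ≤ _ := this
    _ ≤ (6 * d + 81 ^ d + 64 * invarianceConst d) * r * (4 * 9 ^ d * 5) := by
      gcongr
      exact expect_ratioTest_mlEval_le hc hr hr₁ hinf hvar.le
    _ = smallBallConst d * r := by rw [smallBallConst]; ring

lemma prob_mlEval_sq_le_sum_le_of_cubeVar_eq_one (hvar : cubeVar c = 1) :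
    prob (fun u ↦ mlEval c (point u) ^ 2
      ≤ r ^ 4 * ((∑ j, mlEval (partialDeriv j c) (point u) ^ 2) / 2)) ≤ anticoncConst d * r := by
  set ρ := r ^ (2 * d + 1)
  set σ := r ^ (2 * d + 2)
  have hσρ : σ = r * ρ := pow_succ' _ _
  have : 0 < σ := by positivity
  have lower (u : ι → Bool) (hu : mlEval c (point u) ^ 2
        ≤ r ^ 4 * ((∑ j, mlEval (partialDeriv j c) (point u) ^ 2) / 2)
      ∧ ¬mlEval c (point u) ^ 2 ≤ ρ ^ 2) :
      1 / 36 * (1 / 3) ≤ 𝔼 v, ratioTest (σ⁻¹ * mlEval c (point u))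
        (r ^ 2 * σ⁻¹ * dirDeriv c (point u) (point v)) := by
    refine mul_le_expect_of_prob (fun v ↦ ratioTest_nonneg _ _) (by norm_num)
      (one_div_le_prob_half_le_dirDeriv_sq c (point u)) fun v hv ↦ ?_
    have ha : 1 ≤ (σ⁻¹ * mlEval c (point u)) ^ 2 := by
      rw [mul_pow, inv_pow, ← div_eq_inv_mul, one_le_div (by positivity), hσρ, mul_pow]
      exact (mul_le_of_le_one_left (by positivity) (pow_le_one₀ hr.le hr₁)).trans (not_le.1 hu.2).le
    have hab : (σ⁻¹ * mlEval c (point u)) ^ 2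
        ≤ (r ^ 2 * σ⁻¹ * dirDeriv c (point u) (point v)) ^ 2 := by
      calc _ = σ⁻¹ ^ 2 * mlEval c (point u) ^ 2 := mul_pow _ _ 2
        _ ≤ σ⁻¹ ^ 2 * (r ^ 4 * dirDeriv c (point u) (point v) ^ 2) := by
          gcongr
          exact hu.1.trans (by gcongr)
        _ = _ := by ring
    rw [ratioTest, le_div_iff₀ (by positivity)]
    linarith
  have := mul_le_expect_of_prob (fun u ↦ expect_nonneg fun _ _ ↦ ratioTest_nonneg _ _)
    (by norm_num) le_rfl lower
  have small := prob_mlEval_sq_le_le hc hr hr₁ hinf hvar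
  have upper := expect_ratioTest_dirDeriv_le hc hr hr₁ hinf hvar.le
  refine (prob_le_prob_add_prob_and_not _ _).trans ((add_le_add_left small _).trans ?_)
  rw [anticoncConst]
  linarith

omit hc hinf

include hr hr₁

lemma prob_mlEval_sq_le_sum_le (hc : DegreeLE d c) (hvar : 0 < cubeVar c)
    (hinf : ∀ i, normSq (partialDeriv i c) ≤ r ^ (12 * d + 14) * cubeVar c) :
    prob (fun u ↦ mlEval c (point u) ^ 2
      ≤ r ^ 4 * ((∑ j, mlEval (partialDeriv j c) (point u) ^ 2) / 2)) ≤ anticoncConst d * r := by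
  set a := (√(cubeVar c))⁻¹
  have ha : a ^ 2 = (cubeVar c)⁻¹ := by rw [inv_pow, Real.sq_sqrt hvar.le]
  have ha₀ : 0 < a ^ 2 := by rw [ha]; positivity
  have normalized := prob_mlEval_sq_le_sum_le_of_cubeVar_eq_one (c := fun S ↦ a * c S) (d := d)
    (fun S hS ↦ by simp [hc S hS]) hr hr₁ (fun i ↦ by
      rw [partialDeriv_const_mul, normSq_const_mul, ha, inv_mul_le_iff₀ hvar, ← pow_mul, mul_comm]
      exact (hinf i).trans_eq (by ring)) (by rw [cubeVar_const_mul, ha, inv_mul_cancel₀ hvar.ne'])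
  refine le_of_eq_of_le (congrArg prob <| funext fun u ↦ propext ?_) normalized
  simp only [partialDeriv_const_mul, mlEval_const_mul, mul_pow]
  rw [← mul_sum, mul_div_assoc, mul_left_comm, mul_le_mul_iff_right₀ ha₀]

end Anticoncentration

/-! ### Random restrictions -/

section Restriction

variable {ι : Type*} [DecidableEq ι]

/-- The multilinear polynomial `c` depends only on the variables in `U`. -/
def SupportedOn (U : Finset ι) (c : Finset ι → ℝ) : Prop := ∀ S, ¬S ⊆ U → c S = 0

lemma partialDeriv_eq_zero_of_supportedOn {U : Finset ι} {c : Finset ι → ℝ}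
    (h : SupportedOn U c) {i : ι} (hi : i ∉ U) : partialDeriv i c = 0 := by
  funext S
  by_cases hS : i ∈ S
  · exact partialDeriv_of_mem hS c
  · rw [partialDeriv_of_notMem hS, h _ fun hsub ↦ hi (hsub (mem_insert_self i S)), Pi.zero_apply]

lemma point_piecewise (U : Finset ι) (x y : ι → Bool) :
    point (U.piecewise x y) = U.piecewise (point x) (point y) := by
  funext i
  by_cases hi : i ∈ U <;> simp [point, hi]

variable [Fintype ι]

/-- The polynomial in the variables of `U` obtained from `c` by substituting `y i` for every
variable `i ∉ U`. -/
noncomputable def restrict (U : Finset ι) (y : ι → ℝ) (c : Finset ι → ℝ) : Finset ι → ℝ :=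
  fun S ↦ ∑ T with T ∩ U = S, c T * ∏ i ∈ T \ U, y i

lemma mlEval_restrict (U : Finset ι) (y : ι → ℝ) (c : Finset ι → ℝ) (x : ι → ℝ) :
    mlEval (restrict U y c) x = mlEval c (U.piecewise x y) := by
  have term (T : Finset ι) : c T * ∏ i ∈ T, U.piecewise x y i
      = (c T * ∏ i ∈ T \ U, y i) * ∏ i ∈ T ∩ U, x i := by
    rw [prod_piecewise]
    ring
  simp only [mlEval, term, restrict, sum_mul]
  refine Eq.trans (sum_congr rfl fun S _ ↦ sum_congr rfl fun T hT ↦ ?_)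
    (sum_fiberwise univ (· ∩ U) _)
  rw [(mem_filter.1 hT).2]

lemma mlEval_restrict_point (U : Finset ι) (c : Finset ι → ℝ) (x y : ι → Bool) :
    mlEval (restrict U (point y) c) (point x) = mlEval c (point (U.piecewise x y)) := by
  rw [mlEval_restrict, point_piecewise]

lemma DegreeLE.restrict {d : ℕ} {c : Finset ι → ℝ} (h : DegreeLE d c) (U : Finset ι)
    (y : ι → ℝ) : DegreeLE d (restrict U y c) := fun S hS ↦
  sum_eq_zero fun T hT ↦ by
    rw [h T (hS.trans_le _), zero_mul]
    rw [← (mem_filter.1 hT).2]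
    exact card_le_card inter_subset_left

lemma SupportedOn.restrict {V : Finset ι} {c : Finset ι → ℝ} (h : SupportedOn V c)
    (U : Finset ι) (y : ι → ℝ) : SupportedOn (V ∩ U) (restrict U y c) := fun S hS ↦
  sum_eq_zero fun T hT ↦ by
    rw [h T fun hV ↦ hS ?_, zero_mul]
    rw [← (mem_filter.1 hT).2]
    exact inter_subset_inter_right hV

lemma supportedOn_restrict (U : Finset ι) (y : ι → ℝ) (c : Finset ι → ℝ) :
    SupportedOn U (restrict U y c) := by
  simpa using SupportedOn.restrict (V := univ) (c := c) (fun S hS ↦ absurd (subset_univ S) hS) U y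

lemma partialDeriv_restrict {U : Finset ι} {i : ι} (hi : i ∈ U) (y : ι → ℝ) (c : Finset ι → ℝ) :
    partialDeriv i (restrict U y c) = restrict U y (partialDeriv i c) := by
  funext S
  by_cases hS : i ∈ S
  · rw [partialDeriv_of_mem hS, restrict]
    refine (sum_eq_zero fun T hT ↦ ?_).symm
    rw [← (mem_filter.1 hT).2] at hS
    rw [partialDeriv_of_mem (mem_of_mem_inter_left hS), zero_mul]
  · rw [partialDeriv_of_notMem hS, restrict, restrict]
    have mem_of {T : Finset ι} (hT : T ∩ U = insert i S) : i ∈ T :=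
      mem_of_mem_inter_left (hT ▸ mem_insert_self i S)
    have notMem_of {T : Finset ι} (hT : T ∩ U = S) : i ∉ T := fun h ↦
      hS (hT ▸ mem_inter.2 ⟨h, hi⟩)
    refine sum_nbij' (·.erase i) (insert i) ?_ ?_ ?_ ?_ fun T hT ↦ ?_ <;>
      simp only [mem_filter, mem_univ, true_and] at *
    · exact fun T hT ↦ by rw [erase_inter, hT, erase_insert hS]
    · exact fun T hT ↦ by rw [insert_inter_of_mem hi, hT]
    · exact fun T hT ↦ insert_erase (mem_of hT)
    · exact fun T hT ↦ erase_insert (notMem_of hT)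
    · rw [partialDeriv_of_notMem (notMem_erase i T), insert_erase (mem_of hT), erase_sdiff_comm,
        erase_eq_of_notMem (by simp [hi])]

lemma partialDeriv_restrict_of_notMem {U : Finset ι} {i : ι} (hi : i ∉ U) (y : ι → ℝ)
    (c : Finset ι → ℝ) : partialDeriv i (restrict U y c) = 0 :=
  partialDeriv_eq_zero_of_supportedOn (supportedOn_restrict U y c) hi

lemma sum_partialDeriv_restrict {F : (Finset ι → ℝ) → ℝ} (hF : F 0 = 0) (U : Finset ι)
    (y : ι → ℝ) (c : Finset ι → ℝ) :
    ∑ i, F (partialDeriv i (restrict U y c)) = ∑ i ∈ U, F (restrict U y (partialDeriv i c)) := by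
  rw [← sum_subset (subset_univ U)]
  · exact sum_congr rfl fun i hi ↦ by rw [partialDeriv_restrict hi]
  · exact fun i _ hi ↦ by rw [partialDeriv_restrict_of_notMem hi, hF]

lemma normSq_restrict (U : Finset ι) (y : ι → Bool) (c : Finset ι → ℝ) :
    normSq (restrict U (point y) c) = 𝔼 x, mlEval c (point (U.piecewise x y)) ^ 2 := by
  simp only [← expect_mlEval_sq, mlEval_restrict_point]

lemma expect_normSq_restrict (U : Finset ι) (c : Finset ι → ℝ) :
    𝔼 y, normSq (restrict U (point y) c) = normSq c := by
  simp only [normSq_restrict]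
  rw [expect_expect_piecewise U fun w ↦ mlEval c (point w) ^ 2, expect_mlEval_sq]

lemma expect_normSq_restrict_sq_le {d : ℕ} {c : Finset ι → ℝ} (hc : DegreeLE d c)
    (U : Finset ι) : 𝔼 y, normSq (restrict U (point y) c) ^ 2 ≤ 9 ^ d * normSq c ^ 2 := by
  refine le_trans ?_ (expect_mlEval_pow_four_le hc)
  rw [← expect_expect_piecewise U fun w ↦ mlEval c (point w) ^ 4]
  refine expect_le_expect fun y _ ↦ ?_
  rw [normSq_restrict]
  have := expect_mul_sq_le_sq_mul_sq univ
    (fun x ↦ mlEval c (point (U.piecewise x y)) ^ 2) (fun _ ↦ 1)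
  simpa [← pow_mul] using this

/-- The part of `c` free of the variables in `U`; it computes the mean of a restriction to `U`. -/
def meanPart (U : Finset ι) (c : Finset ι → ℝ) : Finset ι → ℝ :=
  fun T ↦ if T ∩ U = ∅ then c T else 0

omit [Fintype ι] in
lemma DegreeLE.meanPart {d : ℕ} {c : Finset ι → ℝ} (h : DegreeLE d c) (U : Finset ι) :
    DegreeLE d (meanPart U c) := fun S hS ↦ by
  rw [BoolCube.meanPart, h S hS, ite_self]

lemma restrict_empty (U : Finset ι) (y : ι → ℝ) (c : Finset ι → ℝ) :
    restrict U y c ∅ = mlEval (meanPart U c) y := by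
  simp only [restrict, mlEval, meanPart, sum_filter, ite_mul, zero_mul]
  refine sum_congr rfl fun T _ ↦ if_ctx_congr Iff.rfl (fun h ↦ ?_) fun _ ↦ rfl
  rw [sdiff_eq_self_of_disjoint (disjoint_iff_inter_eq_empty.2 h)]

lemma normSq_le_normSq_meanPart_add_sum (U : Finset ι) (c : Finset ι → ℝ) :
    normSq c ≤ normSq (meanPart U c) + ∑ i ∈ U, normSq (partialDeriv i c) := by
  simp only [normSq_partialDeriv, sum_filter]
  rw [sum_comm, normSq, normSq, ← sum_add_distrib]
  refine sum_le_sum fun S _ ↦ ?_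
  have nonneg (i : ι) : 0 ≤ if i ∈ S then c S ^ 2 else 0 := by positivity
  by_cases h : S ∩ U = ∅
  · rw [meanPart, if_pos h]
    exact le_add_of_nonneg_right (sum_nonneg fun i _ ↦ nonneg i)
  · obtain ⟨i, hi⟩ := nonempty_iff_ne_empty.2 h
    refine le_add_of_nonneg_of_le (sq_nonneg _) ?_
    simpa only [if_pos (mem_inter.1 hi).1] using
      single_le_sum (fun i _ ↦ nonneg i) (mem_inter.1 hi).2

lemma expect_cubeVar_restrict_le (U : Finset ι) (c : Finset ι → ℝ) :
    𝔼 y, cubeVar (restrict U (point y) c) ≤ ∑ i ∈ U, normSq (partialDeriv i c) := by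
  have decomp (y : ι → Bool) : cubeVar (restrict U (point y) c)
      = normSq (restrict U (point y) c) - mlEval (meanPart U c) (point y) ^ 2 := by
    rw [normSq_eq_sq_add_cubeVar, restrict_empty]
    ring
  simp only [decomp]
  rw [expect_sub_distrib, expect_normSq_restrict, expect_mlEval_sq]
  linarith [normSq_le_normSq_meanPart_add_sum U c]

end Restriction

/-! ### Regularity by restriction -/

section Regularity

variable {ι : Type*} [Fintype ι] [DecidableEq ι] {d : ℕ} {c : Finset ι → ℝ} {τ T : ℝ}

/-- The mean of the polynomial `c` is at least `T` standard deviations away from zero. -/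
def NearlyConstant (T : ℝ) (c : Finset ι → ℝ) : Prop := T ^ 2 * cubeVar c ≤ c ∅ ^ 2

/-- No variable accounts for more than the fraction `τ` of the variance of the polynomial `c`. -/
def Regular (τ : ℝ) (c : Finset ι → ℝ) : Prop :=
  0 < cubeVar c ∧ ∀ i, normSq (partialDeriv i c) ≤ τ * cubeVar c

/-- Removing the most influential variables one at a time, either the influences become small
compared with what is left, or what is left becomes small compared with the whole. -/
lemma exists_card_le_normSq_partialDeriv_le (c : Finset ι → ℝ) (hτ : 0 < τ) (K : ℕ) :
    ∃ H : Finset ι, #H ≤ K ∧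
      ((∀ i ∉ H, normSq (partialDeriv i c) ≤ τ * ∑ j ∈ Hᶜ, normSq (partialDeriv j c)) ∨
        (K * τ + 1) * ∑ j ∈ Hᶜ, normSq (partialDeriv j c) ≤ ∑ j, normSq (partialDeriv j c)) := by
  induction K with
  | zero => exact ⟨∅, by simp, Or.inr (by simp)⟩
  | succ K ih =>
    obtain ⟨H, hH, h | h⟩ := ih
    · exact ⟨H, hH.trans K.le_succ, Or.inl h⟩
    by_cases small : ∀ i ∉ H, normSq (partialDeriv i c)
        ≤ τ * ∑ j ∈ Hᶜ, normSq (partialDeriv j c)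
    · exact ⟨H, hH.trans K.le_succ, Or.inl small⟩
    push Not at small
    obtain ⟨i, hi, hlt⟩ := small
    refine ⟨insert i H, (card_insert_le _ _).trans (by lia), Or.inr ?_⟩
    refine le_trans ?_ h
    rw [← add_sum_erase Hᶜ _ (mem_compl.2 hi)] at hlt ⊢
    rw [compl_insert]
    push_cast
    have : 0 ≤ K * τ * normSq (partialDeriv i c) := by
      have := normSq_nonneg (partialDeriv i c)
      positivity
    nlinarith [normSq_nonneg (partialDeriv i c)]

lemma nearlyConstant_restrict_of_sum_eq_zero (T : ℝ) {U : Finset ι}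
    (h : ∑ i ∈ U, normSq (partialDeriv i c) = 0) (y : ι → Bool) :
    NearlyConstant T (restrict U (point y) c) := by
  have hzero : 𝔼 y, cubeVar (restrict U (point y) c) = 0 :=
    ((expect_cubeVar_restrict_le U c).trans_eq h).antisymm
      (expect_nonneg fun _ _ ↦ cubeVar_nonneg _)
  rw [Finset.expect_eq_zero_iff_of_nonneg fun _ _ ↦ cubeVar_nonneg _] at hzero
  rw [NearlyConstant, hzero y (mem_univ y), mul_zero]
  positivity

lemma expect_sum_normSq_restrict_sq_le (hc : DegreeLE d c) {U : Finset ι} {b : ℝ}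
    (h : ∀ i ∈ U, normSq (partialDeriv i c) ≤ b) :
    𝔼 y, ∑ i ∈ U, normSq (restrict U (point y) (partialDeriv i c)) ^ 2
      ≤ 9 ^ d * (b * ∑ i ∈ U, normSq (partialDeriv i c)) := by
  rw [expect_sum_comm, mul_sum, mul_sum]
  refine sum_le_sum fun i hi ↦
    (expect_normSq_restrict_sq_le ((hc.partialDeriv i).mono d.pred_le) U).trans ?_
  rw [sq]
  gcongr
  · exact normSq_nonneg _
  · exact h i hi

lemma regular_restrict_of_sum_sq_le (hd : 0 < d) (hc : DegreeLE d c) (hτ : 0 ≤ τ) {v : ℝ}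
    (hv : 0 < v) {U : Finset ι} {y : ι → ℝ}
    (large : d * v ≤ ∑ i ∈ U, normSq (restrict U y (partialDeriv i c)))
    (small : ∑ i ∈ U, normSq (restrict U y (partialDeriv i c)) ^ 2 ≤ τ ^ 2 * v ^ 2) :
    Regular τ (restrict U y c) := by
  have hvar : v ≤ cubeVar (restrict U y c) := by
    have total := sum_normSq_partialDeriv_le (hc.restrict U y)
    rw [sum_partialDeriv_restrict (F := normSq) (by simp [normSq])] at total
    exact le_of_mul_le_mul_left (large.trans total) (by exact_mod_cast hd)
  refine ⟨hv.trans_le hvar, fun i ↦ ?_⟩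
  by_cases hi : i ∈ U
  · rw [partialDeriv_restrict hi]
    refine le_of_sq_le_sq ?_ (mul_nonneg hτ (cubeVar_nonneg _))
    calc _ ≤ _ := single_le_sum (f := fun i ↦ normSq (restrict U y (partialDeriv i c)) ^ 2)
          (fun i _ ↦ sq_nonneg _) hi
      _ ≤ τ ^ 2 * v ^ 2 := small
      _ ≤ _ := by
        rw [mul_pow]
        gcongr
  · rw [partialDeriv_restrict_of_notMem hi]
    simpa [normSq] using mul_nonneg hτ (cubeVar_nonneg _)

lemma one_div_le_prob_regular_restrict (hd : 0 < d) (hc : DegreeLE d c) (hτ : 0 < τ)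
    {U : Finset ι} (hpos : 0 < ∑ j ∈ U, normSq (partialDeriv j c))
    (h : ∀ i ∈ U, normSq (partialDeriv i c)
      ≤ τ ^ 2 / (32 * d ^ 2 * 81 ^ d) * ∑ j ∈ U, normSq (partialDeriv j c)) :
    1 / (8 * 9 ^ d) ≤ prob fun y : ι → Bool ↦ Regular τ (restrict U (point y) c) := by
  set I := ∑ j ∈ U, normSq (partialDeriv j c)
  have mean : 𝔼 y, ∑ i ∈ U, normSq (restrict U (point y) (partialDeriv i c)) = I := by
    rw [expect_sum_comm]
    exact sum_congr rfl fun i _ ↦ expect_normSq_restrict U _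
  have square : 𝔼 y, (∑ i ∈ U, normSq (restrict U (point y) (partialDeriv i c))) ^ 2
      ≤ 9 ^ d * I ^ 2 :=
    expect_sum_sq_le U _ _ (fun i ↦ normSq_nonneg _) (by positivity) fun i ↦
      expect_normSq_restrict_sq_le ((hc.partialDeriv i).mono d.pred_le) U
  have squares : 8 * 9 ^ d * 𝔼 y, ∑ i ∈ U, normSq (restrict U (point y) (partialDeriv i c)) ^ 2
      ≤ τ ^ 2 * (I / (2 * d)) ^ 2 := by
    calc _ ≤ 8 * 9 ^ d * (9 ^ d * (τ ^ 2 / (32 * d ^ 2 * 81 ^ d) * I * I)) := by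
          gcongr
          exact expect_sum_normSq_restrict_sq_le hc h
      _ = 8 * 9 ^ d * (9 ^ d * (τ ^ 2 / (32 * d ^ 2 * (9 ^ d * 9 ^ d)) * I * I)) := by
          rw [← mul_pow, show (9 : ℝ) * 9 = 81 by norm_num]
      _ = τ ^ 2 * (I / (2 * d)) ^ 2 := by
          field_simp
          norm_num
  refine (one_div_le_prob_half_le_and_lt (by positivity) hpos mean.ge (mean.symm ▸ square)
    (fun y ↦ sum_nonneg fun i _ ↦ sq_nonneg _) (by positivity) squares).trans
    (prob_mono fun y ⟨large, small⟩ ↦ ?_)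
  refine regular_restrict_of_sum_sq_le hd hc hτ.le (by positivity) ?_ small.le
  calc d * (I / (2 * d)) = I / 2 := by field_simp
    _ ≤ _ := large

lemma one_div_le_prob_nearlyConstant_restrict (hc : DegreeLE d c) (hT : 1 ≤ T) {U : Finset ι}
    (hpos : 0 < ∑ i ∈ U, normSq (partialDeriv i c))
    (h : 32 * 9 ^ d * T ^ 2 * ∑ i ∈ U, normSq (partialDeriv i c) ≤ normSq c) :
    1 / (8 * 9 ^ d) ≤ prob fun y : ι → Bool ↦ NearlyConstant T (restrict U (point y) c) := by
  set I := ∑ i ∈ U, normSq (partialDeriv i c)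
  set W := normSq c
  have hW : 0 < W := lt_of_lt_of_le (by positivity) h
  have hIW : 32 * I ≤ W := by
    have h9 : (1 : ℝ) ≤ 9 ^ d := one_le_pow₀ (by norm_num)
    have hT2 : 1 ≤ T ^ 2 := one_le_pow₀ hT
    nlinarith [one_le_mul_of_one_le_of_one_le h9 hT2]
  have mean : W / 2 ≤ 𝔼 y : ι → Bool, mlEval (meanPart U c) (point y) ^ 2 := by
    rw [expect_mlEval_sq]
    linarith [normSq_le_normSq_meanPart_add_sum U c]
  refine (one_div_le_prob_half_le_and_lt (g := fun y ↦ cubeVar (restrict U (point y) c))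
    (t := W / (4 * T ^ 2)) (by positivity) (by positivity) mean
    (by simpa only [← pow_mul, expect_mlEval_sq] using expect_mlEval_pow_four_le (hc.meanPart U))
    (fun y ↦ cubeVar_nonneg _) (by positivity) ?_).trans
    (prob_mono fun y ⟨_, hy⟩ ↦ ?_)
  · rw [le_div_iff₀ (by positivity)]
    calc _ ≤ 8 * 9 ^ d * I * (4 * T ^ 2) := by
          gcongr
          exact expect_cubeVar_restrict_le U c
      _ ≤ W := by linarith
  · rw [lt_div_iff₀ (by positivity)] at hy
    rw [NearlyConstant, restrict_empty]
    linarith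

lemma exists_prob_regular_or_nearlyConstant_restrict (hd : 0 < d) (hc : DegreeLE d c)
    (hτ : 0 < τ) (hT : 1 ≤ T) {K : ℕ}
    (hK : 32 * 9 ^ d * d * T ^ 2 ≤ K * (τ ^ 2 / (32 * d ^ 2 * 81 ^ d))) :
    ∃ H : Finset ι, #H ≤ K ∧ 1 / (8 * 9 ^ d) ≤ prob fun y : ι → Bool ↦
      Regular τ (restrict Hᶜ (point y) c) ∨ NearlyConstant T (restrict Hᶜ (point y) c) := by
  have hd₀ : (0 : ℝ) < d := mod_cast hd
  set τ' := τ ^ 2 / (32 * d ^ 2 * 81 ^ d)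
  obtain ⟨H, hH, h⟩ := exists_card_le_normSq_partialDeriv_le c (show 0 < τ' by positivity) K
  refine ⟨H, hH, ?_⟩
  set I := ∑ j ∈ Hᶜ, normSq (partialDeriv j c)
  have hI : 0 ≤ I := sum_nonneg fun _ _ ↦ normSq_nonneg _
  rcases hI.eq_or_lt with hzero | hpos
  · have always (y : ι → Bool) := nearlyConstant_restrict_of_sum_eq_zero T hzero.symm y
    have h9 : (1 : ℝ) ≤ 9 ^ d := one_le_pow₀ (by norm_num)
    simp only [always, or_true, prob, ind_of, Fintype.expect_const]
    rw [div_le_one (by positivity)]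
    linarith
  rcases h with h | h
  · exact (one_div_le_prob_regular_restrict hd hc hτ hpos fun i hi ↦ h i (mem_compl.1 hi)).trans
      (prob_mono fun _ ↦ Or.inl)
  · have hdI : d * (32 * 9 ^ d * T ^ 2 * I) ≤ d * normSq c := by
      calc _ = 32 * 9 ^ d * d * T ^ 2 * I := by ring
        _ ≤ (K * τ' + 1) * I := by
          gcongr
          linarith
        _ ≤ d * cubeVar c := h.trans (sum_normSq_partialDeriv_le hc)
        _ ≤ d * normSq c := by
          gcongr
          exact cubeVar_le_normSq c
    exact (one_div_le_prob_nearlyConstant_restrict hc hT hpos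
      (le_of_mul_le_mul_left hdI hd₀)).trans (prob_mono fun _ ↦ Or.inr)

end Regularity

/-! ### Average sensitivity -/

/-- `a` and `b` lie on different sides of the threshold `0`. -/
def SignChange (a b : ℝ) : Prop := ¬(0 ≤ a ↔ 0 ≤ b)

section Sensitivity

variable {ι : Type*} [DecidableEq ι]

lemma point_flipAt (i : ι) (w : ι → Bool) :
    point (flipAt i w) = Function.update (point w) i (-sgn (w i)) := by
  funext j
  by_cases hj : j = i
  · subst hj
    simp only [point, flipAt_self, sgn_not, Function.update_self]
  · simp only [point, flipAt_of_ne hj, Function.update_of_ne hj]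

lemma piecewise_flipAt {U : Finset ι} {i : ι} (hi : i ∈ U) (x y : ι → Bool) :
    U.piecewise (flipAt i x) y = flipAt i (U.piecewise x y) := by
  rw [flipAt, flipAt, update_piecewise_of_mem _ _ _ hi, piecewise_eq_of_mem _ _ _ hi]

variable [Fintype ι]

/-- The influence of the `i`-th variable on the threshold function `w ↦ sgn (c(w))`. -/
noncomputable def influence (i : ι) (c : Finset ι → ℝ) : ℝ :=
  prob fun w : ι → Bool ↦ SignChange (mlEval c (point w)) (mlEval c (point (flipAt i w)))

/-- The average sensitivity (total influence) of the threshold function `w ↦ sgn (c(w))`. -/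
noncomputable def avgSensitivity (c : Finset ι → ℝ) : ℝ := ∑ i, influence i c

lemma avgSensitivity_nonneg (c : Finset ι → ℝ) : 0 ≤ avgSensitivity c :=
  sum_nonneg fun _ _ ↦ prob_nonneg _

lemma influence_eq_zero {i : ι} {c : Finset ι → ℝ} (h : partialDeriv i c = 0) :
    influence i c = 0 := by
  have same (w : ι → Bool) : mlEval c (point (flipAt i w)) = mlEval c (point w) := by
    rw [point_flipAt, mlEval_update, h]
    simp [mlEval]
  refine expect_eq_zero fun w _ ↦ ind_of_not ?_
  simp [SignChange, same]

lemma avgSensitivity_eq_sum {U : Finset ι} {c : Finset ι → ℝ} (h : SupportedOn U c) :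
    avgSensitivity c = ∑ i ∈ U, influence i c :=
  (sum_subset (subset_univ U) fun _ _ hi ↦
    influence_eq_zero (partialDeriv_eq_zero_of_supportedOn h hi)).symm

lemma avgSensitivity_le_card {U : Finset ι} {c : Finset ι → ℝ} (h : SupportedOn U c) :
    avgSensitivity c ≤ #U := by
  rw [avgSensitivity_eq_sum h]
  simpa using sum_le_card_nsmul U (influence · c) 1 fun _ _ ↦ prob_le_one _

lemma expect_influence_restrict {U : Finset ι} {i : ι} (hi : i ∈ U) (c : Finset ι → ℝ) :
    𝔼 y : ι → Bool, influence i (restrict U (point y) c) = influence i c := by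
  simp only [influence, prob, mlEval_restrict_point, piecewise_flipAt hi]
  exact expect_expect_piecewise U fun w ↦
    ind (SignChange (mlEval c (point w)) (mlEval c (point (flipAt i w))))

lemma sum_influence_eq_expect_restrict (U : Finset ι) (c : Finset ι → ℝ) :
    ∑ i ∈ U, influence i c = 𝔼 y : ι → Bool, avgSensitivity (restrict U (point y) c) := by
  simp only [avgSensitivity_eq_sum (supportedOn_restrict U _ c)]
  rw [expect_sum_comm]
  exact sum_congr rfl fun i hi ↦ (expect_influence_restrict hi c).symm

end Sensitivity

/-! ### Nearly constant polynomials -/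

section NearlyConstant

variable {ι : Type*} [Fintype ι] [DecidableEq ι]

lemma nonneg_iff_of_sub_sq_lt_sq {a μ : ℝ} (h : (a - μ) ^ 2 < μ ^ 2) : 0 ≤ a ↔ 0 ≤ μ := by
  have : 0 < a * μ := by nlinarith [sq_nonneg a]
  rcases pos_and_pos_or_neg_and_neg_of_mul_pos this with ⟨ha, hμ⟩ | ⟨ha, hμ⟩
  · exact iff_of_true ha.le hμ.le
  · exact iff_of_false ha.not_ge hμ.not_ge

lemma influence_le_two_mul_prob_sq_le (i : ι) (c : Finset ι → ℝ) :
    influence i c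
      ≤ 2 * prob fun w : ι → Bool ↦ c ∅ ^ 2 ≤ (mlEval c (point w) - c ∅) ^ 2 := by
  set far : (ι → Bool) → Prop := fun w ↦ c ∅ ^ 2 ≤ (mlEval c (point w) - c ∅) ^ 2
  calc influence i c ≤ prob fun w ↦ far w ∨ far (flipAt i w) := by
        refine prob_mono fun w hw ↦ ?_
        contrapose! hw
        rw [SignChange, not_not, nonneg_iff_of_sub_sq_lt_sq (not_le.1 hw.1),
          nonneg_iff_of_sub_sq_lt_sq (not_le.1 hw.2)]
    _ ≤ prob far + prob fun w ↦ far (flipAt i w) := prob_or_le _ _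
    _ = 2 * prob far := by
        have : (prob fun w ↦ far (flipAt i w)) = prob far :=
          expect_comp_involutive (flipAt_involutive i) fun w ↦ ind (far w)
        rw [this, two_mul]

lemma expect_sub_sq_eq_cubeVar (c : Finset ι → ℝ) :
    𝔼 w, (mlEval c (point w) - c ∅) ^ 2 = cubeVar c := by
  have expand (w : ι → Bool) : (mlEval c (point w) - c ∅) ^ 2
      = mlEval c (point w) ^ 2 - 2 * c ∅ * mlEval c (point w) + c ∅ ^ 2 := by ring
  simp only [expand]
  rw [expect_add_distrib, expect_sub_distrib, ← mul_expect, Fintype.expect_const,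
    expect_mlEval_sq, expect_mlEval, normSq_eq_sq_add_cubeVar]
  ring

lemma partialDeriv_eq_zero_of_cubeVar_eq_zero {c : Finset ι → ℝ} (h : cubeVar c = 0) (i : ι) :
    partialDeriv i c = 0 := by
  have coeff := (sum_eq_zero_iff_of_nonneg fun _ _ ↦ sq_nonneg _).1 h
  funext S
  by_cases hi : i ∈ S
  · exact partialDeriv_of_mem hi c
  · rw [partialDeriv_of_notMem hi]
    exact pow_eq_zero_iff two_ne_zero |>.1
      (coeff _ (mem_erase.2 ⟨insert_ne_empty i S, mem_univ _⟩))

variable {d : ℕ} {T : ℝ} {c : Finset ι → ℝ}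

lemma prob_sq_le_sub_sq_le (k : ℕ) (hc : DegreeLE d c) (hT : 0 < T) (h : NearlyConstant T c)
    (hvar : 0 < cubeVar c) :
    prob (fun w : ι → Bool ↦ c ∅ ^ 2 ≤ (mlEval c (point w) - c ∅) ^ 2)
      ≤ 3 ^ (d * k * 2 ^ k) / (T ^ 2) ^ 2 ^ k := by
  have pow_succ_eq (a : ℝ) : a ^ 2 ^ (k + 1) = (a ^ 2) ^ 2 ^ k := by rw [← pow_mul, pow_succ']
  have hmean : 0 < c ∅ ^ 2 := lt_of_lt_of_le (by positivity) h
  have centred : (fun w : ι → Bool ↦ mlEval c (point w) - c ∅) ∈ lowDegree ι d :=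
    Submodule.sub_mem _ (mlEval_mem_lowDegree hc sgn_mem_lowDegree) (const_mem_lowDegree _ _)
  calc prob (fun w : ι → Bool ↦ c ∅ ^ 2 ≤ (mlEval c (point w) - c ∅) ^ 2)
      ≤ prob fun w : ι → Bool ↦ (c ∅ ^ 2) ^ 2 ^ k ≤ (mlEval c (point w) - c ∅) ^ 2 ^ (k + 1) :=
        prob_mono fun w hw ↦ by rw [pow_succ_eq]; gcongr
    _ ≤ (𝔼 w, (mlEval c (point w) - c ∅) ^ 2 ^ (k + 1)) / (c ∅ ^ 2) ^ 2 ^ k :=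
        prob_le_expect_div (fun w ↦ by rw [pow_succ_eq]; positivity) (by positivity)
    _ ≤ 3 ^ (d * k * 2 ^ k) * cubeVar c ^ 2 ^ k / (T ^ 2 * cubeVar c) ^ 2 ^ k := by
        gcongr
        · simpa only [expect_sub_sq_eq_cubeVar] using expect_pow_two_pow_le k centred
        · exact h
    _ = 3 ^ (d * k * 2 ^ k) / (T ^ 2) ^ 2 ^ k := by
        rw [mul_pow]
        field_simp

/-- The bound for the average sensitivity of nearly constant polynomials of degree at most `d`
that is produced by hypercontractivity for the `2 ^ (k + 1)`-th moment. -/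
def nearlyConstantBound (d k : ℕ) : ℝ := 2 ^ (k + 1) * 3 ^ (d * k * 2 ^ k)

lemma nearlyConstantBound_pos (d k : ℕ) : 0 < nearlyConstantBound d k := by
  rw [nearlyConstantBound]
  positivity

lemma avgSensitivity_le_of_nearlyConstant {U : Finset ι} {k : ℕ} (hc : DegreeLE d c)
    (hT : 1 ≤ T) (h : NearlyConstant T c) (hs : SupportedOn U c) (hU : #U ≤ (2 * T) ^ k) :
    avgSensitivity c ≤ nearlyConstantBound d k := by
  rcases (cubeVar_nonneg c).eq_or_lt with hvar | hvar
  · rw [avgSensitivity, sum_eq_zero fun i _ ↦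
      influence_eq_zero (partialDeriv_eq_zero_of_cubeVar_eq_zero hvar.symm i)]
    exact (nearlyConstantBound_pos d k).le
  have hpow : T ^ k ≤ (T ^ 2) ^ 2 ^ k := by
    rw [← pow_mul]
    exact pow_le_pow_right₀ hT (by have := Nat.lt_two_pow_self (n := k); omega)
  have each (i : ι) : influence i c ≤ 2 * (3 ^ (d * k * 2 ^ k) / T ^ k) :=
    (influence_le_two_mul_prob_sq_le i c).trans <| by
      gcongr
      exact (prob_sq_le_sub_sq_le k hc (by positivity) h hvar).trans (by gcongr)
  calc avgSensitivity c ≤ #U * (2 * (3 ^ (d * k * 2 ^ k) / T ^ k)) := by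
        rw [avgSensitivity_eq_sum hs, ← nsmul_eq_mul]
        exact sum_le_card_nsmul _ _ _ fun i _ ↦ each i
    _ ≤ (2 * T) ^ k * (2 * (3 ^ (d * k * 2 ^ k) / T ^ k)) := by gcongr
    _ = nearlyConstantBound d k := by
        rw [nearlyConstantBound, mul_pow, pow_succ]
        field_simp

lemma one_div_le_prob_sq_le_sum (hc : DegreeLE d c) (hT : 1 ≤ T) (h : ¬NearlyConstant T c) :
    1 / (8 * 9 ^ d) ≤ prob fun x : ι → Bool ↦ mlEval c (point x) ^ 2
      ≤ 32 * 9 ^ d * T ^ 2 * ∑ j, mlEval (partialDeriv j c) (point x) ^ 2 := by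
  have hlt : c ∅ ^ 2 < T ^ 2 * cubeVar c := not_le.1 h
  have hT2 : 1 ≤ T ^ 2 := one_le_pow₀ hT
  have hvar : 0 < cubeVar c :=
    pos_of_mul_pos_right ((sq_nonneg _).trans_lt hlt) (sq_nonneg T)
  have mean : 𝔼 x, (∑ j, mlEval (partialDeriv j c) (point x) ^ 2)
      = ∑ j, normSq (partialDeriv j c) := by
    rw [expect_sum_comm]
    simp only [expect_mlEval_sq]
  refine (one_div_le_prob_half_le_and_lt (g := fun x ↦ mlEval c (point x) ^ 2)
    (t := 16 * 9 ^ d * T ^ 2 * cubeVar c) (by positivity) hvar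
    (mean.symm ▸ cubeVar_le_sum_normSq_partialDeriv c) ?_ (fun _ ↦ sq_nonneg _) (by positivity)
    ?_).trans (prob_mono fun x hx ↦ ?_)
  · rw [mean]
    refine expect_sum_sq_le univ _ _ (fun j ↦ normSq_nonneg _) (by positivity) fun j ↦ ?_
    simp only [← pow_mul]
    exact expect_mlEval_pow_four_le ((hc.partialDeriv j).mono (Nat.sub_le d 1))
  · rw [expect_mlEval_sq, normSq_eq_sq_add_cubeVar]
    have : c ∅ ^ 2 + cubeVar c ≤ 2 * (T ^ 2 * cubeVar c) := by nlinarith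
    calc _ ≤ 8 * 9 ^ d * (2 * (T ^ 2 * cubeVar c)) := by gcongr
      _ = _ := by ring
  · calc _ ≤ 16 * 9 ^ d * T ^ 2 * cubeVar c := hx.2.le
      _ = 32 * 9 ^ d * T ^ 2 * (cubeVar c / 2) := by ring
      _ ≤ _ := by
        gcongr
        exact hx.1

lemma prob_not_nearlyConstant_restrict_le (hc : DegreeLE d c) (hT : 1 ≤ T) (S : Finset ι) :
    prob (fun y : ι → Bool ↦ ¬NearlyConstant T (restrict S (point y) c))
      ≤ 8 * 9 ^ d * prob fun w : ι → Bool ↦ mlEval c (point w) ^ 2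
        ≤ 32 * 9 ^ d * T ^ 2 * ∑ j ∈ S, mlEval (partialDeriv j c) (point w) ^ 2 := by
  set small : (ι → Bool) → Prop := fun w ↦ mlEval c (point w) ^ 2
    ≤ 32 * 9 ^ d * T ^ 2 * ∑ j ∈ S, mlEval (partialDeriv j c) (point w) ^ 2
  have key := mul_le_expect_of_prob (b := 1 / (8 * 9 ^ d))
    (P := fun y : ι → Bool ↦ ¬NearlyConstant T (restrict S (point y) c))
    (f := fun y : ι → Bool ↦ prob fun x ↦ small (S.piecewise x y))
    (fun _ ↦ prob_nonneg _) (by positivity) le_rfl fun y hy ↦ by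
      have := one_div_le_prob_sq_le_sum (hc.restrict S (point y)) hT hy
      have sum_eq (x : ι → Bool) :=
        sum_partialDeriv_restrict (F := fun c ↦ mlEval c (point x) ^ 2) (by simp [mlEval]) S
          (point y) c
      simpa only [sum_eq, mlEval_restrict_point] using this
  rw [show (𝔼 y, prob fun x ↦ small (S.piecewise x y)) = prob small from
    expect_expect_piecewise S fun w ↦ ind (small w)] at key
  rwa [mul_one_div, div_le_iff₀' (by positivity)] at key

end NearlyConstant

/-! ### Splitting the variables into blocks -/

section Blocks

lemma sum_ind_le_mul_le {σ : Type*} (s : Finset σ) {G : σ → ℝ} (hG : ∀ i, 0 ≤ G i) {K f : ℝ}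
    (hK : 0 ≤ K) (hf : 0 < f) : ∑ i ∈ s, ind (f ≤ K * G i) ≤ K * (∑ i ∈ s, G i) / f := by
  rw [mul_sum, sum_div]
  refine sum_le_sum fun i _ ↦ ?_
  by_cases h : f ≤ K * G i
  · rwa [ind_of h, one_le_div hf]
  · rw [ind_of_not h]
    exact div_nonneg (mul_nonneg hK (hG i)) hf.le

variable {ι : Type*} [Fintype ι] [DecidableEq ι]

lemma sum_prob_not_nearlyConstant_restrict_le {d : ℕ} {c : Finset ι → ℝ} (hc : DegreeLE d c)
    {T r : ℝ} (hT : 1 ≤ T) (hr : 0 < r) (hr₁ : r ≤ 1) (hreg : Regular (r ^ (12 * d + 14)) c)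
    {b : ℕ} (block : ι → Fin b) :
    ∑ s, prob (fun y : ι → Bool ↦ ¬NearlyConstant T (restrict {i | block i = s} (point y) c))
      ≤ 8 * 9 ^ d * (b * (anticoncConst d * r) + 64 * 9 ^ d * T ^ 2 / r ^ 4) := by
  set f : (ι → Bool) → ℝ := fun w ↦ mlEval c (point w) ^ 2
  set G : ι → (ι → Bool) → ℝ := fun j w ↦ mlEval (partialDeriv j c) (point w) ^ 2
  have hG (j w) : 0 ≤ G j w := sq_nonneg _
  set K : ℝ := 32 * 9 ^ d * T ^ 2
  have pointwise (w : ι → Bool) : ∑ s, ind (f w ≤ K * ∑ j with block j = s, G j w)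
      ≤ b * ind (f w ≤ r ^ 4 * ((∑ j, G j w) / 2)) + 2 * K / r ^ 4 := by
    by_cases hw : f w ≤ r ^ 4 * ((∑ j, G j w) / 2)
    · have count : ∑ s, ind (f w ≤ K * ∑ j with block j = s, G j w) ≤ b := by
        simpa using sum_le_card_nsmul univ (fun s ↦ ind (f w ≤ K * ∑ j with block j = s, G j w)) 1
          fun _ _ ↦ ind_le_one _
      rw [ind_of hw, mul_one]
      exact count.trans (le_add_of_nonneg_right (by positivity))
    · rw [ind_of_not hw, mul_zero, zero_add]
      have hf : 0 < f w := (mul_nonneg (by positivity)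
        (by have := sum_nonneg fun j (_ : j ∈ univ) ↦ hG j w; positivity)).trans_lt (not_le.1 hw)
      calc _ ≤ K * (∑ s, ∑ j with block j = s, G j w) / f w :=
            sum_ind_le_mul_le _ (fun s ↦ sum_nonneg fun j _ ↦ hG j w) (by positivity) hf
        _ = K * (∑ j, G j w) / f w := by rw [sum_fiberwise]
        _ ≤ 2 * K / r ^ 4 := by
          rw [div_le_div_iff₀ hf (by positivity)]
          have := mul_le_mul_of_nonneg_left (not_le.1 hw).le (show 0 ≤ 2 * K by positivity)
          linarith
  calc _ ≤ ∑ s, 8 * 9 ^ d * prob fun w ↦ f w ≤ K * ∑ j with block j = s, G j w :=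
        sum_le_sum fun s _ ↦ prob_not_nearlyConstant_restrict_le hc hT _
    _ = 8 * 9 ^ d * 𝔼 w, (∑ s, ind (f w ≤ K * ∑ j with block j = s, G j w)) := by
        rw [← mul_sum, expect_sum_comm]
        rfl
    _ ≤ 8 * 9 ^ d * 𝔼 w, (b * ind (f w ≤ r ^ 4 * ((∑ j, G j w) / 2)) + 2 * K / r ^ 4) := by
        exact mul_le_mul_of_nonneg_left (expect_le_expect fun w _ ↦ pointwise w) (by positivity)
    _ = 8 * 9 ^ d * (b * prob (fun w ↦ f w ≤ r ^ 4 * ((∑ j, G j w) / 2)) + 2 * K / r ^ 4) := by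
        rw [expect_add_distrib, ← mul_expect, Fintype.expect_const, prob]
    _ ≤ 8 * 9 ^ d * (b * (anticoncConst d * r) + 2 * K / r ^ 4) := by
        gcongr
        exact prob_mlEval_sq_le_sum_le hr hr₁ hc hreg.1 hreg.2
    _ = _ := by ring

lemma exists_blocks_card_le {ι : Type*} (U : Finset ι) {b : ℕ} (hb : 0 < b) :
    ∃ block : ι → Fin b, ∀ s, #{i ∈ U | block i = s} ≤ #U / b + 1 := by
  classical
  refine ⟨fun i ↦ ⟨U.toList.idxOf i % b, Nat.mod_lt _ hb⟩, fun s ↦ ?_⟩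
  calc #{i ∈ U | (⟨U.toList.idxOf i % b, Nat.mod_lt _ hb⟩ : Fin b) = s}
      ≤ #{k ∈ range #U | k ≡ s [MOD b]} := by
        refine card_le_card_of_injOn U.toList.idxOf (fun i hi ↦ ?_) fun i hi j _ hij ↦ ?_
        · obtain ⟨hiU, hs⟩ := mem_filter.1 hi
          have hlt := List.idxOf_lt_length_of_mem (mem_toList.2 hiU)
          rw [length_toList] at hlt
          refine mem_filter.2 ⟨mem_range.2 hlt, ?_⟩
          rw [Nat.ModEq, ← hs, Nat.mod_mod]
        · exact (List.idxOf_inj (mem_toList.2 (mem_filter.1 hi).1)).1 hij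
    _ ≤ #U / b + 1 := by
        rw [← Nat.count_eq_card_filter_range, Nat.count_modEq_card _ hb]
        gcongr
        split_ifs <;> simp

end Blocks

/-! ### Recursion for the maximal average sensitivity -/

section MaxAvgSensitivity

/-- The largest average sensitivity of a polynomial threshold function of degree at most `d` that
depends on at most `m` variables. -/
noncomputable def maxAvgSensitivity (d m : ℕ) : ℝ :=
  sSup {a | ∃ (n : ℕ) (c : Finset (Fin n) → ℝ) (U : Finset (Fin n)),
    DegreeLE d c ∧ SupportedOn U c ∧ #U ≤ m ∧ a = avgSensitivity c}

variable {d m n : ℕ} {c : Finset (Fin n) → ℝ} {U : Finset (Fin n)}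

lemma avgSensitivity_le_max (hc : DegreeLE d c) (hs : SupportedOn U c) (hU : #U ≤ m) :
    avgSensitivity c ≤ maxAvgSensitivity d m := by
  refine le_csSup ⟨m, ?_⟩ ⟨n, c, U, hc, hs, hU, rfl⟩
  rintro _ ⟨n, c, U, _, hs, hU, rfl⟩
  exact (avgSensitivity_le_card hs).trans (by exact_mod_cast hU)

lemma maxAvgSensitivity_le {a : ℝ} (h : ∀ (n : ℕ) (c : Finset (Fin n) → ℝ) (U : Finset (Fin n)),
    DegreeLE d c → SupportedOn U c → #U ≤ m → avgSensitivity c ≤ a) :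
    maxAvgSensitivity d m ≤ a := by
  refine csSup_le ⟨_, 0, 0, ∅, fun _ _ ↦ rfl, fun _ _ ↦ rfl, Nat.zero_le _, rfl⟩ ?_
  rintro _ ⟨n, c, U, hc, hs, hU, rfl⟩
  exact h n c U hc hs hU

lemma maxAvgSensitivity_nonneg (d m : ℕ) : 0 ≤ maxAvgSensitivity d m :=
  (avgSensitivity_nonneg (0 : Finset (Fin 0) → ℝ)).trans <|
    avgSensitivity_le_max (U := ∅) (fun _ _ ↦ rfl) (fun _ _ ↦ rfl) (Nat.zero_le _)

lemma maxAvgSensitivity_le_self (d m : ℕ) : maxAvgSensitivity d m ≤ m :=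
  maxAvgSensitivity_le fun _ _ _ _ hs hU ↦
    (avgSensitivity_le_card hs).trans (by exact_mod_cast hU)

lemma maxAvgSensitivity_mono (d : ℕ) : Monotone (maxAvgSensitivity d) := fun _ _ hm ↦
  maxAvgSensitivity_le fun _ _ _ hc hs hU ↦ avgSensitivity_le_max hc hs (hU.trans hm)

lemma maxAvgSensitivity_le_add (hd : 0 < d) {τ T G : ℝ} (hτ : 0 < τ) (hT : 1 ≤ T) {K : ℕ}
    (hK : 32 * 9 ^ d * d * T ^ 2 ≤ K * (τ ^ 2 / (32 * d ^ 2 * 81 ^ d)))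
    (hG : ∀ (n : ℕ) (c : Finset (Fin n) → ℝ) (U : Finset (Fin n)), DegreeLE d c →
      SupportedOn U c → #U ≤ m → Regular τ c ∨ NearlyConstant T c → avgSensitivity c ≤ G) :
    maxAvgSensitivity d m ≤ G + 8 * 9 ^ d * K := by
  set M := maxAvgSensitivity d m
  rcases le_total M G with hMG | hMG
  · exact hMG.trans (le_add_of_nonneg_right (by positivity))
  have key : M ≤ K + (M - 1 / (8 * 9 ^ d) * (M - G)) := by
    refine maxAvgSensitivity_le fun n c U hc hs hU ↦ ?_
    obtain ⟨H, hH, hprob⟩ := exists_prob_regular_or_nearlyConstant_restrict hd hc hτ hT hK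
    have hcard : #(U ∩ Hᶜ) ≤ m := (card_le_card inter_subset_left).trans hU
    have heavy : ∑ i ∈ H, influence i c ≤ K :=
      calc ∑ i ∈ H, influence i c ≤ #H := by
            simpa using sum_le_card_nsmul H (influence · c) 1 fun _ _ ↦ prob_le_one _
        _ ≤ K := by exact_mod_cast hH
    have light : 1 / (8 * 9 ^ d) * (M - G) ≤ M - ∑ i ∈ Hᶜ, influence i c :=
      calc _ ≤ 𝔼 y : Fin n → Bool, (M - avgSensitivity (restrict Hᶜ (point y) c)) :=
            mul_le_expect_of_prob
              (fun y ↦ sub_nonneg.2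
                (avgSensitivity_le_max (hc.restrict _ _) (hs.restrict _ _) hcard))
              (sub_nonneg.2 hMG) hprob fun y hy ↦ sub_le_sub_left
                (hG n _ _ (hc.restrict _ _) (hs.restrict _ _) hcard hy) M
        _ = M - ∑ i ∈ Hᶜ, influence i c := by
            rw [expect_sub_distrib, Fintype.expect_const, sum_influence_eq_expect_restrict]
    rw [avgSensitivity, ← sum_add_sum_compl H]
    linarith
  have : 1 / (8 * 9 ^ d) * (M - G) ≤ K := by linarith
  rw [one_div_mul_eq_div, div_le_iff₀ (by positivity)] at this
  linarith

lemma avgSensitivity_le_of_regular {k b : ℕ} (hb : 0 < b) {T r : ℝ} (hT : 1 ≤ T) (hr : 0 < r)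
    (hr₁ : r ≤ 1) (hc : DegreeLE d c) (hs : SupportedOn U c) (hU : #U ≤ (2 * T) ^ k)
    (hreg : Regular (r ^ (12 * d + 14)) c) :
    avgSensitivity c ≤ b * nearlyConstantBound d k
      + 8 * 9 ^ d * (b * (anticoncConst d * r) + 64 * 9 ^ d * T ^ 2 / r ^ 4)
        * maxAvgSensitivity d (#U / b + 1) := by
  set M := maxAvgSensitivity d (#U / b + 1)
  obtain ⟨block, hblock⟩ := exists_blocks_card_le U hb
  have each (s : Fin b) : ∑ i with block i = s, influence i c ≤ nearlyConstantBound d k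
      + prob (fun y : Fin n → Bool ↦ ¬NearlyConstant T (restrict {i | block i = s} (point y) c))
        * M := by
    set V : Finset (Fin n) := {i | block i = s}
    have hV : #(U ∩ V) ≤ #U / b + 1 := by
      rw [inter_filter, inter_univ]
      exact hblock s
    have hVk : (#(U ∩ V) : ℝ) ≤ (2 * T) ^ k :=
      le_trans (by exact_mod_cast card_le_card inter_subset_left) hU
    rw [sum_influence_eq_expect_restrict, prob, expect_mul,
      ← Fintype.expect_const (ι := Fin n → Bool) (nearlyConstantBound d k), ← expect_add_distrib]
    refine expect_le_expect fun y _ ↦ ?_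
    have hcy := hc.restrict V (point y)
    have hsy := hs.restrict V (point y)
    by_cases hy : NearlyConstant T (restrict V (point y) c)
    · rw [ind_of_not (not_not.2 hy), zero_mul, add_zero]
      exact avgSensitivity_le_of_nearlyConstant hcy hT hy hsy hVk
    · rw [ind_of hy, one_mul]
      exact (avgSensitivity_le_max hcy hsy hV).trans
        (le_add_of_nonneg_left (nearlyConstantBound_pos d k).le)
  calc avgSensitivity c = ∑ s, ∑ i with block i = s, influence i c := (sum_fiberwise _ _ _).symm
    _ ≤ _ := sum_le_sum fun s _ ↦ each s
    _ ≤ _ := by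
      rw [sum_add_distrib, ← sum_mul, sum_const, card_univ, Fintype.card_fin, nsmul_eq_mul]
      gcongr
      · exact maxAvgSensitivity_nonneg _ _
      · exact sum_prob_not_nearlyConstant_restrict_le hc hT hr hr₁ hreg block

/-- The exponent `s` for which polynomials in at most `(2 * L) ^ (2 * s)` variables are treated at
scale `L`, that is, restricted to `1 / L ^ (18 * (12 * d + 14))`-regular polynomials. -/
def scaleExponent (d : ℕ) : ℕ := 92 + 2 * (18 * (12 * d + 14))

/-- The factor with which the blocks that are not nearly constant enter the recursion. -/
noncomputable def blockConst (d : ℕ) : ℝ := 8 * 9 ^ d * (anticoncConst d + 64 * 9 ^ d)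

lemma blockConst_pos (d : ℕ) : 0 < blockConst d := by
  have := anticoncConst_pos d
  rw [blockConst]
  positivity

/-- With `L ^ 90` blocks and anticoncentration at scale `1 / L ^ 18`, both sources of blocks that
are not nearly constant contribute at most a multiple of `L ^ 74`. -/
lemma avgSensitivity_le_of_regular_or_nearlyConstant {L : ℕ} (hL : 0 < L)
    (hc : DegreeLE d c) (hs : SupportedOn U c) (hU : #U ≤ m) {k : ℕ} (hm : m ≤ (2 * L : ℝ) ^ k)
    (h : Regular (((1 : ℝ) / L ^ 18) ^ (12 * d + 14)) c ∨ NearlyConstant L c) :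
    avgSensitivity c ≤ nearlyConstantBound d k * L ^ 90
      + blockConst d * L ^ 74 * maxAvgSensitivity d (m / L ^ 90 + 1) := by
  have hL₁ : (1 : ℝ) ≤ L := by exact_mod_cast hL
  have hL₁₈ : (1 : ℝ) ≤ L ^ 18 := one_le_pow₀ hL₁
  have hM := maxAvgSensitivity_nonneg d (m / L ^ 90 + 1)
  have hB := blockConst_pos d
  have hN := nearlyConstantBound_pos d k
  have hUk : (#U : ℝ) ≤ (2 * L) ^ k := le_trans (by exact_mod_cast hU) hm
  have scales : 8 * 9 ^ d * ((L ^ 90 : ℕ) * (anticoncConst d * (1 / L ^ 18))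
      + 64 * 9 ^ d * L ^ 2 / ((1 : ℝ) / L ^ 18) ^ 4) ≤ blockConst d * L ^ 74 := by
    have := anticoncConst_pos d
    calc _ = 8 * 9 ^ d * (anticoncConst d * L ^ 72 + 64 * 9 ^ d * L ^ 74) := by
          push_cast
          field_simp
      _ ≤ 8 * 9 ^ d * (anticoncConst d * L ^ 74 + 64 * 9 ^ d * L ^ 74) := by
          gcongr
          norm_num
      _ = _ := by
          rw [blockConst]
          ring
  rcases h with hreg | hnc
  · refine (avgSensitivity_le_of_regular (pow_pos hL 90) hL₁ (by positivity)
      ((div_le_one (by positivity)).2 hL₁₈) hc hs hUk hreg).trans ?_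
    refine add_le_add (by rw [mul_comm, Nat.cast_pow]) (mul_le_mul scales ?_ ?_ (by positivity))
    · exact maxAvgSensitivity_mono d (by gcongr)
    · exact maxAvgSensitivity_nonneg _ _
  · calc avgSensitivity c ≤ nearlyConstantBound d k * 1 := by
          rw [mul_one]
          exact avgSensitivity_le_of_nearlyConstant hc hL₁ hnc hs hUk
      _ ≤ nearlyConstantBound d k * L ^ 90 := by
          gcongr
          exact one_le_pow₀ hL₁
      _ ≤ _ := le_add_of_nonneg_right (by positivity)

lemma exists_maxAvgSensitivity_le_recursion (hd : 0 < d) : ∃ C, 0 ≤ C ∧ ∀ m L : ℕ, 0 < L →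
    m ≤ (2 * L : ℝ) ^ (2 * scaleExponent d) →
    maxAvgSensitivity d m ≤ C * L ^ scaleExponent d
      + blockConst d * L ^ 74 * maxAvgSensitivity d (m / L ^ 90 + 1) := by
  set N := nearlyConstantBound d (2 * scaleExponent d)
  set t := 18 * (12 * d + 14) with ht
  have hN : 0 < N := nearlyConstantBound_pos d _
  refine ⟨N + 8 * 9 ^ d * (1024 * 9 ^ d * 81 ^ d * d ^ 3), by positivity, fun m L hL hm ↦ ?_⟩
  have hL₁ : (1 : ℝ) ≤ L := by exact_mod_cast hL
  have : (0 : ℝ) < d := by exact_mod_cast hd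
  have reduction := maxAvgSensitivity_le_add hd (m := m) (T := L)
    (τ := ((1 : ℝ) / L ^ 18) ^ (12 * d + 14)) (by positivity) hL₁
    (K := 1024 * 9 ^ d * 81 ^ d * d ^ 3 * L ^ (2 + 2 * t)) (by
      rw [div_pow, one_pow, ← pow_mul, ← ht]
      push_cast
      apply le_of_eq
      field_simp
      ring)
    fun n c U hc hs hU h ↦ avgSensitivity_le_of_regular_or_nearlyConstant hL hc hs hU hm h
  refine reduction.trans ?_
  calc _ = N * L ^ 90 + 8 * 9 ^ d * (1024 * 9 ^ d * 81 ^ d * d ^ 3) * L ^ (2 + 2 * t)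
        + blockConst d * L ^ 74 * maxAvgSensitivity d (m / L ^ 90 + 1) := by
        push_cast
        ring
    _ ≤ N * L ^ scaleExponent d + 8 * 9 ^ d * (1024 * 9 ^ d * 81 ^ d * d ^ 3) * L ^ scaleExponent d
        + blockConst d * L ^ 74 * maxAvgSensitivity d (m / L ^ 90 + 1) := by
        rw [scaleExponent, ← ht]
        gcongr N * ?_ + _ * ?_ + _
        · exact pow_le_pow_right₀ hL₁ (by omega)
        · exact pow_le_pow_right₀ hL₁ (by omega)
    _ = _ := by ring

end MaxAvgSensitivity

section Recursion

lemma exists_pow_le_and_le_two_mul_pow {m k : ℕ} (hk : k ≠ 0) (hm : 0 < m) :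
    ∃ L : ℕ, 0 < L ∧ L ^ k ≤ m ∧ (m : ℝ) ≤ (2 * L) ^ k := by
  have hlt := Nat.lt_pow_nthRoot_add_one hk m
  have hle := Nat.pow_nthRoot_le (n := k) (a := m) (Or.inl hk)
  generalize Nat.nthRoot k m = L at hlt hle
  have hL : 0 < L := by
    by_contra! h
    have : m < 1 := by simpa [Nat.le_zero.1 h] using hlt
    omega
  refine ⟨L, hL, hle, ?_⟩
  have : m ≤ (2 * L) ^ k := hlt.le.trans (Nat.pow_le_pow_left (by omega) k)
  exact_mod_cast this

lemma le_rpow_five_sixths {x y : ℝ} (hy : 1 ≤ y) (h : x ^ 2 ≤ y) : x ≤ y ^ ((5 : ℝ) / 6) :=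
  calc x ≤ √y := Real.le_sqrt_of_sq_le h
    _ = y ^ ((1 : ℝ) / 2) := Real.sqrt_eq_rpow y
    _ ≤ y ^ ((5 : ℝ) / 6) := Real.rpow_le_rpow_of_exponent_le hy (by norm_num)

lemma rpow_div_pow_add_one_le {m L : ℕ} (hL : 0 < L) (h : L ^ 90 ≤ m) :
    ((m / L ^ 90 + 1 : ℕ) : ℝ) ^ ((5 : ℝ) / 6) ≤ 2 * ((m : ℝ) ^ ((5 : ℝ) / 6) / L ^ 75) := by
  have hL₀ : (0 : ℝ) < L := by exact_mod_cast hL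
  have quotient : ((m / L ^ 90 + 1 : ℕ) : ℝ) ≤ 2 * (m / (L : ℝ) ^ 90) := by
    have floor : ((m / L ^ 90 : ℕ) : ℝ) ≤ m / (L : ℝ) ^ 90 := by exact_mod_cast Nat.cast_div_le
    have : 1 ≤ m / (L : ℝ) ^ 90 := (one_le_div (by positivity)).2 (by exact_mod_cast h)
    push_cast
    linarith
  calc ((m / L ^ 90 + 1 : ℕ) : ℝ) ^ ((5 : ℝ) / 6) ≤ (2 * (m / (L : ℝ) ^ 90)) ^ ((5 : ℝ) / 6) := by
        gcongr
    _ = 2 ^ ((5 : ℝ) / 6) * ((m : ℝ) ^ ((5 : ℝ) / 6) / L ^ 75) := by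
        rw [Real.mul_rpow (by norm_num) (by positivity),
          Real.div_rpow (by positivity) (by positivity), ← Real.rpow_natCast_mul hL₀.le,
          ← Real.rpow_natCast (L : ℝ) 75]
        norm_num
    _ ≤ 2 * ((m : ℝ) ^ ((5 : ℝ) / 6) / L ^ 75) := by
        gcongr
        exact Real.rpow_le_self_of_one_le (by norm_num) (by norm_num)

lemma recursion_step {a A C₁ C₂ : ℝ} {s m L : ℕ} (hs : 45 ≤ s) (hL : 0 < L) (hLm : L ^ (2 * s) ≤ m)
    (hC₂ : 0 ≤ C₂) (hA : 0 ≤ A) (hC₁A : 2 * C₁ ≤ A) (hC₂L : 4 * C₂ ≤ L)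
    (ha : a ≤ A * ((m / L ^ 90 + 1 : ℕ) : ℝ) ^ ((5 : ℝ) / 6)) :
    C₁ * L ^ s + C₂ * L ^ 74 * a ≤ A * (m : ℝ) ^ ((5 : ℝ) / 6) := by
  set P := (m : ℝ) ^ ((5 : ℝ) / 6)
  have hL₀ : (0 : ℝ) < L := by exact_mod_cast hL
  have hL₉₀ : L ^ 90 ≤ m := (Nat.pow_le_pow_right hL (by omega)).trans hLm
  have hm : (1 : ℝ) ≤ m := by exact_mod_cast (pow_pos hL 90).trans_le hL₉₀
  have scale : (L : ℝ) ^ s ≤ P := le_rpow_five_sixths hm <| by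
    rw [← pow_mul, mul_comm]
    exact_mod_cast hLm
  calc C₁ * L ^ s + C₂ * L ^ 74 * a ≤ A / 2 * P + C₂ * L ^ 74 * (A * (2 * (P / L ^ 75))) := by
        gcongr
        · linarith
        · exact ha.trans (by gcongr; exact rpow_div_pow_add_one_le hL hL₉₀)
    _ = A / 2 * P + 2 * C₂ / L * (A * P) := by field_simp
    _ ≤ A / 2 * P + 1 / 2 * (A * P) := by
        gcongr A / 2 * P + ?_ * (A * P)
        rw [div_le_div_iff₀ hL₀ two_pos]
        linarith
    _ = A * P := by ring

lemma exists_le_mul_rpow_of_recursion {M : ℕ → ℝ} {C₁ C₂ : ℝ} {s : ℕ} (hs : 45 ≤ s)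
    (hC₁ : 0 ≤ C₁) (hC₂ : 0 ≤ C₂) (hM : ∀ m : ℕ, M m ≤ m)
    (hrec : ∀ m L : ℕ, 0 < L → m ≤ (2 * L : ℝ) ^ (2 * s) →
      M m ≤ C₁ * L ^ s + C₂ * L ^ 74 * M (m / L ^ 90 + 1)) :
    ∃ A, 0 < A ∧ ∀ m : ℕ, M m ≤ A * (m : ℝ) ^ ((5 : ℝ) / 6) := by
  obtain ⟨L₀, hL₀⟩ := exists_nat_ge (8 * C₂ + 4)
  set A : ℝ := 2 * C₁ + (L₀ : ℝ) ^ (2 * s) with hA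
  have hL₀_pos : (0 : ℝ) < L₀ := by linarith
  have hA_pos : 0 < A := by positivity
  refine ⟨A, hA_pos, fun m ↦ ?_⟩
  induction m using Nat.strong_induction_on with | _ m ih
  rcases Nat.eq_zero_or_pos m with rfl | hm
  · simpa using hM 0
  rcases le_or_gt (m : ℝ) ((L₀ : ℝ) ^ (2 * s)) with hsmall | hlarge
  · calc M m ≤ m := hM m
      _ ≤ A * 1 := by linarith
      _ ≤ A * (m : ℝ) ^ ((5 : ℝ) / 6) := by
        gcongr
        exact Real.one_le_rpow (by exact_mod_cast hm) (by norm_num)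
  obtain ⟨L, hL, hLm, hmL⟩ := exists_pow_le_and_le_two_mul_pow (k := 2 * s) (by omega) hm
  have hL₀L : (L₀ : ℝ) < 2 * L := lt_of_pow_lt_pow_left₀ _ (by positivity) (hlarge.trans_le hmL)
  have hL₂ : 2 < L := by exact_mod_cast (show (2 : ℝ) < L by linarith)
  have smaller : m / L ^ 90 + 1 < m := by
    have h4 : 4 ≤ L ^ 90 :=
      calc 4 = 2 ^ 2 := rfl
        _ ≤ L ^ 2 := by gcongr
        _ ≤ L ^ 90 := Nat.pow_le_pow_right hL (by norm_num)
    have h4m : L ^ 90 ≤ m := (Nat.pow_le_pow_right hL (by omega)).trans hLm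
    have := Nat.div_le_div_left (a := m) h4 (by norm_num)
    omega
  exact (hrec m L hL hmL).trans <| recursion_step hs hL hLm hC₂ hA_pos.le
    (by rw [hA]; linarith [pow_pos hL₀_pos (2 * s)]) (by linarith) (ih _ smaller)

end Recursion

lemma exists_maxAvgSensitivity_le {d : ℕ} (hd : 0 < d) :
    ∃ A, 0 < A ∧ ∀ m : ℕ, maxAvgSensitivity d m ≤ A * (m : ℝ) ^ ((5 : ℝ) / 6) := by
  obtain ⟨C, hC, hrec⟩ := exists_maxAvgSensitivity_le_recursion hd
  exact exists_le_mul_rpow_of_recursion (by rw [scaleExponent]; omega) hC (blockConst_pos d).le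
    (maxAvgSensitivity_le_self d) hrec

/-! ### Noise sensitivity -/

section Buckets

variable {ι κ σ : Type*} {d : ℕ}

lemma eval_mem_lowDegree {p : MvPolynomial σ ℝ} (hp : p.totalDegree ≤ d)
    {f : σ → (κ → Bool) → ℝ} (hf : ∀ i, f i ∈ lowDegree κ 1) :
    (fun z ↦ MvPolynomial.eval (fun i ↦ f i z) p) ∈ lowDegree κ d := by
  simp only [MvPolynomial.eval_eq]
  refine sum_mem_lowDegree fun m hm ↦ const_mul_mem_lowDegree _ ?_
  have monomial_degree : ∑ i ∈ m.support, ∑ _ ∈ range (m i), 1 ≤ d := by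
    simpa [Finsupp.sum] using (MvPolynomial.le_totalDegree hm).trans hp
  refine lowDegree_mono monomial_degree (prod_mem_lowDegree fun i _ ↦ ?_)
  simpa using prod_mem_lowDegree (s := range (m i)) fun _ _ ↦ hf i

/-- The sign vector obtained from `w` when each coordinate is multiplied by the sign `z k` of the
bucket `some k` containing it; the coordinates in the bucket `none` keep their sign. -/
def bucketSigns (β : ι → Option κ) (w : ι → Bool) (z : κ → Bool) : ι → Bool :=
  fun i ↦ (β i).elim (w i) fun k ↦ w i == z k

/-- The sign vector obtained from `w` by flipping the coordinates in the bucket `some k`. -/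
def flipBucket [DecidableEq κ] (β : ι → Option κ) (k : κ) (w : ι → Bool) : ι → Bool :=
  fun i ↦ if β i = some k then !(w i) else w i

lemma bucketSigns_involutive (β : ι → Option κ) (z : κ → Bool) :
    Function.Involutive fun w ↦ bucketSigns β w z := by
  intro w
  funext i
  rcases h : β i with _ | k <;> simp only [bucketSigns, h, Option.elim]
  cases w i <;> cases z k <;> rfl

lemma bucketSigns_flipAt [DecidableEq κ] (β : ι → Option κ) (w : ι → Bool) (k : κ)
    (z : κ → Bool) : bucketSigns β w (flipAt k z) = flipBucket β k (bucketSigns β w z) := by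
  funext i
  rcases h : β i with _ | l
  · simp [bucketSigns, flipBucket, h]
  · obtain rfl | hlk := eq_or_ne l k
    · cases hw : w i <;> cases hz : z l <;> simp [bucketSigns, flipBucket, h, flipAt_self, hw, hz]
    · simp [bucketSigns, flipBucket, h, hlk, flipAt_of_ne]

lemma point_bucketSigns_mem_lowDegree (β : ι → Option κ) (w : ι → Bool) (i : ι) :
    (fun z ↦ point (bucketSigns β w z) i) ∈ lowDegree κ 1 := by
  rcases h : β i with _ | k
  · simpa only [point, bucketSigns, h, Option.elim] using const_mem_lowDegree (sgn (w i)) 1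
  · convert const_mul_mem_lowDegree (sgn (w i)) (sgn_mem_lowDegree k) using 2 with z
    cases hw : w i <;> cases hz : z k <;> simp [point, bucketSigns, h, hw, hz, sgn]

/- A random point may first be multiplied by independent signs, one per bucket; for a fixed starting
point, the polynomial then is a polynomial of degree at most `d` in those `b` signs. -/
lemma sum_prob_signChange_flipBucket_le [Fintype ι] [DecidableEq ι] {b : ℕ}
    {p : MvPolynomial ι ℝ} (hp : p.totalDegree ≤ d) (β : ι → Option (Fin b)) :
    ∑ k, prob (fun w ↦ SignChange (MvPolynomial.eval (point w) p)
      (MvPolynomial.eval (point (flipBucket β k w)) p)) ≤ maxAvgSensitivity d b := by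
  choose c hc hpc using fun w ↦ exists_degreeLE_of_mem_lowDegree <|
    eval_mem_lowDegree hp (point_bucketSigns_mem_lowDegree β w)
  have resample (k : Fin b) : prob (fun w ↦ SignChange (MvPolynomial.eval (point w) p)
      (MvPolynomial.eval (point (flipBucket β k w)) p)) = 𝔼 w, influence k (c w) := by
    simp only [influence, prob]
    rw [expect_comm, ← Fintype.expect_const (ι := Fin b → Bool) (𝔼 w, ind _)]
    refine expect_congr rfl fun z _ ↦ ?_
    rw [← expect_comp_involutive (bucketSigns_involutive β z)]
    simp only [← hpc, ← bucketSigns_flipAt]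
  simp only [resample]
  rw [← expect_sum_comm]
  exact expect_le univ_nonempty fun w _ ↦
    avgSensitivity_le_max (U := univ) (hc w) (fun S hS ↦ absurd (subset_univ S) hS) (by simp)

end Buckets

section Law

variable {K : Type*} [Fintype K] {n : ℕ} {δ : ℝ}

lemma pi_sum_smul_dirac {q : K → ℝ} (hq : ∀ k, 0 ≤ q k) (s : K → ℝ) :
    (Measure.pi fun _ : Fin n ↦ ∑ k, ENNReal.ofReal (q k) • Measure.dirac (s k)) =
      ∑ β : Fin n → K, ENNReal.ofReal (∏ i, q (β i)) • Measure.dirac fun i ↦ s (β i) := by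
  have finite (k : K) : IsFiniteMeasure (ENNReal.ofReal (q k) • Measure.dirac (s k)) :=
    Measure.smul_finite _ ENNReal.ofReal_ne_top
  refine Measure.pi_eq fun t ht ↦ ?_
  simp only [Measure.finsetSum_apply, Measure.smul_apply, smul_eq_mul,
    Measure.dirac_apply' _ (ht _), Measure.dirac_apply' _ (MeasurableSet.univ_pi ht),
    Fintype.prod_sum, ENNReal.ofReal_prod_of_nonneg fun _ _ ↦ hq _, prod_mul_distrib]
  refine sum_congr rfl fun β _ ↦ ?_
  congr 1
  exact mod_cast Set.indicator_pi_one_apply univ t fun i ↦ s (β i)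

lemma indicator_one_eq_ofReal_ind {α : Type*} (A : Set α) (x : α) :
    A.indicator (1 : α → ℝ≥0∞) x = ENNReal.ofReal (ind (x ∈ A)) := by
  by_cases h : x ∈ A <;> simp [ind, h]

lemma bernoulliPM_eq_sum :
    bernoulliPM = ∑ b, ENNReal.ofReal (1 / 2) • Measure.dirac (sgn b) := by
  simp [bernoulliPM, sgn, ENNReal.ofReal_inv_of_pos]

lemma measurable_psign : Measurable psign :=
  Measurable.ite measurableSet_Ici measurable_const measurable_const

lemma psign_ne_psign_iff {a b : ℝ} : psign a ≠ psign b ↔ SignChange a b := by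
  by_cases ha : 0 ≤ a <;> by_cases hb : 0 ≤ b <;> norm_num [psign, SignChange, ha, hb]

lemma noiseSensitivity_eq_sum {q : K → ℝ} (hq : ∀ k, 0 ≤ q k) {s : K → ℝ}
    (hs : flipPM δ = ∑ k, ENNReal.ofReal (q k) • Measure.dirac (s k)) {f : (Fin n → ℝ) → ℝ}
    (hf : Measurable f) :
    noiseSensitivity n δ f = ∑ β : Fin n → K, (∏ i, q (β i)) *
      prob fun w : Fin n → Bool ↦ f (point w) ≠ f fun i ↦ point w i * s (β i) := by
  have event : MeasurableSet
      {ae : (Fin n → ℝ) × (Fin n → ℝ) | f ae.1 ≠ f fun i ↦ ae.1 i * ae.2 i} :=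
    (measurableSet_eq_fun (hf.comp measurable_fst) (hf.comp (by fun_prop))).compl
  unfold noiseSensitivity bernoulliCube
  rw [bernoulliPM_eq_sum, hs, pi_sum_smul_dirac (fun _ ↦ by norm_num), pi_sum_smul_dirac hq,
    ← Measure.sum_fintype, ← Measure.sum_fintype, Measure.prod_sum, Measure.sum_fintype]
  simp only [Measure.prod_smul_left, Measure.prod_smul_right, Measure.dirac_prod_dirac,
    Measure.finsetSum_apply, Measure.smul_apply, smul_eq_mul, Measure.dirac_apply' _ event,
    indicator_one_eq_ofReal_ind]
  rw [ENNReal.toReal_sum fun _ _ ↦ by finiteness, Fintype.sum_prod_type_right]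
  refine sum_congr rfl fun β _ ↦ ?_
  rw [prob, Fintype.expect_eq_sum_div_card, sum_div, mul_sum]
  refine sum_congr rfl fun w _ ↦ ?_
  unfold point
  simp [ENNReal.toReal_ofReal, prod_nonneg fun i _ ↦ hq (β i), ind_nonneg, div_eq_inv_mul]

/-- The probabilities of the buckets: each of the `b` buckets `some k` has probability `δ`. -/
def bucketWeight (b : ℕ) (δ : ℝ) (k : Option (Fin b)) : ℝ := k.elim (1 - b * δ) fun _ ↦ δ

lemma bucketWeight_nonneg {b : ℕ} (h₀ : 0 ≤ δ) (h₁ : b * δ ≤ 1) :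
    ∀ k, 0 ≤ bucketWeight b δ k
  | none => sub_nonneg.2 h₁
  | some _ => h₀

lemma sum_bucketWeight (b : ℕ) (δ : ℝ) : ∑ k, bucketWeight b δ k = 1 := by
  simp [bucketWeight, Fintype.sum_option]

lemma flipPM_eq_sum_bucketWeight {b : ℕ} (h₀ : 0 ≤ δ) (h₁ : b * δ ≤ 1) (j : Fin b) :
    flipPM δ = ∑ k, ENNReal.ofReal (bucketWeight b δ k) •
      Measure.dirac (if k = some j then (-1 : ℝ) else 1) := by
  have complement : ∑ k ∈ univ.erase (some j), bucketWeight b δ k = 1 - δ := by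
    rw [← sum_bucketWeight b δ, ← add_sum_erase _ _ (mem_univ (some j)), bucketWeight,
      Option.elim, add_sub_cancel_left]
  rw [← sum_erase_add _ _ (mem_univ (some j)), if_pos rfl, flipPM, ← complement,
    ENNReal.ofReal_sum_of_nonneg fun k _ ↦ bucketWeight_nonneg h₀ h₁ k, sum_smul]
  congr 1
  exact sum_congr rfl fun k hk ↦ by rw [if_neg (ne_of_mem_erase hk)]

variable {d b : ℕ} {p : MvPolynomial (Fin n) ℝ}

lemma noiseSensitivity_psign_eq_sum (h₀ : 0 ≤ δ) (h₁ : b * δ ≤ 1) (j : Fin b) :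
    noiseSensitivity n δ (fun x ↦ psign (MvPolynomial.eval x p)) =
      ∑ β : Fin n → Option (Fin b), (∏ i, bucketWeight b δ (β i)) *
        prob fun w ↦ SignChange (MvPolynomial.eval (point w) p)
          (MvPolynomial.eval (point (flipBucket β j w)) p) := by
  have measurable : Measurable fun x ↦ psign (MvPolynomial.eval x p) :=
    measurable_psign.comp (MvPolynomial.continuous_eval p).measurable
  rw [noiseSensitivity_eq_sum (bucketWeight_nonneg h₀ h₁) (flipPM_eq_sum_bucketWeight h₀ h₁ j)
    measurable]
  have flip (β : Fin n → Option (Fin b)) (w : Fin n → Bool) :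
      (fun i ↦ point w i * if β i = some j then -1 else 1) = point (flipBucket β j w) := by
    funext i
    by_cases h : β i = some j <;> simp [point, flipBucket, h, sgn_not]
  simp only [flip, psign_ne_psign_iff]

/- Each of the `b` buckets serves equally well as the set of flipped coordinates, so we may average
over the choice of bucket. -/
lemma mul_noiseSensitivity_le (h₀ : 0 ≤ δ) (h₁ : b * δ ≤ 1) (hp : p.totalDegree ≤ d) :
    b * noiseSensitivity n δ (fun x ↦ psign (MvPolynomial.eval x p)) ≤ maxAvgSensitivity d b := by
  have total_weight : ∑ β : Fin n → Option (Fin b), ∏ i, bucketWeight b δ (β i) = 1 := by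
    simp only [← Fintype.prod_sum fun (_ : Fin n) k ↦ bucketWeight b δ k, sum_bucketWeight,
      prod_const_one]
  calc b * noiseSensitivity n δ (fun x ↦ psign (MvPolynomial.eval x p))
      = ∑ _j : Fin b, noiseSensitivity n δ fun x ↦ psign (MvPolynomial.eval x p) := by simp
    _ = ∑ β : Fin n → Option (Fin b), (∏ i, bucketWeight b δ (β i)) *
          ∑ j, prob fun w ↦ SignChange (MvPolynomial.eval (point w) p)
            (MvPolynomial.eval (point (flipBucket β j w)) p) := by
      rw [sum_congr rfl fun j _ ↦ noiseSensitivity_psign_eq_sum h₀ h₁ j, sum_comm]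
      simp only [mul_sum]
    _ ≤ ∑ β : Fin n → Option (Fin b), (∏ i, bucketWeight b δ (β i)) * maxAvgSensitivity d b :=
      sum_le_sum fun β _ ↦ mul_le_mul_of_nonneg_left (sum_prob_signChange_flipBucket_le hp β) <|
        prod_nonneg fun i _ ↦ bucketWeight_nonneg h₀ h₁ (β i)
    _ = maxAvgSensitivity d b := by rw [← sum_mul, total_weight, one_mul]

end Law

lemma one_le_two_mul_floor_mul_rpow {δ : ℝ} (h₀ : 0 < δ) (h₁ : δ ≤ 1) :
    1 ≤ 2 * ((⌊1 / δ⌋₊ : ℝ) * δ) ^ ((1 : ℝ) / 6) := by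
  set b := ⌊1 / δ⌋₊
  have hb : (1 : ℝ) ≤ b := by
    exact_mod_cast Nat.le_floor (by rwa [Nat.cast_one, le_div_iff₀ h₀, one_mul])
  have floor_lt : 1 < (b + 1) * δ := (div_lt_iff₀ h₀).1 (Nat.lt_floor_add_one _)
  calc (1 : ℝ) = 1 ^ ((1 : ℝ) / 6) := (Real.one_rpow _).symm
    _ ≤ (2 * (b * δ)) ^ ((1 : ℝ) / 6) :=
      Real.rpow_le_rpow zero_le_one (by nlinarith) (by norm_num)
    _ = 2 ^ ((1 : ℝ) / 6) * (b * δ) ^ ((1 : ℝ) / 6) := Real.mul_rpow zero_le_two (by positivity)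
    _ ≤ 2 * (b * δ) ^ ((1 : ℝ) / 6) := by
      gcongr
      exact Real.rpow_le_self_of_one_le one_le_two (by norm_num)

end BoolCube

theorem noise_sensitivity_bound_general (d : ℕ) :
    ∃ C : ℝ, 0 < C ∧
      ∀ (n : ℕ) (p : MvPolynomial (Fin n) ℝ), p.totalDegree ≤ d →
        ∀ (δ : ℝ), 0 < δ → δ < 1 →
          noiseSensitivity n δ (fun x => psign (MvPolynomial.eval x p)) ≤
            C * δ ^ ((1 : ℝ) / 6) := by
  obtain ⟨A, hA, bound⟩ := BoolCube.exists_maxAvgSensitivity_le d.succ_pos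
  refine ⟨2 * A, by positivity, fun n p hp δ h₀ h₁ ↦ ?_⟩
  set b := ⌊1 / δ⌋₊
  have hb : (0 : ℝ) < b := by
    exact_mod_cast Nat.floor_pos.2 ((one_le_div h₀).2 h₁.le)
  have hbδ : b * δ ≤ 1 := (le_div_iff₀ h₀).1 (Nat.floor_le (by positivity))
  refine le_of_mul_le_mul_left ?_ hb
  calc b * noiseSensitivity n δ (fun x ↦ psign (MvPolynomial.eval x p))
      ≤ A * (b : ℝ) ^ ((5 : ℝ) / 6) :=
      (BoolCube.mul_noiseSensitivity_le h₀.le hbδ (hp.trans d.le_succ)).trans (bound b)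
    _ ≤ A * (b : ℝ) ^ ((5 : ℝ) / 6) * (2 * (b * δ) ^ ((1 : ℝ) / 6)) :=
      le_mul_of_one_le_right (by positivity) (BoolCube.one_le_two_mul_floor_mul_rpow h₀ h₁.le)
    _ = 2 * A * δ ^ ((1 : ℝ) / 6) * (b : ℝ) ^ ((5 : ℝ) / 6 + 1 / 6) := by
      rw [Real.mul_rpow hb.le h₀.le, Real.rpow_add hb]
      ring
    _ = b * (2 * A * δ ^ ((1 : ℝ) / 6)) := by
      norm_num
      ring

/-- **Noise sensitivity bound.**  For every positive integer `d` and `c > 0` there is a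
constant `C` depending only on `c` and `d` such that every degree-`d` polynomial threshold
function `f` satisfies `ns_δ(f) ≤ C δ^{1/6 - c}` for all `0 < δ < 1`. -/
theorem noise_sensitivity_bound (d : ℕ) (hd : 0 < d) (c : ℝ) (hc : 0 < c) :
    ∃ C : ℝ, 0 < C ∧
      ∀ (n : ℕ) (p : MvPolynomial (Fin n) ℝ), p.totalDegree ≤ d →
        ∀ (δ : ℝ), 0 < δ → δ < 1 →
          noiseSensitivity n δ (fun x => psign (MvPolynomial.eval x p)) ≤
            C * δ ^ ((1 : ℝ) / 6 - c) := by
  obtain ⟨C, hC, h⟩ := noise_sensitivity_bound_general d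
  exact ⟨C, hC, fun n p hp δ h₀ h₁ ↦ (h n p hp δ h₀ h₁).trans <|
    mul_le_mul_of_nonneg_left (Real.rpow_le_rpow_of_exponent_ge h₀ h₁.le (by linarith)) hC.le⟩
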